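/- Let Ω be an open bounded convex set in ℝⁿ equipped with its Hilbert metric d_Ω. Then PGL(Ω) is a normal subgroup of Isom(Ω) of index at most 2; that is, either PGL(Ω) = Isom(Ω) or the quotient group Isom(Ω)/PGL(Ω) is isomorphic to ℤ/2ℤ. -/

import Mathlib

/-!
The domain `Ω ⊆ ℝⁿ` is replaced by the open convex cone over it in `ℝⁿ⁺¹`, cut out by the compact
set `K = dualK Ω` of unit functionals which are nonnegative on `Ω × {1}`. For `x, y` in the cone,
`Mx K x y` is the least `l` with `x ≤ l y`, and `hilbert_eq` identifies the Hilbert distance with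
`log (Mx K x y * Mx K y x)`. Projective maps of `Ω` are the linear automorphisms of the cone, which
visibly preserve this distance (`PGL_le`). The theorem then amounts to `lin_three`: for isometries
`T₁`, `T₂` of the cone modulo scaling, one of `T₁`, `T₂`, `T₂ ∘ T₁⁻¹` is linear up to positive
factors. A subgroup with this property is normal of index at most two (`index_le_two`).

Rays towards an extreme point `e` are rigid geodesics, so an isometry maps them to rays
(`ray_image`), and it carries Busemann functions to Busemann functions. The Busemann function of
the ray `p + t y` is the product of `Mx K y x`, which depends on the endpoint, and of the gauge of
`x` relative to `p` for the functionals `ann K y` supporting the cone at `y`. The best constants in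
the comparison of Busemann functions of rays towards the same `e` define the Hilbert metric of the
cone of directions transverse to `e`. Comparing them before and after applying the isometry writes
this metric as a sum of two pseudometrics, one measuring how the endpoints of image rays move
within a face and the other measuring the directions transverse to that face (`Ray.core`). A
Hilbert metric is not such a sum in a nontrivial way (`Split.indecomp`), whence the `dichotomy` at
every extreme point `e`: either all rays towards `e` are mapped to rays with a common endpoint
(the isometry focuses at `e`, `CA`), or the endpoints of all the image rays are smooth boundary
points (`CB`).

If the isometry focuses at all exposed points, then after rescaling its values it is translated by
constant vectors along the exposed directions. These directions span, so it is linear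
(`lin_of_ca`). Focusing at one extreme point implies focusing at all exposed points (`no_mix`), so
a nonlinear isometry is of type `CB` everywhere (`lin_of_one`, `cb_of_not_lin`).

Suppose that `T₁`, `T₂` and `σ = T₂ ∘ T₁⁻¹` were all nonlinear. Let a ray towards an exposed point
have images ending at `y` under `T₁` and at `z` under `T₂`; both endpoints are smooth, and `σ`
carries the Busemann function of `y` to that of `z`. An extreme point `ε` of the face exposed at
`y` is incident to `y`, a relation visible from Busemann functions (`inc_iff`), so the endpoint `w`
of the image under `σ` of a ray towards `ε` is incident to `z`. As `w` and `z` are smooth, they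
have the same supporting functional; pulling back the Busemann function of `z + w` shows that every
functional supporting the cone at `ε` supports it at `y`. Hence `ε` is smooth, and an isometry
focuses at a smooth extreme point (`ca_of_sm`), contradicting the nonlinearity of `σ`.
-/

open Set
open scoped LinearAlgebra.Projectivization
open scoped Classical

noncomputable section

abbrev Euc (n : ℕ) := EuclideanSpace ℝ (Fin n)

/-- `α` and `β` are the two points where the straight line through `x` and `y`
meets the boundary of `Ω`, labeled so that `|α−x| < |α−y|` and `|β−y| < |β−x|`. -/
def IsHilbertPair {n : ℕ} (Ω : Set (Euc n)) (x y α β : Euc n) : Prop :=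
  α ∈ frontier Ω ∧ β ∈ frontier Ω ∧
    Collinear ℝ ({α, x, y} : Set (Euc n)) ∧ Collinear ℝ ({β, x, y} : Set (Euc n)) ∧
    dist α x < dist α y ∧ dist β y < dist β x

/-- The Hilbert metric of `Ω`: `d_Ω(x,y) = ln((|α−y|/|α−x|)·(|β−x|/|β−y|))` for `x ≠ y`
(where `α, β` are as in `IsHilbertPair`; for `x ≠ y` in a convex domain `Ω` such a pair
exists and is unique), and `d_Ω(x,x) = 0` (no such pair exists when `x = y`). -/
def hilbertDist {n : ℕ} (Ω : Set (Euc n)) (x y : Euc n) : ℝ :=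
  if h : ∃ p : Euc n × Euc n, IsHilbertPair Ω x y p.1 p.2 then
    Real.log ((dist h.choose.1 y / dist h.choose.1 x) * (dist h.choose.2 x / dist h.choose.2 y))
  else 0

/-- An isometry of Hilbert geometries: a surjective distance preserving map. -/
def IsHilbertIsometry {n : ℕ} (Ω Ω' : Set (Euc n)) (τ : Euc n → Euc n) : Prop :=
  Set.MapsTo τ Ω Ω' ∧ Set.SurjOn τ Ω Ω' ∧
    ∀ x ∈ Ω, ∀ y ∈ Ω, hilbertDist Ω' (τ x) (τ y) = hilbertDist Ω x y

/-- The standard affine chart `ℝⁿ → ℝPⁿ`, `x ↦ [x : 1]`. -/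
def chart {n : ℕ} (x : Euc n) : Projectivization ℝ (Fin (n + 1) → ℝ) :=
  Projectivization.mk ℝ ((Fin.snoc (fun i => x i) 1 : Fin (n + 1) → ℝ))
    (fun h => one_ne_zero (α := ℝ) (by simpa using congrFun h (Fin.last n)))

/-- The projective transformation of `ℝPⁿ` induced by an element of `GL_{n+1}(ℝ)`
(every element of `PGL_{n+1}(ℝ)` arises this way). -/
def projMap {n : ℕ} (g : (Fin (n + 1) → ℝ) ≃ₗ[ℝ] (Fin (n + 1) → ℝ)) :
    Projectivization ℝ (Fin (n + 1) → ℝ) → Projectivization ℝ (Fin (n + 1) → ℝ) :=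
  Projectivization.map (g : (Fin (n + 1) → ℝ) →ₗ[ℝ] (Fin (n + 1) → ℝ)) g.injective

/-- `τ` agrees on `Ω` with (the restriction of) a projective transformation of `ℝPⁿ`. -/
def IsProjectiveOn {n : ℕ} (Ω : Set (Euc n)) (τ : Euc n → Euc n) : Prop :=
  ∃ g : (Fin (n + 1) → ℝ) ≃ₗ[ℝ] (Fin (n + 1) → ℝ),
    ∀ x ∈ Ω, chart (τ x) = projMap g (chart x)

/-- A ray in `Ω`: the intersection with `Ω` of a Euclidean ray starting at a point of `Ω`. -/
def IsRayIn {n : ℕ} (Ω r : Set (Euc n)) : Prop :=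
  ∃ p ∈ Ω, ∃ d : Euc n, d ≠ 0 ∧ r = {x | ∃ t : ℝ, 0 ≤ t ∧ x = p + t • d} ∩ Ω

/-- A line in `Ω`: the nonempty intersection of a straight line with `Ω`. -/
def IsLineIn {n : ℕ} (Ω L : Set (Euc n)) : Prop :=
  L.Nonempty ∧ ∃ p d : Euc n, d ≠ 0 ∧ L = {x | ∃ t : ℝ, x = p + t • d} ∩ Ω

/-- `a` is an accumulation point of the set `s ⊆ Ω` on the boundary of `Ω`.
For a ray `r` in a convex domain `Ω` there is exactly one such point, denoted `a(r)`. -/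
def IsBdryLimit {n : ℕ} (Ω s : Set (Euc n)) (a : Euc n) : Prop :=
  a ∈ frontier Ω ∧ a ∈ closure s

/-- `e` is a focusing point of the isometry `τ : Ω → Ω'`: an extreme point of the closure
of `Ω` such that for any two rays `r₁, r₂` in `Ω` with `a(r₁) = a(r₂) = e` one has
`a(τ(r₁)) = a(τ(r₂))`. -/
def IsFocusingPoint {n : ℕ} (Ω Ω' : Set (Euc n)) (τ : Euc n → Euc n) (e : Euc n) : Prop :=
  e ∈ Set.extremePoints ℝ (closure Ω) ∧
    ∀ r₁ r₂ : Set (Euc n), IsRayIn Ω r₁ → IsRayIn Ω r₂ →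
      IsBdryLimit Ω r₁ e → IsBdryLimit Ω r₂ e →
      ∀ a₁ a₂ : Euc n, IsBdryLimit Ω' (τ '' r₁) a₁ → IsBdryLimit Ω' (τ '' r₂) a₂ → a₁ = a₂

/-- An extreme line in `Ω`: a line in `Ω` whose closure meets `∂Ω` in extreme points
of the closure of `Ω`. -/
def IsExtremeLine {n : ℕ} (Ω L : Set (Euc n)) : Prop :=
  IsLineIn Ω L ∧ ∀ x ∈ closure L ∩ frontier Ω, x ∈ Set.extremePoints ℝ (closure Ω)

/-- `s` is rigid in `Ω`: for any two points `a, b` of `s` the segment `[a,b]` is the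
unique geodesic from `a` to `b` in `(Ω, d_Ω)`, i.e. every point `z` with
`d(a,z) + d(z,b) = d(a,b)` lies on the segment `[a,b]`. -/
def IsRigidSet {n : ℕ} (Ω s : Set (Euc n)) : Prop :=
  ∀ a ∈ s, ∀ b ∈ s, ∀ z ∈ Ω,
    hilbertDist Ω a z + hilbertDist Ω z b = hilbertDist Ω a b → z ∈ segment ℝ a b

/-- A face of a closed convex set `C`: a convex subset `F ⊆ C` such that whenever an open
segment between two points of `C` meets `F`, the whole closed segment lies in `F`. -/
def IsFace {n : ℕ} (C F : Set (Euc n)) : Prop :=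
  Convex ℝ F ∧ IsExtreme ℝ C F

/-- A face of `C` which is neither empty nor all of `C`. -/
def IsProperFace {n : ℕ} (C F : Set (Euc n)) : Prop :=
  IsFace C F ∧ F.Nonempty ∧ F ≠ C

/-- `Ω` is a cone with vertex `v` and base `B`: `B` is an `(n−1)`-dimensional convex
domain lying in a hyperplane not containing `v`, and `Ω` is the union of the open
segments from `v` to the points of `B`. -/
def IsConeWith {n : ℕ} (Ω : Set (Euc n)) (v : Euc n) (B : Set (Euc n)) : Prop :=
  ∃ (f : Euc n →ₗ[ℝ] ℝ) (c : ℝ), f ≠ 0 ∧ (∀ b ∈ B, f b = c) ∧ f v ≠ c ∧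
    B.Nonempty ∧ Convex ℝ B ∧ Bornology.IsBounded B ∧
    B = intrinsicInterior ℝ B ∧
    (affineSpan ℝ B : Set (Euc n)) = {x | f x = c} ∧
    Ω = ⋃ b ∈ B, openSegment ℝ v b

/-- `Ω` is a cone. -/
def IsCone {n : ℕ} (Ω : Set (Euc n)) : Prop :=
  ∃ v B, IsConeWith Ω v B

lemma projMap_trans {n : ℕ} (g₁ g₂ : (Fin (n + 1) → ℝ) ≃ₗ[ℝ] (Fin (n + 1) → ℝ)) :
    projMap (g₁ ≪≫ₗ g₂) = projMap g₂ ∘ projMap g₁ :=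
  Projectivization.map_comp _ g₁.injective _ g₂.injective

lemma projMap_refl {n : ℕ} :
    projMap (LinearEquiv.refl ℝ (Fin (n + 1) → ℝ)) = id :=
  Projectivization.map_id

lemma projMap_symm_apply {n : ℕ} (g : (Fin (n + 1) → ℝ) ≃ₗ[ℝ] (Fin (n + 1) → ℝ))
    (p : Projectivization ℝ (Fin (n + 1) → ℝ)) : projMap g.symm (projMap g p) = p := by
  have h1 : projMap (g ≪≫ₗ g.symm) = projMap g.symm ∘ projMap g := projMap_trans g g.symm
  rw [LinearEquiv.self_trans_symm, projMap_refl] at h1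
  exact (congrFun h1.symm p : _)

/-- `Isom(Ω)`: the group of isometries of `(Ω, d_Ω)`, as a subgroup of the group of
permutations of `Ω`. -/
def hilbertIsomGroup {n : ℕ} (Ω : Set (Euc n)) : Subgroup (Equiv.Perm Ω) where
  carrier := {e | ∀ x y : Ω, hilbertDist Ω (e x : Euc n) (e y : Euc n) = hilbertDist Ω x y}
  mul_mem' := by
    intro a b ha hb x y
    have : ∀ z : Ω, (a * b) z = a (b z) := fun z => rfl
    rw [this, this, ha, hb]
  one_mem' := by intro x y; rfl
  inv_mem' := by
    intro a ha x y
    have := ha (a⁻¹ x) (a⁻¹ y)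
    simpa using this.symm

/-- `PGL(Ω)`: the group of (restrictions to `Ω` of) projective transformations mapping
`Ω` onto itself, as a subgroup of the group of permutations of `Ω`. -/
def hilbertPGLGroup {n : ℕ} (Ω : Set (Euc n)) : Subgroup (Equiv.Perm Ω) where
  carrier := {e | ∃ g : (Fin (n + 1) → ℝ) ≃ₗ[ℝ] (Fin (n + 1) → ℝ),
    ∀ x : Ω, chart ((e x : Ω) : Euc n) = projMap g (chart (x : Euc n))}
  mul_mem' := by
    rintro a b ⟨ga, hga⟩ ⟨gb, hgb⟩
    refine ⟨gb ≪≫ₗ ga, fun x => ?_⟩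
    have : (a * b) x = a (b x) := rfl
    rw [this, hga (b x), hgb x, projMap_trans]
    rfl
  one_mem' := ⟨LinearEquiv.refl ℝ _, fun x => by rw [projMap_refl]; rfl⟩
  inv_mem' := by
    rintro a ⟨g, hg⟩
    refine ⟨g.symm, fun x => ?_⟩
    have h1 := hg (a⁻¹ x)
    have h2 : (a (a⁻¹ x) : Euc n) = (x : Euc n) := by simp
    rw [h2] at h1
    rw [h1, projMap_symm_apply]

namespace HilbertIso

open Filter Topology
open scoped RealInnerProductSpace

variable {V : Type*} [NormedAddCommGroup V] [InnerProductSpace ℝ V]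

/-! ### Cones cut out by compact sets of functionals and their gauges -/

/-- The cone on which every functional of `K` is positive. Functionals are represented by vectors
through the inner product. -/
def posC (K : Set V) : Set V := {x | ∀ f ∈ K, 0 < ⟪f, x⟫}

/-- The cone on which every functional of `K` is nonnegative. -/
def nnC (K : Set V) : Set V := {x | ∀ f ∈ K, 0 ≤ ⟪f, x⟫}

/-- The functionals of `K` that vanish at `y`: the face of the dual cone orthogonal to `y`. -/
def ann (K : Set V) (y : V) : Set V := {f | f ∈ K ∧ ⟪f, y⟫ = 0}

/-- The gauge `M(x/y) = inf {l | x ≤ l y}` for the order defined by `K`. -/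
def Mx (K : Set V) (x y : V) : ℝ := sInf {l : ℝ | ∀ f ∈ K, ⟪f, x⟫ ≤ l * ⟪f, y⟫}

/-- The exponential of the Hilbert distance, `M(x/y) M(y/x)`. -/
def Dx (K : Set V) (x y : V) : ℝ := Mx K x y * Mx K y x

variable {K : Set V} {x y z p q : V}

lemma posC_sub_nnC : posC K ⊆ nnC K := fun _ hx f hf => (hx f hf).le

lemma posC_mono {F : Set V} (h : F ⊆ K) : posC K ⊆ posC F := fun _ hx f hf => hx f (h hf)

lemma nnC_mono {F : Set V} (h : F ⊆ K) : nnC K ⊆ nnC F := fun _ hx f hf => hx f (h hf)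

lemma ann_sub : ann K y ⊆ K := fun _ h => h.1

lemma ann_compact (hK : IsCompact K) : IsCompact (ann K y) := by
  have : ann K y = K ∩ {f | ⟪f, y⟫ = 0} := by ext f; simp [ann]
  rw [this]
  exact hK.inter_right (isClosed_eq (by fun_prop) continuous_const)

lemma posC_add_nn (hx : x ∈ posC K) (hy : y ∈ nnC K) : x + y ∈ posC K := fun f hf => by
  rw [inner_add_right]; linarith [hx f hf, hy f hf]

lemma nnC_add (hx : x ∈ nnC K) (hy : y ∈ nnC K) : x + y ∈ nnC K := fun f hf => by
  rw [inner_add_right]; linarith [hx f hf, hy f hf]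

lemma posC_smul {c : ℝ} (hc : 0 < c) (hx : x ∈ posC K) : c • x ∈ posC K := fun f hf => by
  rw [real_inner_smul_right]; exact mul_pos hc (hx f hf)

lemma nnC_smul {c : ℝ} (hc : 0 ≤ c) (hx : x ∈ nnC K) : c • x ∈ nnC K := fun f hf => by
  rw [real_inner_smul_right]; exact mul_nonneg hc (hx f hf)

lemma posC_add_smul {t : ℝ} (ht : 0 ≤ t) (hx : x ∈ posC K) (hy : y ∈ nnC K) :
    x + t • y ∈ posC K := posC_add_nn hx (nnC_smul ht hy)

/-- The gauge is attained as an infimum as soon as `x` is dominated by a multiple of `y`. -/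
lemma le_Mx_gen (hy : ∃ f ∈ K, 0 < ⟪f, y⟫) (hs : ∃ l : ℝ, ∀ f ∈ K, ⟪f, x⟫ ≤ l * ⟪f, y⟫) :
    ∀ f ∈ K, ⟪f, x⟫ ≤ Mx K x y * ⟪f, y⟫ := by
  have hcl : IsClosed {l : ℝ | ∀ f ∈ K, ⟪f, x⟫ ≤ l * ⟪f, y⟫} := by
    have : {l : ℝ | ∀ f ∈ K, ⟪f, x⟫ ≤ l * ⟪f, y⟫} = ⋂ f ∈ K, {l : ℝ | ⟪f, x⟫ ≤ l * ⟪f, y⟫} := by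
      ext l; simp
    rw [this]
    exact isClosed_biInter fun f _ => isClosed_le continuous_const (by fun_prop)
  obtain ⟨f0, hf0, h0⟩ := hy
  have hb : BddBelow {l : ℝ | ∀ f ∈ K, ⟪f, x⟫ ≤ l * ⟪f, y⟫} :=
    ⟨⟪f0, x⟫ / ⟪f0, y⟫, fun l hl => by rw [div_le_iff₀ h0]; exact hl f0 hf0⟩
  exact hcl.csInf_mem hs hb

lemma Mx_le_gen (hy : ∃ f ∈ K, 0 < ⟪f, y⟫) {l : ℝ} (hl : ∀ f ∈ K, ⟪f, x⟫ ≤ l * ⟪f, y⟫) :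
    Mx K x y ≤ l := by
  obtain ⟨f0, hf0, h0⟩ := hy
  have hb : BddBelow {l : ℝ | ∀ f ∈ K, ⟪f, x⟫ ≤ l * ⟪f, y⟫} :=
    ⟨⟪f0, x⟫ / ⟪f0, y⟫, fun l hl => by rw [div_le_iff₀ h0]; exact hl f0 hf0⟩
  exact csInf_le hb hl

lemma pos_ex (hn : K.Nonempty) (hy : y ∈ posC K) : ∃ f ∈ K, 0 < ⟪f, y⟫ :=
  let ⟨f, hf⟩ := hn; ⟨f, hf, hy f hf⟩

/-- A maximizing functional for `f(x)/f(y)`. -/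
lemma Mx_att (hK : IsCompact K) (hn : K.Nonempty) (hy : y ∈ posC K) (x : V) :
    ∃ f ∈ K, ⟪f, x⟫ = Mx K x y * ⟪f, y⟫ := by
  have hc : ContinuousOn (fun f : V => ⟪f, x⟫ / ⟪f, y⟫) K :=
    ContinuousOn.div (by fun_prop) (by fun_prop) fun f hf => (hy f hf).ne'
  obtain ⟨f, hf, hmax⟩ := hK.exists_isMaxOn hn hc
  have hle : ∀ g ∈ K, ⟪g, x⟫ ≤ ⟪f, x⟫ / ⟪f, y⟫ * ⟪g, y⟫ := fun g hg => by
    have := hmax hg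
    simp only [mem_ofPred_eq] at this
    rwa [div_le_iff₀ (hy g hg)] at this
  have h1 := Mx_le_gen (pos_ex hn hy) hle
  have h2 := le_Mx_gen (pos_ex hn hy) ⟨_, hle⟩ f hf
  refine ⟨f, hf, le_antisymm h2 ?_⟩
  rwa [le_div_iff₀ (hy f hf)] at h1

lemma le_Mx (hK : IsCompact K) (hn : K.Nonempty) (hy : y ∈ posC K) (x : V) :
    ∀ f ∈ K, ⟪f, x⟫ ≤ Mx K x y * ⟪f, y⟫ := by
  have hc : ContinuousOn (fun f : V => ⟪f, x⟫ / ⟪f, y⟫) K :=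
    ContinuousOn.div (by fun_prop) (by fun_prop) fun f hf => (hy f hf).ne'
  obtain ⟨f, hf, hmax⟩ := hK.exists_isMaxOn hn hc
  refine le_Mx_gen (pos_ex hn hy) ⟨⟪f, x⟫ / ⟪f, y⟫, fun g hg => ?_⟩
  have := hmax hg
  simp only [mem_ofPred_eq] at this
  rwa [div_le_iff₀ (hy g hg)] at this

lemma Mx_le (hn : K.Nonempty) (hy : y ∈ posC K) {l : ℝ}
    (hl : ∀ f ∈ K, ⟪f, x⟫ ≤ l * ⟪f, y⟫) : Mx K x y ≤ l := Mx_le_gen (pos_ex hn hy) hl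

lemma Mx_eq (hK : IsCompact K) (hn : K.Nonempty) (hy : y ∈ posC K) {l : ℝ}
    (hl : ∀ f ∈ K, ⟪f, x⟫ ≤ l * ⟪f, y⟫) (hf : ∃ f ∈ K, ⟪f, x⟫ = l * ⟪f, y⟫) : Mx K x y = l := by
  refine le_antisymm (Mx_le hn hy hl) ?_
  obtain ⟨f, hf, h⟩ := hf
  have := le_Mx hK hn hy x f hf
  rw [h] at this
  exact le_of_mul_le_mul_right this (hy f hf)

/-- The gauge depends on its arguments only through the values of the functionals in `K`. -/
lemma Mx_congr {x' y' : V} (hx : ∀ f ∈ K, ⟪f, x⟫ = ⟪f, x'⟫) (hy : ∀ f ∈ K, ⟪f, y⟫ = ⟪f, y'⟫) :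
    Mx K x y = Mx K x' y' := by
  unfold Mx
  congr 1
  ext l
  exact forall₂_congr fun f hf => by rw [hx f hf, hy f hf]

lemma Dx_congr {x' y' : V} (hx : ∀ f ∈ K, ⟪f, x⟫ = ⟪f, x'⟫) (hy : ∀ f ∈ K, ⟪f, y⟫ = ⟪f, y'⟫) :
    Dx K x y = Dx K x' y' := by
  unfold Dx; rw [Mx_congr hx hy, Mx_congr hy hx]

lemma Mx_pos_of (hK : IsCompact K) (hn : K.Nonempty) (hy : y ∈ posC K)
    (hx : ∃ f ∈ K, 0 < ⟪f, x⟫) : 0 < Mx K x y := by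
  obtain ⟨f, hf, h⟩ := hx
  have := le_Mx hK hn hy x f hf
  by_contra hc
  nlinarith [hy f hf]

lemma Mx_pos (hK : IsCompact K) (hn : K.Nonempty) (hx : x ∈ posC K) (hy : y ∈ posC K) :
    0 < Mx K x y := Mx_pos_of hK hn hy (pos_ex hn hx)

lemma Mx_nonneg (hK : IsCompact K) (hn : K.Nonempty) (hx : x ∈ nnC K) (hy : y ∈ posC K) :
    0 ≤ Mx K x y := by
  obtain ⟨f, hf, h⟩ := Mx_att hK hn hy x
  by_contra hc
  nlinarith [hy f hf, hx f hf]

lemma Mx_self (hK : IsCompact K) (hn : K.Nonempty) (hx : x ∈ posC K) : Mx K x x = 1 :=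
  Mx_eq hK hn hx (fun f _ => by simp) (let ⟨f, hf⟩ := hn; ⟨f, hf, by simp⟩)

lemma Mx_tri (hK : IsCompact K) (hn : K.Nonempty) (hx : x ∈ nnC K) (hy : y ∈ posC K)
    (hz : z ∈ posC K) : Mx K x z ≤ Mx K x y * Mx K y z := by
  refine Mx_le hn hz fun f hf => ?_
  have h1 := le_Mx hK hn hy x f hf
  have h2 := le_Mx hK hn hz y f hf
  have := Mx_nonneg hK hn hx hy
  nlinarith

/-- Triangle inequality for the gauge when the middle point may lie on the boundary. -/
lemma Mx_tri' (hK : IsCompact K) (hn : K.Nonempty) {l : ℝ} (hl : 0 ≤ l) (hz : z ∈ posC K)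
    (h : ∀ f ∈ K, ⟪f, x⟫ ≤ l * ⟪f, y⟫) : Mx K x z ≤ l * Mx K y z := by
  refine Mx_le hn hz fun f hf => ?_
  have h2 := le_Mx hK hn hz y f hf
  nlinarith [h f hf]

lemma Mx_anti (hK : IsCompact K) (hn : K.Nonempty) (hx : x ∈ nnC K) (hy : y ∈ posC K)
    (hz : z ∈ nnC K) : Mx K x (y + z) ≤ Mx K x y := by
  refine Mx_le hn (posC_add_nn hy hz) fun f hf => ?_
  have := le_Mx hK hn hy x f hf
  have := Mx_nonneg hK hn hx hy
  rw [inner_add_right]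
  nlinarith [hz f hf]

lemma Mx_smul_left (hK : IsCompact K) (hn : K.Nonempty) (hy : y ∈ posC K) {c : ℝ} (hc : 0 ≤ c) :
    Mx K (c • x) y = c * Mx K x y := by
  refine Mx_eq hK hn hy (fun f hf => ?_) ?_
  · rw [real_inner_smul_right]; nlinarith [le_Mx hK hn hy x f hf]
  · obtain ⟨f, hf, h⟩ := Mx_att hK hn hy x
    exact ⟨f, hf, by rw [real_inner_smul_right, h]; ring⟩

lemma Mx_smul_right (hK : IsCompact K) (hn : K.Nonempty) (hy : y ∈ posC K) {c : ℝ} (hc : 0 < c) :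
    Mx K x (c • y) = Mx K x y / c := by
  refine Mx_eq hK hn (posC_smul hc hy) (fun f hf => ?_) ?_
  · rw [real_inner_smul_right]
    have := le_Mx hK hn hy x f hf
    field_simp; linarith
  · obtain ⟨f, hf, h⟩ := Mx_att hK hn hy x
    exact ⟨f, hf, by rw [real_inner_smul_right, h]; field_simp⟩

lemma Dx_symm : Dx K x y = Dx K y x := mul_comm _ _

lemma Dx_pos (hK : IsCompact K) (hn : K.Nonempty) (hx : x ∈ posC K) (hy : y ∈ posC K) :
    0 < Dx K x y := mul_pos (Mx_pos hK hn hx hy) (Mx_pos hK hn hy hx)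

lemma Dx_ge_one (hK : IsCompact K) (hn : K.Nonempty) (hx : x ∈ posC K) (hy : y ∈ posC K) :
    1 ≤ Dx K x y := by
  have := Mx_tri hK hn (posC_sub_nnC hx) hy hx
  rwa [Mx_self hK hn hx] at this

lemma Dx_self (hK : IsCompact K) (hn : K.Nonempty) (hx : x ∈ posC K) : Dx K x x = 1 := by
  unfold Dx; rw [Mx_self hK hn hx]; norm_num

lemma Dx_tri (hK : IsCompact K) (hn : K.Nonempty) (hx : x ∈ posC K) (hy : y ∈ posC K)
    (hz : z ∈ posC K) : Dx K x z ≤ Dx K x y * Dx K y z := by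
  have h1 := Mx_tri hK hn (posC_sub_nnC hx) hy hz
  have h2 := Mx_tri hK hn (posC_sub_nnC hz) hy hx
  calc Dx K x z ≤ (Mx K x y * Mx K y z) * (Mx K z y * Mx K y x) :=
        mul_le_mul h1 h2 (Mx_pos hK hn hz hx).le
          (mul_pos (Mx_pos hK hn hx hy) (Mx_pos hK hn hy hz)).le
    _ = _ := by unfold Dx; ring

/-- Equality in the triangle inequality splits into equalities for the two gauges. -/
lemma Mx_of_Dx_eq (hK : IsCompact K) (hn : K.Nonempty) (hx : x ∈ posC K) (hy : y ∈ posC K)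
    (hz : z ∈ posC K) (h : Dx K x z = Dx K x y * Dx K y z) :
    Mx K x z = Mx K x y * Mx K y z ∧ Mx K z x = Mx K z y * Mx K y x := by
  have h1 := Mx_tri hK hn (posC_sub_nnC hx) hy hz
  have h2 := Mx_tri hK hn (posC_sub_nnC hz) hy hx
  have p1 := Mx_pos hK hn hx hz
  have p2 := Mx_pos hK hn hz hx
  have e : Mx K x z * Mx K z x = (Mx K x y * Mx K y z) * (Mx K z y * Mx K y x) := by
    unfold Dx at h; rw [h]; ring
  constructor <;> by_contra hne
  · have := lt_of_le_of_ne h1 hne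
    nlinarith
  · have := lt_of_le_of_ne h2 hne
    nlinarith

lemma Dx_smul_left (hK : IsCompact K) (hn : K.Nonempty) (hx : x ∈ posC K) (hy : y ∈ posC K)
    {c : ℝ} (hc : 0 < c) : Dx K (c • x) y = Dx K x y := by
  unfold Dx
  rw [Mx_smul_left hK hn hy hc.le, Mx_smul_right hK hn hx hc]
  field_simp

lemma Dx_smul_right (hK : IsCompact K) (hn : K.Nonempty) (hx : x ∈ posC K) (hy : y ∈ posC K)
    {c : ℝ} (hc : 0 < c) : Dx K x (c • y) = Dx K x y := by
  rw [Dx_symm, Dx_smul_left hK hn hy hx hc, Dx_symm]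

lemma eq_of_Mx_mul (hy : ∀ f ∈ K, ⟪f, x⟫ ≤ Mx K x y * ⟪f, y⟫)
    (hx : ∀ f ∈ K, ⟪f, y⟫ ≤ Mx K y x * ⟪f, x⟫) (hp : 0 < Mx K x y) (h : Dx K x y = 1) :
    ∀ f ∈ K, ⟪f, x⟫ = Mx K x y * ⟪f, y⟫ := fun f hf => by
  refine le_antisymm (hy f hf) ?_
  have h1 := mul_le_mul_of_nonneg_left (hx f hf) hp.le
  rw [← mul_assoc] at h1
  unfold Dx at h
  rwa [h, one_mul] at h1

lemma Dx_one (hK : IsCompact K) (hn : K.Nonempty) (hx : x ∈ posC K) (hy : y ∈ posC K)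
    (h : Dx K x y = 1) : ∃ c : ℝ, 0 < c ∧ ∀ f ∈ K, ⟪f, x⟫ = c * ⟪f, y⟫ :=
  ⟨Mx K x y, Mx_pos hK hn hx hy, eq_of_Mx_mul (le_Mx hK hn hy x) (le_Mx hK hn hx y)
    (Mx_pos hK hn hx hy) h⟩

lemma Dx_eq_one_of (hK : IsCompact K) (hn : K.Nonempty) (hy : y ∈ posC K) {c : ℝ} (hc : 0 < c)
    (h : ∀ f ∈ K, ⟪f, x⟫ = c * ⟪f, y⟫) : Dx K x y = 1 := by
  have : Dx K x y = Dx K (c • y) y :=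
    Dx_congr (fun f hf => by rw [h f hf, real_inner_smul_right]) fun _ _ => rfl
  rw [this, Dx_smul_left hK hn hy hy hc, Dx_self hK hn hy]

/-! ### Segments and rays -/

lemma Mx_comb_left (hK : IsCompact K) (hn : K.Nonempty) (hy : y ∈ posC K) {a b : ℝ}
    (ha : 0 ≤ a) : Mx K (a • x + b • y) y = a * Mx K x y + b := by
  refine Mx_eq hK hn hy (fun f hf => ?_) ?_
  · simp only [inner_add_right, real_inner_smul_right]
    nlinarith [le_Mx hK hn hy x f hf]
  · obtain ⟨f, hf, h⟩ := Mx_att hK hn hy x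
    exact ⟨f, hf, by simp only [inner_add_right, real_inner_smul_right, h]; ring⟩

lemma Mx_comb_right (hK : IsCompact K) (hn : K.Nonempty) (hx : x ∈ nnC K) (hy : y ∈ posC K)
    {a b : ℝ} (ha : 0 ≤ a) (hb : 0 < b) :
    Mx K x (a • x + b • y) = Mx K x y / (a * Mx K x y + b) := by
  have hp : a • x + b • y ∈ posC K := by
    rw [add_comm]; exact posC_add_smul ha (posC_smul hb hy) hx
  have hM := Mx_nonneg hK hn hx hy
  have hd : 0 < a * Mx K x y + b := by positivity
  refine Mx_eq hK hn hp (fun f hf => ?_) ?_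
  · simp only [inner_add_right, real_inner_smul_right]
    rw [div_mul_eq_mul_div, le_div_iff₀ hd]
    nlinarith [le_Mx hK hn hy x f hf]
  · obtain ⟨f, hf, h⟩ := Mx_att hK hn hy x
    refine ⟨f, hf, ?_⟩
    simp only [inner_add_right, real_inner_smul_right, h]
    field_simp

/-- Distance from `x` to a point of the segment from `x` to `y`. -/
lemma Dx_seg (hK : IsCompact K) (hn : K.Nonempty) (hx : x ∈ posC K) (hy : y ∈ posC K)
    {s : ℝ} (hs : 0 < s) :
    Dx K x (x + s • y) = Mx K x y * (1 + s * Mx K y x) / (Mx K x y + s) := by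
  have h1 := Mx_comb_right hK hn (posC_sub_nnC hx) hy zero_le_one hs
  have h2 := Mx_comb_left (x := y) hK hn hx (a := s) (b := 1) hs.le
  rw [one_smul] at h1 h2
  unfold Dx
  rw [h1, add_comm x, h2]
  have := Mx_pos hK hn hx hy
  field_simp
  ring

lemma Dx_seg_geod (hK : IsCompact K) (hn : K.Nonempty) (hx : x ∈ posC K) (hy : y ∈ posC K)
    {s : ℝ} (hs : 0 < s) :
    Dx K x (x + s • y) * Dx K (x + s • y) y = Dx K x y := by
  have h1 := Mx_comb_left (x := x) hK hn hy (a := 1) (b := s) zero_le_one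
  have h2 := Mx_comb_right hK hn (posC_sub_nnC hy) hx hs.le one_pos
  rw [one_smul] at h1 h2
  rw [Dx_seg hK hn hx hy hs]
  unfold Dx
  rw [h1, add_comm x, h2]
  have := Mx_pos hK hn hx hy
  have := Mx_pos hK hn hy hx
  field_simp
  ring

lemma Mx_ray_self (hK : IsCompact K) (hn : K.Nonempty) (hp : p ∈ posC K) {v : V}
    (hv : v ∈ nnC K) (h0 : (ann K v).Nonempty) {t : ℝ} (ht : 0 ≤ t) : Mx K p (p + t • v) = 1 := by
  refine Mx_eq hK hn (posC_add_smul ht hp hv) (fun f hf => ?_) ?_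
  · rw [inner_add_right, real_inner_smul_right]; nlinarith [hv f hf]
  · obtain ⟨f, hf, h⟩ := h0
    exact ⟨f, hf, by rw [inner_add_right, real_inner_smul_right, h]; ring⟩

lemma Mx_ray (hK : IsCompact K) (hn : K.Nonempty) (hp : p ∈ posC K) {v : V}
    {t : ℝ} (ht : 0 ≤ t) : Mx K (p + t • v) p = 1 + t * Mx K v p := by
  have := Mx_comb_left (x := v) hK hn hp (a := t) (b := 1) ht
  rw [one_smul] at this
  rw [add_comm, this, add_comm]

lemma Mx_dir_ray (hK : IsCompact K) (hn : K.Nonempty) (hp : p ∈ posC K) {v : V}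
    (hv : v ∈ nnC K) {t : ℝ} (ht : 0 ≤ t) : Mx K v (p + t • v) = Mx K v p / (1 + t * Mx K v p) := by
  have := Mx_comb_right hK hn hv hp ht one_pos
  rw [one_smul] at this
  rw [add_comm, this, add_comm 1]

/-- Distance along a ray that ends on the boundary of the cone. -/
lemma Dx_ray (hK : IsCompact K) (hn : K.Nonempty) (hp : p ∈ posC K) {v : V}
    (hv : v ∈ nnC K) (h0 : (ann K v).Nonempty) {t : ℝ} (ht : 0 ≤ t) :
    Dx K p (p + t • v) = 1 + t * Mx K v p := by
  unfold Dx; rw [Mx_ray_self hK hn hp hv h0 ht, Mx_ray hK hn hp ht, one_mul]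

/-- `v` spans an extreme ray of the closed cone, modulo the common kernel of `K`. -/
def ExtM (K : Set V) (v : V) : Prop :=
  v ∈ nnC K ∧ (∃ f ∈ K, 0 < ⟪f, v⟫) ∧
    ∀ u ∈ nnC K, v - u ∈ nnC K → ∃ l : ℝ, ∀ f ∈ K, ⟪f, u⟫ = l * ⟪f, v⟫

/-- Segments pointing at an extreme ray are the only geodesics between their endpoints. -/
lemma ray_rigid (hK : IsCompact K) (hn : K.Nonempty) (hp : p ∈ posC K) {v : V}
    (hv : ExtM K v) (h0 : (ann K v).Nonempty) {t : ℝ} (ht : 0 < t) {r : V} (hr : r ∈ posC K)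
    (h : Dx K p r * Dx K r (p + t • v) = Dx K p (p + t • v)) :
    ∃ s c : ℝ, 0 ≤ s ∧ s ≤ t ∧ 0 < c ∧ ∀ f ∈ K, ⟪f, r⟫ = c * ⟪f, p + s • v⟫ := by
  have hq := posC_add_smul ht.le hp hv.1
  have hm := (Mx_of_Dx_eq hK hn hp hr hq h.symm).1
  rw [Mx_ray_self hK hn hp hv.1 h0 ht.le] at hm
  set a := Mx K p r with ha
  have hap : 0 < a := Mx_pos hK hn hp hr
  have hbv : Mx K r (p + t • v) = a⁻¹ := by
    exact eq_inv_of_mul_eq_one_right hm.symm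
  have hle1 := le_Mx hK hn hr p
  have hle2 := le_Mx hK hn hq r
  rw [hbv] at hle2
  rw [← ha] at hle1
  -- after scaling, `p ≤ a r ≤ p + t v`
  have hu : t⁻¹ • (a • r - p) ∈ nnC K := nnC_smul (by positivity) fun f hf => by
    rw [inner_sub_right, real_inner_smul_right]; linarith [hle1 f hf]
  have hu' : v - t⁻¹ • (a • r - p) ∈ nnC K := fun f hf => by
    have := hle2 f hf
    rw [inv_mul_eq_div, le_div_iff₀ hap, inner_add_right, real_inner_smul_right] at this
    simp only [inner_sub_right, real_inner_smul_right]
    have h3 : t⁻¹ * (a * ⟪f, r⟫ - ⟪f, p⟫) ≤ ⟪f, v⟫ := by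
      rw [inv_mul_eq_div, div_le_iff₀ ht]; linarith
    linarith
  obtain ⟨l, hl⟩ := hv.2.2 _ hu hu'
  obtain ⟨g, hg, hgv⟩ := hv.2.1
  have hl0 : 0 ≤ l := by
    have := hu g hg
    rw [hl g hg] at this
    exact nonneg_of_mul_nonneg_left this hgv
  have hl1 : l ≤ 1 := by
    have := hu' g hg
    rw [inner_sub_right, hl g hg] at this
    nlinarith
  refine ⟨l * t, a⁻¹, by positivity, by nlinarith, by positivity, fun f hf => ?_⟩
  have := hl f hf
  simp only [inner_sub_right, real_inner_smul_right, inner_add_right] at this ⊢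
  field_simp at this ⊢
  linarith

/-- A vector positive on the functionals killing `y` becomes positive after adding a large
multiple of `y`. -/
lemma absorb (hK : IsCompact K) (hy : y ∈ nnC K) {g : V} (hg : ∀ f ∈ ann K y, 0 < ⟪f, g⟫) :
    ∃ t0 : ℝ, 0 < t0 ∧ ∀ t, t0 ≤ t → g + t • y ∈ posC K := by
  have hc : IsCompact (K ∩ {f | ⟪f, g⟫ ≤ 0}) :=
    hK.inter_right (isClosed_le (by fun_prop) continuous_const)
  rcases (K ∩ {f | ⟪f, g⟫ ≤ 0}).eq_empty_or_nonempty with he | hne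
  · refine ⟨1, one_pos, fun t ht f hf => ?_⟩
    have : 0 < ⟪f, g⟫ := by
      by_contra hcon
      exact (he ▸ (⟨hf, not_lt.mp hcon⟩ : f ∈ K ∩ {f | ⟪f, g⟫ ≤ 0}) : f ∈ (∅ : Set V))
    rw [inner_add_right, real_inner_smul_right]
    nlinarith [hy f hf]
  have hpos : ∀ f ∈ K ∩ {f | ⟪f, g⟫ ≤ 0}, 0 < ⟪f, y⟫ := fun f hf =>
    lt_of_le_of_ne (hy f hf.1) fun h => absurd (hg f ⟨hf.1, h.symm⟩) (not_lt.mpr hf.2)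
  obtain ⟨f1, hf1, hmax⟩ := hc.exists_isMaxOn hne
    (f := fun f : V => (-⟪f, g⟫) / ⟪f, y⟫)
    (ContinuousOn.div (by fun_prop) (by fun_prop) fun f hf => (hpos f hf).ne')
  refine ⟨max ((-⟪f1, g⟫) / ⟪f1, y⟫) 0 + 1, by positivity, fun t ht f hf => ?_⟩
  rw [inner_add_right, real_inner_smul_right]
  have ht0 : 0 < t := lt_of_lt_of_le (by positivity) ht
  by_cases h : ⟪f, g⟫ ≤ 0
  · have h1 := hmax (⟨hf, h⟩ : f ∈ K ∩ {f | ⟪f, g⟫ ≤ 0})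
    simp only [mem_ofPred_eq] at h1
    have h2 : (-⟪f, g⟫) / ⟪f, y⟫ < t := by linarith [le_max_left ((-⟪f1, g⟫) / ⟪f1, y⟫) 0]
    rw [div_lt_iff₀ (hpos f ⟨hf, h⟩)] at h2
    linarith
  · nlinarith [hy f hf]

lemma posC_isOpen_dir (hK : IsCompact K) (hp : p ∈ posC K) (v : V) :
    ∃ t : ℝ, 0 < t ∧ p + t • v ∈ posC K := by
  obtain ⟨t0, ht0, h⟩ := absorb (y := p) (g := v) hK (posC_sub_nnC hp)
    fun f hf => absurd hf.2 (hp f hf.1).ne'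
  refine ⟨t0⁻¹, by positivity, ?_⟩
  have := posC_smul (inv_pos.mpr ht0) (h t0 le_rfl)
  rwa [smul_add, smul_smul, inv_mul_cancel₀ ht0.ne', one_smul, add_comm] at this

end HilbertIso

namespace HilbertIso

open Filter Topology
open scoped RealInnerProductSpace

variable {V : Type*} [NormedAddCommGroup V] [InnerProductSpace ℝ V]
variable {K : Set V} {x y z p q : V}

lemma posC_isOpen (hK : IsCompact K) : IsOpen (posC K) := by
  rw [isOpen_iff_mem_nhds]
  intro x hx
  refine hK.eventually_forall_of_forall_eventually (P := fun x f => 0 < ⟪f, x⟫) fun f hf => ?_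
  exact (continuous_snd.inner continuous_fst).continuousAt.eventually
    (lt_mem_nhds (hx f hf))

lemma nnC_isClosed : IsClosed (nnC K) := by
  have : nnC K = ⋂ f ∈ K, {x | 0 ≤ ⟪f, x⟫} := by ext x; simp [nnC]
  rw [this]
  exact isClosed_biInter fun f _ => isClosed_le continuous_const (by fun_prop)

/-- `l p - x` is positive far out in the direction `y` as soon as `l > M(x/p)` on the functionals
killing `y`. -/
lemma absorb_le (hK : IsCompact K) (hy : y ∈ nnC K) (hy0 : (ann K y).Nonempty) (hp : p ∈ posC K)
    {l : ℝ} (hl : Mx (ann K y) x p < l) :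
    ∃ t0 : ℝ, 0 < t0 ∧ ∀ t, t0 ≤ t → ∀ f ∈ K, ⟪f, x⟫ < ⟪f, l • p + t • y⟫ := by
  obtain ⟨t0, h0, h⟩ := absorb (g := l • p - x) hK hy fun f hf => by
    have h1 := le_Mx (ann_compact hK) hy0 (posC_mono ann_sub hp) x f hf
    have h2 := hp f hf.1
    rw [inner_sub_right, real_inner_smul_right]
    nlinarith
  refine ⟨t0, h0, fun t ht f hf => ?_⟩
  have := h t ht f hf
  simp only [inner_add_right, inner_sub_right] at this ⊢
  linarith

/-- A nonzero boundary point of the cone. -/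
def Bd (K : Set V) (y : V) : Prop := y ∈ nnC K ∧ (∃ f ∈ K, 0 < ⟪f, y⟫) ∧ (ann K y).Nonempty

/-- The (exponential of the) Busemann function of the ray `p + t y`. -/
def Bf (K : Set V) (y p x : V) : ℝ := Mx K y x * Mx (ann K y) x p

lemma Bf_pos (hK : IsCompact K) (hn : K.Nonempty) (hy : Bd K y) (hp : p ∈ posC K)
    (hx : x ∈ posC K) : 0 < Bf K y p x :=
  mul_pos (Mx_pos_of hK hn hx hy.2.1)
    (Mx_pos (ann_compact hK) hy.2.2 (posC_mono ann_sub hx) (posC_mono ann_sub hp))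

lemma bd_add_mem (hy : Bd K y) (hp : p ∈ posC K) {δ : ℝ} (hδ : 0 < δ) : y + δ • p ∈ posC K := by
  rw [add_comm]; exact posC_add_nn (posC_smul hδ hp) hy.1

/-- The value of the Busemann function on its own ray. -/
lemma Bf_ray (hK : IsCompact K) (hn : K.Nonempty) (hy : Bd K y) (hp : p ∈ posC K)
    {δ : ℝ} (hδ : 0 < δ) : Bf K y p (y + δ • p) = Mx K y p / (Mx K y p + δ) * δ := by
  unfold Bf
  have h1 := Mx_comb_right hK hn hy.1 hp zero_le_one hδ
  rw [one_smul, one_mul] at h1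
  rw [h1]
  congr 1
  refine Mx_eq (ann_compact hK) hy.2.2 (posC_mono ann_sub hp) (fun f hf => ?_) ?_
  · rw [inner_add_right, hf.2, real_inner_smul_right, zero_add]
  · obtain ⟨f, hf⟩ := hy.2.2
    exact ⟨f, hf, by rw [inner_add_right, hf.2, real_inner_smul_right, zero_add]⟩

lemma Bf_ray_le (hK : IsCompact K) (hn : K.Nonempty) (hy : Bd K y) (hp : p ∈ posC K)
    {δ : ℝ} (hδ : 0 < δ) : Bf K y p (y + δ • p) ≤ δ := by
  rw [Bf_ray hK hn hy hp hδ]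
  have := Mx_pos_of hK hn hp hy.2.1
  have : Mx K y p / (Mx K y p + δ) ≤ 1 := by rw [div_le_one (by positivity)]; linarith
  nlinarith

/-- The Busemann function as a limit of distances. -/
lemma Bf_lim (hK : IsCompact K) (hn : K.Nonempty) (hy : Bd K y) (hp : p ∈ posC K)
    (hx : x ∈ posC K) :
    Tendsto (fun δ : ℝ => Dx K x (y + δ • p) * δ) (𝓝[>] 0) (𝓝 (Bf K y p x)) := by
  have hFK := ann_compact (y := y) hK
  have hpF : p ∈ posC (ann K y) := posC_mono ann_sub hp
  have hxF : x ∈ posC (ann K y) := posC_mono ann_sub hx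
  have hNpos := Mx_pos hFK hy.2.2 hxF hpF
  have hid : Tendsto (fun δ : ℝ => δ) (𝓝[>] 0) (𝓝 0) := tendsto_nhdsWithin_of_tendsto_nhds tendsto_id
  have h1 : Tendsto (fun δ : ℝ => Mx K x (y + δ • p) * δ) (𝓝[>] 0) (𝓝 (Mx (ann K y) x p)) := by
    rw [tendsto_order]
    constructor
    · intro a ha
      filter_upwards [self_mem_nhdsWithin] with δ (hδ : 0 < δ)
      refine ha.trans_le (Mx_le hy.2.2 hpF fun f hf => ?_)
      have := le_Mx hK hn (bd_add_mem hy hp hδ) x f hf.1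
      rw [inner_add_right, hf.2, real_inner_smul_right, zero_add] at this
      linarith
    · intro a ha
      obtain ⟨l, hl, hla⟩ := exists_between ha
      obtain ⟨t0, ht0, h⟩ := absorb_le hK hy.1 hy.2.2 hp hl
      have hl0 : 0 < l := hNpos.trans hl
      have hev : ∀ᶠ δ : ℝ in 𝓝[>] 0, δ < l / t0 := hid.eventually (gt_mem_nhds (by positivity))
      filter_upwards [self_mem_nhdsWithin, hev] with δ (hδ : 0 < δ) hδ2
      refine lt_of_le_of_lt ?_ hla
      rw [← le_div_iff₀ hδ]
      refine Mx_le hn (bd_add_mem hy hp hδ) fun f hf => ?_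
      have h3 := h (l / δ) (by rw [lt_div_iff₀ ht0] at hδ2; rw [le_div_iff₀ hδ]; linarith) f hf
      simp only [inner_add_right, real_inner_smul_right] at h3 ⊢
      refine h3.le.trans (le_of_eq ?_)
      field_simp
      ring
  have h2 : Tendsto (fun δ : ℝ => Mx K (y + δ • p) x) (𝓝[>] 0) (𝓝 (Mx K y x)) := by
    have hup : Tendsto (fun δ : ℝ => Mx K y x + δ * Mx K p x) (𝓝[>] 0) (𝓝 (Mx K y x)) := by
      have := (hid.mul_const (Mx K p x)).const_add (Mx K y x)
      simpa using this
    refine tendsto_of_tendsto_of_tendsto_of_le_of_le' tendsto_const_nhds hup ?_ ?_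
    · filter_upwards [self_mem_nhdsWithin] with δ (hδ : 0 < δ)
      refine Mx_le hn hx fun f hf => ?_
      have := le_Mx hK hn hx (y + δ • p) f hf
      rw [inner_add_right, real_inner_smul_right] at this
      nlinarith [hp f hf]
    · filter_upwards [self_mem_nhdsWithin] with δ (hδ : 0 < δ)
      refine Mx_le hn hx fun f hf => ?_
      rw [inner_add_right, real_inner_smul_right]
      nlinarith [le_Mx hK hn hx y f hf, le_Mx hK hn hx p f hf]
  have := h2.mul h1
  refine this.congr fun δ => ?_
  unfold Dx; ring

/-- An exponentiated horofunction: `β` is the limit of normalized distances to a sequence `z`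
along which `β` tends to `0`. -/
def BusZ (K : Set V) (β : V → ℝ) (z : ℕ → V) : Prop :=
  (∀ x ∈ posC K, 0 < β x) ∧ (∀ k, z k ∈ posC K) ∧ Tendsto (fun k => β (z k)) atTop (𝓝 0) ∧
    ∀ x ∈ posC K, Tendsto (fun k => Dx K x (z k) * β (z k)) atTop (𝓝 (β x))

lemma BusZ_Bf (hK : IsCompact K) (hn : K.Nonempty) (hy : Bd K y) (hp : p ∈ posC K) :
    BusZ K (Bf K y p) (fun k : ℕ => y + ((1 : ℝ) / (k + 1)) • p) := by
  have hd : Tendsto (fun k : ℕ => (1 : ℝ) / (k + 1)) atTop (𝓝[>] 0) :=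
    tendsto_nhdsWithin_iff.mpr ⟨tendsto_one_div_add_atTop_nhds_zero_nat,
      Eventually.of_forall fun k => by rw [mem_Ioi]; positivity⟩
  have hd' : Tendsto (fun k : ℕ => (1 : ℝ) / (k + 1)) atTop (𝓝 0) :=
    tendsto_one_div_add_atTop_nhds_zero_nat
  have hM := Mx_pos_of hK hn hp hy.2.1
  have hr : Tendsto (fun k : ℕ => Mx K y p / (Mx K y p + (1 : ℝ) / (k + 1))) atTop (𝓝 1) := by
    have := (tendsto_const_nhds (x := Mx K y p)).div (hd'.const_add (Mx K y p)) (by simpa using hM.ne')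
    rwa [add_zero, div_self hM.ne'] at this
  refine ⟨fun x hx => Bf_pos hK hn hy hp hx, fun k => bd_add_mem hy hp (by positivity), ?_, ?_⟩
  · have := hr.mul hd'
    rw [mul_zero] at this
    exact this.congr fun k => (Bf_ray hK hn hy hp (by positivity)).symm
  · intro x hx
    have := ((Bf_lim hK hn hy hp hx).comp hd).mul hr
    rw [mul_one] at this
    refine this.congr fun k => ?_
    rw [Bf_ray hK hn hy hp (by positivity)]
    simp only [Function.comp]
    ring

lemma BusZ.ray (hK : IsCompact K) (hn : K.Nonempty) {β : V → ℝ} {z : ℕ → V} (h : BusZ K β z)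
    (hx : x ∈ posC K) {c : ℝ} (hc : 0 < c) : β (c • x) = β x := by
  refine tendsto_nhds_unique (h.2.2.2 _ (posC_smul hc hx)) ((h.2.2.2 x hx).congr fun k => ?_)
  rw [Dx_smul_left hK hn hx (h.2.1 k) hc]

/-! ### Isometries of the cone modulo scaling -/

/-- The standing assumptions: `K` is a compact set of functionals cutting out an open proper convex
cone of dimension at least two, and every functional nonnegative on the cone is a positive multiple
of an element of `K`. -/
structure Good (K : Set V) : Prop where
  cpt : IsCompact K
  ne : K.Nonempty
  pos : (posC K).Nonempty
  sep : ∀ v : V, (∀ f ∈ K, ⟪f, v⟫ = 0) → v = 0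
  sat : ∀ h : V, h ≠ 0 → (∀ u ∈ nnC K, 0 ≤ ⟪h, u⟫) → ∃ c : ℝ, 0 < c ∧ c • h ∈ K
  dim : 2 ≤ Module.finrank ℝ V

lemma Good.eq_smul (G : Good K) {c : ℝ} (h : ∀ f ∈ K, ⟪f, x⟫ = c * ⟪f, y⟫) : x = c • y := by
  rw [← sub_eq_zero]
  refine G.sep _ fun f hf => ?_
  rw [inner_sub_right, real_inner_smul_right, h f hf, sub_self]

lemma Good.eq_of (G : Good K) (h : ∀ f ∈ K, ⟪f, x⟫ = ⟪f, y⟫) : x = y := by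
  have := G.eq_smul (x := x) (y := y) (c := 1) (by simpa using h)
  simpa using this

lemma Good.ray_of_one (G : Good K) (hx : x ∈ posC K) (hy : y ∈ posC K) (h : Dx K x y = 1) :
    ∃ c : ℝ, 0 < c ∧ x = c • y := by
  obtain ⟨c, hc, h⟩ := Dx_one G.cpt G.ne hx hy h
  exact ⟨c, hc, G.eq_smul h⟩

/-- Mutually inverse (up to scaling) isometries of the cone. -/
structure Iso (K : Set V) (T S : V → V) : Prop where
  mapT : ∀ x ∈ posC K, T x ∈ posC K
  mapS : ∀ x ∈ posC K, S x ∈ posC K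
  dT : ∀ x ∈ posC K, ∀ y ∈ posC K, Dx K (T x) (T y) = Dx K x y
  dS : ∀ x ∈ posC K, ∀ y ∈ posC K, Dx K (S x) (S y) = Dx K x y
  TS : ∀ x ∈ posC K, ∃ c : ℝ, 0 < c ∧ T (S x) = c • x
  ST : ∀ x ∈ posC K, ∃ c : ℝ, 0 < c ∧ S (T x) = c • x

variable {T S : V → V}

lemma Iso.symm (I : Iso K T S) : Iso K S T := ⟨I.mapS, I.mapT, I.dS, I.dT, I.ST, I.TS⟩

lemma Iso.dTS (G : Good K) (I : Iso K T S) (hx : x ∈ posC K) (hy : y ∈ posC K) :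
    Dx K x (S y) = Dx K (T x) y := by
  obtain ⟨c, hc, h⟩ := I.TS y hy
  rw [← I.dT x hx _ (I.mapS y hy), h, Dx_smul_right G.cpt G.ne (I.mapT x hx) hy hc]

lemma Iso.ray (G : Good K) (I : Iso K T S) (hx : x ∈ posC K) {c : ℝ} (hc : 0 < c) :
    ∃ d : ℝ, 0 < d ∧ T (c • x) = d • T x := by
  refine G.ray_of_one (I.mapT _ (posC_smul hc hx)) (I.mapT _ hx) ?_
  rw [I.dT _ (posC_smul hc hx) _ hx, Dx_smul_left G.cpt G.ne hx hx hc, Dx_self G.cpt G.ne hx]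

lemma Iso.inj (G : Good K) (I : Iso K T S) (hx : x ∈ posC K) (hy : y ∈ posC K) {c : ℝ} (hc : 0 < c)
    (h : T x = c • T y) : ∃ d : ℝ, 0 < d ∧ x = d • y := by
  refine G.ray_of_one hx hy ?_
  rw [← I.dT x hx y hy, h, Dx_smul_left G.cpt G.ne (I.mapT y hy) (I.mapT y hy) hc,
    Dx_self G.cpt G.ne (I.mapT y hy)]

/-- `T` maps the ray from `p` in direction `e` onto the ray from `T p` in direction `y`. -/
def Ray (K : Set V) (T : V → V) (e p y : V) : Prop :=
  Bd K y ∧ ∀ t : ℝ, 0 ≤ t → ∃ c : ℝ, 0 < c ∧ T (p + t • e) = c • (T p + t • y)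

/-- Points on a ray towards an extreme direction are mapped to points of a segment. -/
lemma ray_seg (G : Good K) (I : Iso K T S) {e : V} (he : ExtM K e) (h0 : (ann K e).Nonempty)
    (hp : p ∈ posC K) {t₁ t₂ : ℝ} (h1 : 0 < t₁) (h2 : t₁ < t₂) :
    ∃ s c : ℝ, 0 < s ∧ 0 < c ∧ T (p + t₁ • e) = c • (T p + s • T (p + t₂ • e)) := by
  have hK := G.cpt
  have hn := G.ne
  have t2 : 0 < t₂ := h1.trans h2
  have hp1 := posC_add_smul h1.le hp he.1
  have hp2 := posC_add_smul t2.le hp he.1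
  have hTp := I.mapT p hp
  have hT2 := I.mapT _ hp2
  have hm := Mx_pos_of hK hn hp he.2.1
  set m := Mx K e p
  have hAB := I.dT p hp _ hp2
  rw [Dx_ray hK hn hp he.1 h0 t2.le] at hAB
  have hA := Mx_pos hK hn hTp hT2
  set A := Mx K (T p) (T (p + t₂ • e))
  set B := Mx K (T (p + t₂ • e)) (T p)
  have hAB' : A * B = 1 + t₂ * m := hAB
  set s := A * t₁ / (t₂ - t₁)
  have hd : 0 < t₂ - t₁ := sub_pos.mpr h2
  have hs : 0 < s := by positivity
  set x' := T p + s • T (p + t₂ • e)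
  have hx' : x' ∈ posC K := posC_add_smul hs.le hTp (posC_sub_nnC hT2)
  have hD : Dx K (T p) x' = 1 + t₁ * m := by
    have h := Dx_seg hK hn hTp hT2 hs
    rw [h]
    change A * (1 + s * B) / (A + s) = _
    rw [div_eq_iff (by positivity)]
    have : A * (1 + s * B) = A + s * (1 + t₂ * m) := by rw [← hAB']; ring
    rw [this]
    simp only [s]
    field_simp
    ring
  have hg := Dx_seg_geod hK hn hTp hT2 hs
  have hSx := I.mapS _ hx'
  obtain ⟨s', c, hs0, hs1, hc, hv⟩ := ray_rigid hK hn hp he h0 t2 hSx (by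
    rw [I.dTS G hp hx', Dx_symm (x := S x'), I.dTS G hp2 hx', Dx_symm (x := T (p + t₂ • e)), hg,
      I.dT p hp _ hp2])
  have hSe := G.eq_smul hv
  have hps := posC_add_smul hs0 hp he.1
  have : s' = t₁ := by
    have h := I.dTS G hp hx'
    rw [hSe, Dx_smul_right hK hn hp hps hc, Dx_ray hK hn hp he.1 h0 hs0, hD] at h
    have : (s' - t₁) * m = 0 := by linarith
    rcases mul_eq_zero.mp this with h | h
    · linarith
    · exact absurd h hm.ne'
  rw [this] at hSe
  obtain ⟨d, hd, hh⟩ := G.ray_of_one (I.mapT _ hp1) hx' (by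
    rw [← I.dTS G hp1 hx', hSe, Dx_smul_right hK hn hp1 hp1 hc, Dx_self hK hn hp1])
  exact ⟨s, d, hs, hd, hh⟩

lemma ray_image (G : Good K) (I : Iso K T S) {e : V} (he : ExtM K e) (h0 : (ann K e).Nonempty)
    (hp : p ∈ posC K) : ∃ y, Ray K T e p y := by
  have hK := G.cpt
  have hn := G.ne
  have hTp := I.mapT p hp
  have hp1 : p + (1 : ℝ) • e ∈ posC K := posC_add_smul zero_le_one hp he.1
  have hm := Mx_pos_of hK hn hp he.2.1
  set m := Mx K e p
  set Q := T (p + (1 : ℝ) • e)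
  have hQ : Q ∈ posC K := I.mapT _ hp1
  have hA := Mx_pos hK hn hTp hQ
  obtain ⟨f0, hf0, hf0e⟩ := Mx_att hK hn hQ (T p)
  have hle := le_Mx hK hn hQ (T p)
  set A := Mx K (T p) Q
  -- the endpoint of the image ray on the boundary of the cone
  set y0 := A • Q - T p with hy0
  have hyn : y0 ∈ nnC K := fun f hf => by
    rw [hy0, inner_sub_right, real_inner_smul_right]; linarith [hle f hf]
  have hy00 : ⟪f0, y0⟫ = 0 := by rw [hy0, inner_sub_right, real_inner_smul_right]; linarith
  have hQe : Q = A⁻¹ • (T p + y0) := by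
    rw [hy0, add_sub_cancel, smul_smul, inv_mul_cancel₀ hA.ne', one_smul]
  have hypos : ∃ f ∈ K, 0 < ⟪f, y0⟫ := by
    by_contra hcon
    push Not at hcon
    have hz : y0 = 0 := G.sep _ fun f hf => le_antisymm (hcon f hf) (hyn f hf)
    have h1 := I.dT p hp _ hp1
    change Dx K (T p) Q = _ at h1
    rw [hQe, hz, add_zero, Dx_smul_right hK hn hTp hTp (by positivity), Dx_self hK hn hTp,
      Dx_ray hK hn hp he.1 h0 zero_le_one] at h1
    linarith
  have hBd : Bd K y0 := ⟨hyn, hypos, ⟨f0, hf0, hy00⟩⟩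
  have hm0 := Mx_pos_of hK hn hTp hypos
  have key : ∀ t : ℝ, 0 ≤ t → ∃ α β : ℝ, 0 ≤ β ∧ T (p + t • e) = α • T p + β • y0 := by
    intro t ht
    rcases ht.eq_or_lt with h | hpos
    · exact ⟨1, 0, le_rfl, by simp [← h]⟩
    rcases lt_trichotomy t 1 with h | h | h
    · obtain ⟨s, c, hs, hc, he⟩ := ray_seg G I he h0 hp hpos h
      refine ⟨c * (1 + s * A⁻¹), c * s * A⁻¹, by positivity, ?_⟩
      rw [he]
      change c • (T p + s • Q) = _
      rw [hQe]
      module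
    · refine ⟨A⁻¹, A⁻¹, by positivity, ?_⟩
      rw [h]
      change Q = _
      rw [hQe]; module
    · obtain ⟨s, c, hs, hc, he⟩ := ray_seg G I he h0 hp one_pos h
      refine ⟨s⁻¹ * (c⁻¹ * A⁻¹ - 1), s⁻¹ * c⁻¹ * A⁻¹, by positivity, ?_⟩
      change Q = _ at he
      have h3 : T (p + t • e) = s⁻¹ • (c⁻¹ • Q - T p) := by
        rw [he, smul_smul, inv_mul_cancel₀ hc.ne', one_smul, add_sub_cancel_left, smul_smul,
          inv_mul_cancel₀ hs.ne', one_smul]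
      rw [h3, hQe]; module
  refine ⟨(m / Mx K y0 (T p)) • y0, ⟨nnC_smul (by positivity) hyn, ?_, ?_⟩, fun t ht => ?_⟩
  · obtain ⟨f, hf, h⟩ := hypos
    exact ⟨f, hf, by rw [real_inner_smul_right]; positivity⟩
  · exact ⟨f0, hf0, by rw [real_inner_smul_right, hy00, mul_zero]⟩
  · obtain ⟨α, β, hβ, h⟩ := key t ht
    have hpt := posC_add_smul ht hp he.1
    have hα : 0 < α := by
      have h1 := I.mapT _ hpt f0 hf0
      rw [h, inner_add_right, real_inner_smul_right, real_inner_smul_right, hy00, mul_zero,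
        add_zero] at h1
      exact pos_of_mul_pos_left h1 (hTp f0 hf0).le
    have h2 : T (p + t • e) = α • (T p + (β / α) • y0) := by
      rw [h, smul_add, smul_smul]; congr 2; field_simp
    have hk : 0 ≤ β / α := by positivity
    have h3 := I.dT p hp _ hpt
    rw [h2, Dx_smul_right hK hn hTp (posC_add_smul hk hTp hyn) hα,
      Dx_ray hK hn hTp hyn ⟨f0, hf0, hy00⟩ hk, Dx_ray hK hn hp he.1 h0 ht] at h3
    have h4 : β / α = t * (m / Mx K y0 (T p)) := by
      field_simp at h3 ⊢
      linarith
    exact ⟨α, hα, by rw [h2, h4, smul_smul]⟩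

lemma Ray.near (G : Good K) (I : Iso K T S) {e : V} (he : e ∈ nnC K) (hp : p ∈ posC K)
    (hR : Ray K T e p y) {δ : ℝ} (hδ : 0 < δ) :
    ∃ c : ℝ, 0 < c ∧ T (e + δ • p) = c • (y + δ • T p) := by
  have h1 : e + δ • p = δ • (p + δ⁻¹ • e) := by
    rw [smul_add, smul_smul, mul_inv_cancel₀ hδ.ne', one_smul, add_comm]
  obtain ⟨d, hd, h⟩ := I.ray G (posC_add_smul (inv_pos.mpr hδ).le hp he) hδ
  obtain ⟨c, hc, h'⟩ := hR.2 δ⁻¹ (inv_pos.mpr hδ).le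
  refine ⟨d * c * δ⁻¹, by positivity, ?_⟩
  rw [h1, h, h', smul_smul, mul_smul (d * c), smul_add δ⁻¹, smul_smul δ⁻¹, inv_mul_cancel₀ hδ.ne',
    one_smul, add_comm (T p)]

/-- Isometries transport Busemann functions of extreme rays. -/
lemma Ray.Bf_eq (G : Good K) (I : Iso K T S) {e : V} (he : Bd K e) (hp : p ∈ posC K)
    (hR : Ray K T e p y) (hx : x ∈ posC K) : Bf K e p x = Bf K y (T p) (T x) := by
  refine tendsto_nhds_unique (Bf_lim G.cpt G.ne he hp hx)
    ((Bf_lim G.cpt G.ne hR.1 (I.mapT p hp) (I.mapT x hx)).congr' ?_)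
  filter_upwards [self_mem_nhdsWithin] with δ (hδ : 0 < δ)
  obtain ⟨c, hc, h⟩ := hR.near G I he.1 hp hδ
  rw [← I.dT x hx _ (bd_add_mem he hp hδ), h,
    Dx_smul_right G.cpt G.ne (I.mapT x hx) (bd_add_mem hR.1 (I.mapT p hp) hδ) hc]

lemma BusZ.comp (G : Good K) (I : Iso K T S) {β : V → ℝ} {z : ℕ → V} (h : BusZ K β z) :
    BusZ K (fun x => β (T x)) (fun k => S (z k)) := by
  have e : ∀ k, β (T (S (z k))) = β (z k) := fun k => by
    obtain ⟨c, hc, h'⟩ := I.TS _ (h.2.1 k)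
    rw [h', h.ray G.cpt G.ne (h.2.1 k) hc]
  refine ⟨fun x hx => h.1 _ (I.mapT x hx), fun k => I.mapS _ (h.2.1 k), ?_, fun x hx => ?_⟩
  · exact h.2.2.1.congr fun k => (e k).symm
  · refine (h.2.2.2 _ (I.mapT x hx)).congr fun k => ?_
    simp only [e, I.dTS G hx (h.2.1 k)]

end HilbertIso

namespace HilbertIso

open Filter Topology
open scoped RealInnerProductSpace

variable {V : Type*} [NormedAddCommGroup V] [InnerProductSpace ℝ V]
variable {K : Set V} {x y z p q : V} {T S : V → V}

/-! ### The structure of horofunctions -/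

lemma Mx_tendsto (hK : IsCompact K) (hn : K.Nonempty) (hx : x ∈ posC K) {w : ℕ → V} {w0 : V}
    (hw : Tendsto w atTop (𝓝 w0)) :
    Tendsto (fun k => Mx K (w k) x) atTop (𝓝 (Mx K w0 x)) := by
  have hop := posC_isOpen hK
  -- both `±(w k - w0) + ε x` eventually lie in the open cone
  have hsmall : ∀ ε : ℝ, 0 < ε → ∀ᶠ k in atTop,
      ε • x + (w k - w0) ∈ posC K ∧ ε • x - (w k - w0) ∈ posC K := by
    intro ε hε
    have h0 : Tendsto (fun k => w k - w0) atTop (𝓝 0) := by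
      simpa using hw.sub_const w0
    have h1 : Tendsto (fun k => ε • x + (w k - w0)) atTop (𝓝 (ε • x)) := by
      simpa using h0.const_add (ε • x)
    have h2 : Tendsto (fun k => ε • x - (w k - w0)) atTop (𝓝 (ε • x)) := by
      simpa using h0.const_sub (ε • x)
    have hm := hop.mem_nhds (posC_smul hε hx)
    exact (h1.eventually hm).and (h2.eventually hm)
  rw [tendsto_order]
  constructor
  · intro a ha
    filter_upwards [hsmall ((Mx K w0 x - a) / 2) (by linarith)] with k hk
    have : Mx K w0 x ≤ Mx K (w k) x + (Mx K w0 x - a) / 2 := by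
      refine Mx_le hn hx fun f hf => ?_
      have h1 := le_Mx hK hn hx (w k) f hf
      have h2 := hk.1 f hf
      rw [inner_add_right, inner_sub_right, real_inner_smul_right] at h2
      linarith
    linarith
  · intro a ha
    filter_upwards [hsmall ((a - Mx K w0 x) / 2) (by linarith)] with k hk
    have : Mx K (w k) x ≤ Mx K w0 x + (a - Mx K w0 x) / 2 := by
      refine Mx_le hn hx fun f hf => ?_
      have h1 := le_Mx hK hn hx w0 f hf
      have h2 := hk.2 f hf
      rw [inner_sub_right, inner_sub_right, real_inner_smul_right] at h2
      linarith
    linarith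

/-- The data attached to a horofunction `β`: a boundary limit `zi` of a normalized sequence `w`
and the splitting `β = M(zi/·) N`. -/
structure BusS (K : Set V) (β : V → ℝ) (zi : V) (w : ℕ → V) (N : V → ℝ) : Prop where
  wpos : ∀ k, w k ∈ posC K
  lim : Tendsto w atTop (𝓝 zi)
  zn : zi ∈ nnC K
  zpos : ∃ f ∈ K, 0 < ⟪f, zi⟫
  bz : Tendsto (fun k => β (w k)) atTop (𝓝 0)
  bpos : ∀ x ∈ posC K, 0 < β x
  split : ∀ x ∈ posC K, β x = Mx K zi x * N x
  limN : ∀ x ∈ posC K, Tendsto (fun k => Mx K x (w k) * β (w k)) atTop (𝓝 (N x))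

lemma BusZ.struct [FiniteDimensional ℝ V] (G : Good K) {β : V → ℝ} {z : ℕ → V}
    (h : BusZ K β z) : ∃ zi w N, BusS K β zi w N ∧ ∀ k, ∃ c : ℝ, ∃ j, w k = c • z j := by
  have hK := G.cpt
  have hn := G.ne
  have hz0 : ∀ k, z k ≠ 0 := fun k h0 => by
    obtain ⟨f, hf⟩ := hn
    have := h.2.1 k f hf
    rw [h0, inner_zero_right] at this
    exact lt_irrefl _ this
  have hc : ∀ k, 0 < ‖z k‖⁻¹ := fun k => inv_pos.mpr (norm_pos_iff.mpr (hz0 k))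
  have hs : ∀ k, ‖z k‖⁻¹ • z k ∈ Metric.sphere (0 : V) 1 := fun k => by
    rw [mem_sphere_zero_iff_norm, norm_smul, norm_inv, norm_norm,
      inv_mul_cancel₀ (norm_ne_zero_iff.mpr (hz0 k))]
  obtain ⟨zi, hzi, φ, hφ, hlim⟩ := (isCompact_sphere (0 : V) 1).tendsto_subseq hs
  have hzn : zi ∈ nnC K := nnC_isClosed.mem_of_tendsto hlim
    (Eventually.of_forall fun k => posC_sub_nnC (posC_smul (hc _) (h.2.1 _)))
  have hzpos : ∃ f ∈ K, 0 < ⟪f, zi⟫ := by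
    by_contra hcon
    push Not at hcon
    have : zi = 0 := G.sep _ fun f hf => le_antisymm (hcon f hf) (hzn f hf)
    rw [this] at hzi
    simp at hzi
  have hβw : ∀ k, β (‖z k‖⁻¹ • z k) = β (z k) := fun k => h.ray hK hn (h.2.1 k) (hc k)
  refine ⟨zi, fun k => ‖z (φ k)‖⁻¹ • z (φ k), fun x => β x / Mx K zi x,
    ⟨fun k => posC_smul (hc _) (h.2.1 _), hlim, hzn, hzpos, ?_, h.1, ?_, ?_⟩, fun k => ⟨_, _, rfl⟩⟩
  · simp only [hβw]
    exact h.2.2.1.comp hφ.tendsto_atTop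
  · intro x hx
    have := Mx_pos_of hK hn hx hzpos
    field_simp
  · intro x hx
    have hM := Mx_pos_of hK hn hx hzpos
    have h1 := (h.2.2.2 x hx).comp hφ.tendsto_atTop
    have h2 := Mx_tendsto hK hn hx hlim
    refine (h1.div h2 hM.ne').congr fun k => ?_
    have hm : ‖z (φ k)‖⁻¹ • z (φ k) ∈ posC K := posC_smul (hc _) (h.2.1 _)
    have h3 := Mx_pos hK hn hm hx
    simp only [hβw, Function.comp]
    change Dx K x (z (φ k)) * β (z (φ k)) / Mx K (‖z (φ k)‖⁻¹ • z (φ k)) x = _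
    rw [← Dx_smul_right hK hn hx (h.2.1 _) (hc (φ k)), Dx, div_eq_iff h3.ne']
    ring

variable {β : V → ℝ} {zi : V} {w : ℕ → V} {N : V → ℝ}

lemma BusS.Npos (G : Good K) (B : BusS K β zi w N) (hx : x ∈ posC K) : 0 < N x := by
  have h1 := B.bpos x hx
  rw [B.split x hx] at h1
  exact pos_of_mul_pos_right h1 (Mx_pos_of G.cpt G.ne hx B.zpos).le

lemma BusS.N_le (G : Good K) (B : BusS K β zi w N) (hx : x ∈ posC K) (hy : y ∈ posC K) {l : ℝ}
    (hl : 0 ≤ l) (h : ∀ f ∈ K, ⟪f, x⟫ ≤ l * ⟪f, y⟫) : N x ≤ l * N y := by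
  refine le_of_tendsto_of_tendsto' (B.limN x hx) ((B.limN y hy).const_mul l) fun k => ?_
  have := Mx_tri' G.cpt G.ne hl (B.wpos k) h
  nlinarith [B.bpos _ (B.wpos k)]

/-- The factor `N` decays linearly towards the limit point `zi`. -/
lemma BusS.N_near (G : Good K) (B : BusS K β zi w N) (hp : p ∈ posC K) {δ : ℝ} (hδ : 0 < δ) :
    N (zi + δ • p) ≤ δ * N p := by
  have hK := G.cpt
  have hn := G.ne
  have hx : zi + δ • p ∈ posC K := by
    rw [add_comm]; exact posC_add_nn (posC_smul hδ hp) B.zn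
  refine le_of_forall_pos_le_add fun ε hε => ?_
  have hNp := B.Npos G hp
  set η := ε / N p
  have hη : 0 < η := by positivity
  have hlim : Tendsto (fun k => β (w k) + (δ + η) * (Mx K p (w k) * β (w k))) atTop
      (𝓝 (0 + (δ + η) * N p)) := B.bz.add ((B.limN p hp).const_mul _)
  have : N (zi + δ • p) ≤ 0 + (δ + η) * N p := by
    refine le_of_tendsto_of_tendsto (B.limN _ hx) hlim ?_
    have h1 : Tendsto (fun k => η • p + (w k - zi)) atTop (𝓝 (η • p)) := by
      have := (B.lim.sub_const zi).const_add (η • p)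
      simpa using this
    filter_upwards [h1.eventually ((posC_isOpen hK).mem_nhds (posC_smul hη hp))] with k hk
    have h2 : Mx K (zi + δ • p) (w k) ≤ 1 + (δ + η) * Mx K p (w k) := by
      refine Mx_le hn (B.wpos k) fun f hf => ?_
      have h3 := hk f hf
      have h4 := le_Mx hK hn (B.wpos k) p f hf
      simp only [inner_add_right, inner_sub_right, real_inner_smul_right] at h3 ⊢
      nlinarith
    have := B.bpos _ (B.wpos k)
    nlinarith
  have h5 : η * N p = ε := by simp only [η]; field_simp
  linarith

/-- If `b_{z,q}` decays linearly towards `u` then `z` is dominated by `u` and the functionals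
killing `z` kill `u`. -/
lemma Bf_dom (hK : IsCompact K) (hn : K.Nonempty) (hz : Bd K z) (hq : q ∈ posC K)
    (hp : p ∈ posC K) {u : V} (hu : u ∈ nnC K) {A : ℝ}
    (h : ∀ δ : ℝ, 0 < δ → δ ≤ 1 → Bf K z q (u + δ • p) ≤ A * δ) :
    (∃ l : ℝ, 0 < l ∧ ∀ f ∈ K, ⟪f, z⟫ ≤ l * ⟪f, u⟫) ∧ ∀ f ∈ ann K z, ⟪f, u⟫ = 0 := by
  have hFK := ann_compact (y := z) hK
  have hqF := posC_mono (ann_sub (y := z)) hq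
  have hpF := posC_mono (ann_sub (y := z)) hp
  have hmem : ∀ δ : ℝ, 0 < δ → u + δ • p ∈ posC K := fun δ hδ => by
    rw [add_comm]; exact posC_add_nn (posC_smul hδ hp) hu
  have hN := Mx_pos hFK hz.2.2 hpF hqF
  have hid : Tendsto (fun δ : ℝ => δ) (𝓝[>] 0) (𝓝 0) :=
    tendsto_nhdsWithin_of_tendsto_nhds tendsto_id
  have hev : ∀ᶠ δ : ℝ in 𝓝[>] 0, δ ≤ 1 := hid.eventually (Iic_mem_nhds one_pos)
  have hA : 0 < A := by
    have := h 1 one_pos le_rfl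
    have h2 := Bf_pos hK hn hz hq (hmem 1 one_pos)
    linarith
  constructor
  · refine ⟨A / Mx (ann K z) p q, by positivity, fun f hf => ?_⟩
    have hlim : Tendsto (fun δ : ℝ => A / Mx (ann K z) p q * ⟪f, u + δ • p⟫) (𝓝[>] 0)
        (𝓝 (A / Mx (ann K z) p q * ⟪f, u⟫)) := by
      have hc : Continuous fun δ : ℝ => A / Mx (ann K z) p q * ⟪f, u + δ • p⟫ := by fun_prop
      have := hc.tendsto 0
      rw [zero_smul, add_zero] at this
      exact tendsto_nhdsWithin_of_tendsto_nhds this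
    refine ge_of_tendsto hlim ?_
    filter_upwards [self_mem_nhdsWithin, hev] with δ (hδ : 0 < δ) hδ1
    have h1 := h δ hδ hδ1
    have hm := hmem δ hδ
    have h2 : δ * Mx (ann K z) p q ≤ Mx (ann K z) (u + δ • p) q := by
      rw [← Mx_smul_left hFK hz.2.2 hqF hδ.le]
      refine Mx_le hz.2.2 hqF fun g hg => ?_
      have := le_Mx hFK hz.2.2 hqF (u + δ • p) g hg
      rw [inner_add_right] at this
      linarith [hu g hg.1]
    have h3 := Mx_pos_of hK hn hm hz.2.1
    have h4 : Mx K z (u + δ • p) ≤ A / Mx (ann K z) p q := by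
      rw [le_div_iff₀ hN]
      unfold Bf at h1
      have : Mx K z (u + δ • p) * Mx (ann K z) p q * δ ≤ A * δ := by nlinarith
      exact le_of_mul_le_mul_right this hδ
    have h5 := le_Mx hK hn hm z f hf
    nlinarith [hm f hf]
  · intro f hf
    refine le_antisymm ?_ (hu f hf.1)
    have hc0 := Mx_pos_of hK hn (hmem 1 one_pos) hz.2.1
    have hlim : Tendsto (fun δ : ℝ => A / Mx K z (u + (1 : ℝ) • p) * ⟪f, q⟫ * δ) (𝓝[>] 0)
        (𝓝 0) := by
      have := hid.const_mul (A / Mx K z (u + (1 : ℝ) • p) * ⟪f, q⟫)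
      rwa [mul_zero] at this
    refine ge_of_tendsto hlim ?_
    filter_upwards [self_mem_nhdsWithin, hev] with δ (hδ : 0 < δ) hδ1
    have h1 := h δ hδ hδ1
    have hm := hmem δ hδ
    have h2 : Mx K z (u + (1 : ℝ) • p) ≤ Mx K z (u + δ • p) := by
      have : u + (1 : ℝ) • p = (u + δ • p) + (1 - δ) • p := by module
      rw [this]
      exact Mx_anti hK hn hz.1 hm (nnC_smul (by linarith) (posC_sub_nnC hp))
    have h3 := Mx_pos hFK hz.2.2 (posC_mono ann_sub hm) hqF
    have h4 : Mx (ann K z) (u + δ • p) q ≤ A / Mx K z (u + (1 : ℝ) • p) * δ := by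
      rw [div_mul_eq_mul_div, le_div_iff₀ hc0]
      unfold Bf at h1
      nlinarith
    have h5 := le_Mx hFK hz.2.2 hqF (u + δ • p) f hf
    rw [inner_add_right, real_inner_smul_right] at h5
    have := hqF f hf
    have := hpF f hf
    nlinarith

lemma BusS.near_le (G : Good K) (B : BusS K β zi w N) (hp : p ∈ posC K) {δ : ℝ} (hδ : 0 < δ) :
    β (zi + δ • p) ≤ N p * δ := by
  have hm : zi + δ • p ∈ posC K := by
    rw [add_comm]; exact posC_add_nn (posC_smul hδ hp) B.zn
  rw [B.split _ hm]
  have h1 := B.N_near G hp hδ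
  have h2 : Mx K zi (zi + δ • p) ≤ 1 := Mx_le G.ne hm fun f hf => by
    rw [inner_add_right, real_inner_smul_right]; nlinarith [hp f hf]
  have h3 := Mx_nonneg G.cpt G.ne B.zn hm
  have := B.Npos G hm
  nlinarith

lemma BusS.dom (G : Good K) (B : BusS K β zi w N) (hz : Bd K z) (hq : q ∈ posC K) {C : ℝ}
    (hC : 0 < C) (h : ∀ x ∈ posC K, Bf K z q x ≤ C * β x) :
    (∃ l : ℝ, 0 < l ∧ ∀ f ∈ K, ⟪f, z⟫ ≤ l * ⟪f, zi⟫) ∧ ∀ f ∈ ann K z, ⟪f, zi⟫ = 0 := by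
  refine Bf_dom (A := C * N q) G.cpt G.ne hz hq hq B.zn fun δ hδ _ => ?_
  have hm : zi + δ • q ∈ posC K := by
    rw [add_comm]; exact posC_add_nn (posC_smul hδ hq) B.zn
  have := B.near_le G hq hδ
  have := h _ hm
  nlinarith

lemma Bf_dom_Bf (hK : IsCompact K) (hn : K.Nonempty) (hz : Bd K z) (hq : q ∈ posC K)
    (hy : Bd K y) (hp : p ∈ posC K) {C : ℝ} (hC : 0 < C)
    (h : ∀ x ∈ posC K, Bf K z q x ≤ C * Bf K y p x) :
    (∃ l : ℝ, 0 < l ∧ ∀ f ∈ K, ⟪f, z⟫ ≤ l * ⟪f, y⟫) ∧ ∀ f ∈ ann K z, ⟪f, y⟫ = 0 := by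
  refine Bf_dom (A := C) hK hn hz hq hp hy.1 fun δ hδ _ => ?_
  have := h _ (bd_add_mem hy hp hδ)
  have := Bf_ray_le hK hn hy hp hδ
  nlinarith

lemma ann_of_le (hy : y ∈ nnC K) {l : ℝ} (h : ∀ f ∈ K, ⟪f, y⟫ ≤ l * ⟪f, z⟫) :
    ann K z ⊆ ann K y := fun f hf => ⟨hf.1, le_antisymm (by
      have := h f hf.1; rwa [hf.2, mul_zero] at this) (hy f hf.1)⟩

/-- Busemann functions with comparable endpoints are comparable. -/
lemma Bf_le (hK : IsCompact K) (hn : K.Nonempty) (hz : Bd K z) (hp : p ∈ posC K)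
    (hq : q ∈ posC K) (hx : x ∈ posC K) {l : ℝ} (hl : 0 ≤ l)
    (h : ∀ f ∈ K, ⟪f, y⟫ ≤ l * ⟪f, z⟫) (ha : ann K y = ann K z) :
    Bf K y p x ≤ l * Mx (ann K y) q p * Bf K z q x := by
  have hFK := ann_compact (y := z) hK
  unfold Bf
  rw [ha]
  have h1 := Mx_tri' hK hn hl hx h
  have h2 := Mx_tri hFK hz.2.2 (nnC_mono ann_sub (posC_sub_nnC hx)) (posC_mono ann_sub hq)
    (posC_mono ann_sub hp)
  have h3 := Mx_nonneg hK hn hz.1 hx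
  have h4 := Mx_nonneg hFK hz.2.2 (nnC_mono ann_sub (posC_sub_nnC hx)) (posC_mono ann_sub hp)
  calc Mx K y x * Mx (ann K z) x p ≤ (l * Mx K z x) * (Mx (ann K z) x q * Mx (ann K z) q p) :=
        mul_le_mul h1 h2 h4 (by positivity)
    _ = _ := by ring

/-- The best constant in the comparison of Busemann functions with comparable endpoints. -/
lemma Bf_const (hK : IsCompact K) (hn : K.Nonempty) (hy : Bd K y) (hz : Bd K z) (hp : p ∈ posC K)
    (hq : q ∈ posC K) {c : ℝ} (ha : ann K y = ann K z)
    (h : ∀ x ∈ posC K, Bf K y p x ≤ c * Bf K z q x) :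
    Mx K y z * Mx (ann K y) q p ≤ c := by
  have hFK := ann_compact (y := y) hK
  have hqF := posC_mono (ann_sub (y := y)) hq
  have hpF := posC_mono (ann_sub (y := y)) hp
  have hN := Mx_pos hFK hy.2.2 hqF hpF
  have hc : 0 < c := by
    have h1 := h p hp
    have h2 := Bf_pos hK hn hy hp hp
    have h3 := Bf_pos hK hn hz hq hp
    by_contra hcon
    nlinarith
  -- evaluate at `z + δ q`
  have key : ∀ δ : ℝ, 0 < δ → Mx K y (z + δ • q) * Mx (ann K y) q p ≤ c := by
    intro δ hδ
    have hm := bd_add_mem hz hq hδ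
    have h1 := h _ hm
    have h2 := Bf_ray_le hK hn hz hq hδ
    have h3 : Mx (ann K y) (z + δ • q) p = δ * Mx (ann K y) q p := by
      rw [← Mx_smul_left hFK hy.2.2 hpF hδ.le]
      refine Mx_congr (fun f hf => ?_) fun _ _ => rfl
      rw [ha] at hf
      rw [inner_add_right, hf.2, zero_add]
    unfold Bf at h1 h2
    rw [h3] at h1
    have : Mx K y (z + δ • q) * Mx (ann K y) q p * δ ≤ c * δ := by nlinarith
    exact le_of_mul_le_mul_right this hδ
  rw [← le_div_iff₀ hN]
  refine Mx_le_gen hz.2.1 fun f hf => ?_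
  have hlim : Tendsto (fun δ : ℝ => c / Mx (ann K y) q p * ⟪f, z + δ • q⟫) (𝓝[>] 0)
      (𝓝 (c / Mx (ann K y) q p * ⟪f, z⟫)) := by
    have hc : Continuous fun δ : ℝ => c / Mx (ann K y) q p * ⟪f, z + δ • q⟫ := by fun_prop
    have := hc.tendsto 0
    rw [zero_smul, add_zero] at this
    exact tendsto_nhdsWithin_of_tendsto_nhds this
  refine ge_of_tendsto hlim ?_
  filter_upwards [self_mem_nhdsWithin] with δ (hδ : 0 < δ)
  have hm := bd_add_mem hz hq hδ
  have h1 := key δ hδ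
  rw [← le_div_iff₀ hN] at h1
  have := le_Mx hK hn hm y f hf
  nlinarith [hm f hf]

/-- On the span of `K'` the norm of an element of the cone is controlled by one functional. -/
lemma span_bound [FiniteDimensional ℝ V] (K' : Set V) :
    ∃ f0 : V, f0 ∈ Submodule.span ℝ K' ∧ (∀ u ∈ nnC K', 0 ≤ ⟪f0, u⟫) ∧
      (∀ u v : V, (∀ f ∈ K', ⟪f, u⟫ ≤ ⟪f, v⟫) → ⟪f0, u⟫ ≤ ⟪f0, v⟫) ∧
      ∃ C : ℝ, 0 < C ∧ ∀ u ∈ Submodule.span ℝ K', u ∈ nnC K' → ‖u‖ ≤ C * ⟪f0, u⟫ := by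
  obtain ⟨b, hb, hspan, hli⟩ := exists_linearIndependent ℝ K'
  have : Finite b := hli.finite
  have := Fintype.ofFinite b
  set L : Submodule.span ℝ K' →ₗ[ℝ] (b → ℝ) :=
    LinearMap.pi fun f => (innerₛₗ ℝ (f : V)).comp (Submodule.span ℝ K').subtype with hL
  have hLa : ∀ u f, L u f = ⟪(f : V), (u : V)⟫ := fun u f => rfl
  have hker : LinearMap.ker L = ⊥ := by
    rw [LinearMap.ker_eq_bot']
    intro u hu
    have h1 : ∀ f ∈ b, ⟪f, (u : V)⟫ = 0 := fun f hf => congrFun hu ⟨f, hf⟩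
    have h2 : ∀ f ∈ Submodule.span ℝ b, ⟪f, (u : V)⟫ = 0 := by
      intro f hf
      induction hf using Submodule.span_induction with
      | mem f hf => exact h1 f hf
      | zero => simp
      | add f g _ _ hf hg => rw [inner_add_left, hf, hg, add_zero]
      | smul c f _ hf => rw [real_inner_smul_left, hf, mul_zero]
    have h3 := h2 u (by rw [hspan]; exact u.2)
    exact Subtype.ext (inner_self_eq_zero.mp h3)
  obtain ⟨C, hC, hanti⟩ := L.exists_antilipschitzWith hker
  have hfu : ∀ u : V, ⟪∑ f : b, (f : V), u⟫ = ∑ f : b, ⟪(f : V), u⟫ := fun u => sum_inner _ _ _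
  refine ⟨∑ f : b, (f : V), Submodule.sum_mem _ fun f _ => Submodule.subset_span (hb f.2), ?_, ?_,
    C, by exact_mod_cast hC, ?_⟩
  · intro u hu
    rw [hfu]
    exact Finset.sum_nonneg fun f _ => hu f (hb f.2)
  · intro u v h
    rw [hfu, hfu]
    exact Finset.sum_le_sum fun f _ => h f (hb f.2)
  · intro u hu hun
    have h1 := hanti.le_mul_dist ⟨u, hu⟩ 0
    rw [map_zero, dist_zero_right, dist_zero_right] at h1
    refine h1.trans (mul_le_mul_of_nonneg_left ?_ (by positivity))
    rw [hfu]
    have hnn : 0 ≤ ∑ f : b, ⟪(f : V), u⟫ := Finset.sum_nonneg fun f _ => hun f (hb f.2)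
    refine (pi_norm_le_iff_of_nonneg hnn).mpr fun f => ?_
    rw [hLa, Real.norm_of_nonneg (hun f (hb f.2))]
    exact Finset.single_le_sum (f := fun f : b => ⟪(f : V), u⟫) (fun g _ => hun g (hb g.2))
      (Finset.mem_univ f)

/-- A horofunction comparable with the Busemann function of an extreme direction `e` is itself
a Busemann function in the direction `e`. -/
lemma BusS.onto [FiniteDimensional ℝ V] (G : Good K) (B : BusS K β zi w N) {e : V}
    (he : ExtM K e) (h0 : (ann K e).Nonempty) (hp : p ∈ posC K) {C : ℝ} (hC : 0 < C)
    (h1 : ∀ x ∈ posC K, β x ≤ C * Bf K e p x) (h2 : ∀ x ∈ posC K, Bf K e p x ≤ C * β x) :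
    ∃ q ∈ posC K, ∃ k : ℝ, 0 < k ∧ ∀ x ∈ posC K, β x = k * Bf K e q x := by
  have hK := G.cpt
  have hn := G.ne
  have hBd : Bd K e := ⟨he.1, he.2.1, h0⟩
  have hFK := ann_compact (y := e) hK
  have hNp := B.Npos G hp
  -- the limit point is a multiple of `e`
  obtain ⟨c, hc, hzi⟩ : ∃ c : ℝ, 0 < c ∧ zi = c • e := by
    set l := C / N p
    have hl : 0 < l := by positivity
    have hle : ∀ f ∈ K, ⟪f, zi⟫ ≤ l * ⟪f, e⟫ := by
      intro f hf
      have hlim : Tendsto (fun δ : ℝ => l * ⟪f, e + δ • p⟫) (𝓝[>] 0) (𝓝 (l * ⟪f, e⟫)) := by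
        have hc : Continuous fun δ : ℝ => l * ⟪f, e + δ • p⟫ := by fun_prop
        have := hc.tendsto 0
        rw [zero_smul, add_zero] at this
        exact tendsto_nhdsWithin_of_tendsto_nhds this
      refine ge_of_tendsto hlim ?_
      filter_upwards [self_mem_nhdsWithin] with δ (hδ : 0 < δ)
      have hm := bd_add_mem hBd hp hδ
      have h3 := h1 _ hm
      have h4 := Bf_ray_le hK hn hBd hp hδ
      rw [B.split _ hm] at h3
      have h5 : δ * N p ≤ N (e + δ • p) := by
        have := B.N_le G hp hm (l := δ⁻¹) (by positivity) fun g hg => by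
          rw [inner_add_right, real_inner_smul_right, mul_add, ← mul_assoc,
            inv_mul_cancel₀ hδ.ne', one_mul]
          have : 0 ≤ δ⁻¹ * ⟪g, e⟫ := mul_nonneg (by positivity) (he.1 g hg)
          linarith
        rw [inv_mul_eq_div, le_div_iff₀ hδ] at this
        linarith
      have h6 := Mx_nonneg hK hn B.zn hm
      have h7 : Mx K zi (e + δ • p) ≤ l := by
        rw [le_div_iff₀ hNp]
        have : Mx K zi (e + δ • p) * N p * δ ≤ C * δ := by nlinarith
        exact le_of_mul_le_mul_right this hδ
      have := le_Mx hK hn hm zi f hf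
      nlinarith [hm f hf]
    obtain ⟨a, ha⟩ := he.2.2 (l⁻¹ • zi) (nnC_smul (by positivity) B.zn) fun f hf => by
      rw [inner_sub_right, real_inner_smul_right, inv_mul_eq_div, sub_nonneg, div_le_iff₀ hl]
      linarith [hle f hf]
    have hz : zi = (l * a) • e := G.eq_smul fun f hf => by
      have := ha f hf
      rw [real_inner_smul_right, inv_mul_eq_div, div_eq_iff hl.ne'] at this
      rw [this]; ring
    refine ⟨l * a, ?_, hz⟩
    obtain ⟨f, hf, hfp⟩ := B.zpos
    rw [hz, real_inner_smul_right] at hfp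
    exact pos_of_mul_pos_left hfp (he.1 f hf)
  have hNsplit : ∀ x ∈ posC K, β x = c * Mx K e x * N x := fun x hx => by
    rw [B.split x hx, hzi, Mx_smul_left hK hn hx hc.le]
  -- `N` is dominated by the gauge of the face of functionals killing `e`
  have hNle : ∀ x ∈ posC K, ∀ q ∈ posC K, N x ≤ Mx (ann K e) x q * N q := by
    intro x hx q hq
    have hNq := B.Npos G hq
    rw [← div_le_iff₀ hNq]
    refine le_of_forall_gt_imp_ge_of_dense fun l hl => ?_
    have hl0 : 0 < l := (Mx_pos hFK h0 (posC_mono ann_sub hx) (posC_mono ann_sub hq)).trans hl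
    obtain ⟨t, ht, hlt⟩ := absorb_le hK he.1 h0 hq hl
    have h3 := hlt t le_rfl
    have hδ : 0 < c * l / t := by positivity
    have hm : zi + (c * l / t) • q ∈ posC K := by
      rw [add_comm]; exact posC_add_nn (posC_smul hδ hq) B.zn
    have h4 := B.N_le G hx hm (l := t / c) (by positivity) fun f hf => by
      refine (h3 f hf).le.trans (le_of_eq ?_)
      rw [hzi]
      simp only [inner_add_right, real_inner_smul_right]
      field_simp
      ring
    have h5 := B.N_near G hq hδ
    rw [div_le_iff₀ hNq]
    calc N x ≤ t / c * N (zi + (c * l / t) • q) := h4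
      _ ≤ t / c * (c * l / t * N q) := mul_le_mul_of_nonneg_left h5 (by positivity)
      _ = l * N q := by field_simp
  have hNge : ∀ x ∈ posC K, Mx (ann K e) x p ≤ C * c * N x := fun x hx => by
    have h3 := h2 x hx
    rw [hNsplit x hx] at h3
    unfold Bf at h3
    have := Mx_pos_of hK hn hx he.2.1
    have : Mx K e x * Mx (ann K e) x p ≤ Mx K e x * (C * c * N x) := by linarith
    exact le_of_mul_le_mul_left this ‹_›
  -- the normalized points `w k / N (w k)`, projected to the span of the face, stay bounded
  obtain ⟨f0, hf0, -, hf0m, A, hA, hbound⟩ := span_bound (ann K e)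
  set W := Submodule.span ℝ (ann K e)
  set r : ℕ → V := fun k => (N (w k))⁻¹ • w k
  have hNw : ∀ k, 0 < N (w k) := fun k => B.Npos G (B.wpos k)
  have hproj : ∀ k, ∀ f ∈ W, ⟪f, (W.starProjection (r k))⟫ = ⟪f, r k⟫ := fun k f hf => by
    have h3 : ⟪r k - W.starProjection (r k), f⟫ = 0 :=
      W.starProjection_inner_eq_zero (r k) f hf
    rw [real_inner_comm, inner_sub_right] at h3
    linarith
  have hrF : ∀ k, ∀ f ∈ ann K e, ⟪f, r k⟫ ≤ ⟪f, (C * c) • p⟫ := fun k f hf => by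
    have h3 := le_Mx hFK h0 (posC_mono ann_sub hp) (w k) f hf
    have h4 := hNge _ (B.wpos k)
    have h5 := hp f hf.1
    simp only [r]
    rw [real_inner_smul_right, real_inner_smul_right, inv_mul_eq_div, div_le_iff₀ (hNw k)]
    nlinarith
  have hbdd : ∀ k, W.starProjection (r k) ∈ Metric.closedBall (0 : V) (A * ⟪f0, (C * c) • p⟫) := by
    intro k
    rw [mem_closedBall_zero_iff]
    refine (hbound _ (W.starProjection_apply_mem _) fun f hf => ?_).trans ?_
    · rw [hproj k f (Submodule.subset_span hf)]
      simp only [r]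
      rw [real_inner_smul_right]
      exact mul_nonneg (inv_pos.mpr (hNw k)).le (B.wpos k f hf.1).le
    · rw [hproj k f0 hf0]
      exact mul_le_mul_of_nonneg_left (hf0m _ _ (hrF k)) hA.le
  obtain ⟨qt, -, φ, hφ, hlim⟩ := (isCompact_closedBall (0 : V) _).tendsto_subseq hbdd
  obtain ⟨f1, hf1, hf1p⟩ := B.zpos
  have hqt : ∀ x ∈ posC K, ∀ f ∈ ann K e, ⟪f, x⟫ ≤ N x * ⟪f, qt⟫ := by
    intro x hx f hf
    have l1 : Tendsto (fun k => ⟪f, W.starProjection (r (φ k))⟫) atTop (𝓝 ⟪f, qt⟫) :=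
      tendsto_const_nhds.inner hlim
    have l2 := (B.limN x hx).comp hφ.tendsto_atTop
    have l3 : Tendsto (fun k => ⟪f1, w (φ k)⟫ / ⟪f1, zi⟫) atTop (𝓝 1) := by
      have := (tendsto_const_nhds.inner (B.lim.comp hφ.tendsto_atTop) (x := f1)).div_const ⟪f1, zi⟫
      rwa [div_self hf1p.ne'] at this
    have l4 := (l2.mul l3).mul l1
    rw [mul_one] at l4
    refine ge_of_tendsto' l4 fun k => ?_
    set j := φ k
    rw [hproj j f (Submodule.subset_span hf)]
    have hwj := B.wpos j
    have h3 := le_Mx hK hn hwj x f hf.1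
    have h4 := le_Mx hK hn hwj zi f1 hf1
    have h5 := Mx_pos hK hn hx hwj
    simp only [Function.comp, r]
    rw [B.split _ hwj, real_inner_smul_right]
    have h6 := hNw j
    have h7 := hwj f hf.1
    change _ ≤ Mx K x (w j) * (Mx K zi (w j) * N (w j)) * (⟪f1, w j⟫ / ⟪f1, zi⟫) *
      ((N (w j))⁻¹ * ⟪f, w j⟫)
    have h8 : Mx K x (w j) * (Mx K zi (w j) * N (w j)) * (⟪f1, w j⟫ / ⟪f1, zi⟫) *
      ((N (w j))⁻¹ * ⟪f, w j⟫) = (Mx K x (w j) * ⟪f, w j⟫) *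
        (Mx K zi (w j) * ⟪f1, w j⟫ / ⟪f1, zi⟫) := by field_simp
    rw [h8]
    have h9 : 1 ≤ Mx K zi (w j) * ⟪f1, w j⟫ / ⟪f1, zi⟫ := by rwa [one_le_div hf1p]
    have : 0 < Mx K x (w j) * ⟪f, w j⟫ := by positivity
    nlinarith
  have hqtF : ∀ f ∈ ann K e, 0 < ⟪f, qt⟫ := fun f hf => by
    have h3 := hqt p hp f hf
    have h4 := hp f hf.1
    exact pos_of_mul_pos_right (lt_of_lt_of_le h4 h3) hNp.le
  obtain ⟨t, ht, hq⟩ := absorb hK he.1 hqtF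
  specialize hq t le_rfl
  have hqF : ∀ f ∈ ann K e, ⟪f, qt + t • e⟫ = ⟪f, qt⟫ := fun f hf => by
    rw [inner_add_right, real_inner_smul_right, hf.2, mul_zero, add_zero]
  have hNq : N (qt + t • e) ≤ 1 := by
    refine le_of_forall_pos_le_add fun ε hε => ?_
    have l1 : Tendsto (fun k => (1 + ε) • W.starProjection (r (φ k)) - qt) atTop
        (𝓝 ((1 + ε) • qt - qt)) := (hlim.const_smul (1 + ε)).sub_const qt
    have hop : (1 + ε) • qt - qt ∈ posC (ann K e) := by
      have : (1 + ε) • qt - qt = ε • qt := by module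
      rw [this]
      exact posC_smul hε hqtF
    obtain ⟨k, hk⟩ := (l1.eventually ((posC_isOpen hFK).mem_nhds hop)).exists
    have hrk : r (φ k) ∈ posC K := posC_smul (inv_pos.mpr (hNw _)) (B.wpos _)
    have h3 := hNle _ hq _ hrk
    have h4 : Mx (ann K e) (qt + t • e) (r (φ k)) ≤ 1 + ε := by
      refine Mx_le h0 (posC_mono ann_sub hrk) fun f hf => ?_
      have := hk f hf
      rw [inner_sub_right, real_inner_smul_right, hproj _ f (Submodule.subset_span hf)] at this
      rw [hqF f hf]
      linarith
    have h5 : N (r (φ k)) ≤ 1 := by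
      have := B.N_le G hrk (B.wpos (φ k)) (l := (N (w (φ k)))⁻¹) (inv_pos.mpr (hNw _)).le
        fun f hf => by simp only [r]; rw [real_inner_smul_right]
      rwa [inv_mul_cancel₀ (hNw _).ne'] at this
    have h6 := B.Npos G hrk
    have h7 := Mx_pos hFK h0 (posC_mono ann_sub hq) (posC_mono ann_sub hrk)
    nlinarith
  refine ⟨qt + t • e, hq, c, hc, fun x hx => ?_⟩
  have hge : Mx (ann K e) x (qt + t • e) ≤ N x := Mx_le h0 (posC_mono ann_sub hq) fun f hf => by
    rw [hqF f hf]; exact hqt x hx f hf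
  have hle : N x ≤ Mx (ann K e) x (qt + t • e) := by
    have h3 := hNle x hx _ hq
    have h4 := Mx_pos hFK h0 (posC_mono ann_sub hx) (posC_mono ann_sub hq)
    have h5 := B.Npos G hq
    nlinarith
  rw [hNsplit x hx, Bf, le_antisymm hle hge]
  ring

end HilbertIso

namespace HilbertIso

open Filter Topology
open scoped RealInnerProductSpace

variable {V : Type*} [NormedAddCommGroup V] [InnerProductSpace ℝ V]
variable {K : Set V} {x y z p q : V}

/-! ### Exposed rays -/

/-- `v` spans an exposed ray of the closed cone, modulo the common kernel of `K`. -/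
def Expo (K : Set V) (v : V) : Prop :=
  v ∈ nnC K ∧ (∃ f ∈ K, 0 < ⟪f, v⟫) ∧ ∃ h : V, (∀ u ∈ nnC K, 0 ≤ ⟪h, u⟫) ∧ ⟪h, v⟫ = 0 ∧
    ∀ u ∈ nnC K, ⟪h, u⟫ = 0 → ∃ l : ℝ, ∀ f ∈ K, ⟪f, u⟫ = l * ⟪f, v⟫

lemma Expo.ext {v : V} (h : Expo K v) : ExtM K v := by
  obtain ⟨h1, h2, g, hg, hg0, hu⟩ := h
  refine ⟨h1, h2, fun u hu1 hu2 => hu u hu1 ?_⟩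
  have a := hg u hu1
  have b := hg _ hu2
  rw [inner_sub_right] at b
  linarith

lemma span_inner_eq {u u' : V} (h : ∀ f ∈ K, ⟪f, u⟫ = ⟪f, u'⟫) :
    ∀ f ∈ Submodule.span ℝ K, ⟪f, u⟫ = ⟪f, u'⟫ := by
  intro f hf
  induction hf using Submodule.span_induction with
  | mem f hf => exact h f hf
  | zero => simp
  | add f g _ _ hf hg => rw [inner_add_left, inner_add_left, hf, hg]
  | smul c f _ hf => rw [real_inner_smul_left, real_inner_smul_left, hf]

/-- A farthest point argument: maximizing `‖u‖² + 2R⟪g,u⟫` over a compact base of the cone yields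
an exposed ray on which `g` does not vanish. -/
lemma expo_detect [FiniteDimensional ℝ V] (hne : (posC K).Nonempty) (hK : IsCompact K) {g : V}
    (hg : g ∈ Submodule.span ℝ K) (h : ∀ v, Expo K v → ⟪g, v⟫ = 0) : g = 0 := by
  by_contra hg0
  set W := Submodule.span ℝ K
  obtain ⟨f0, hf0, hf0n, hf0m, C, hC, hbound⟩ := span_bound K
  have hproj : ∀ u : V, ∀ f ∈ W, ⟪f, W.starProjection u⟫ = ⟪f, u⟫ := fun u f hf => by
    have h3 : ⟪u - W.starProjection u, f⟫ = 0 := W.starProjection_inner_eq_zero u f hf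
    rw [real_inner_comm, inner_sub_right] at h3
    linarith
  have hprojn : ∀ u ∈ nnC K, W.starProjection u ∈ nnC K := fun u hu f hf => by
    rw [hproj u f (Submodule.subset_span hf)]; exact hu f hf
  have hf0z : ∀ u ∈ W, u ∈ nnC K → u ≠ 0 → 0 < ⟪f0, u⟫ := fun u hu hun h0 => by
    have h1 := hbound u hu hun
    have h2 := norm_pos_iff.mpr h0
    exact pos_of_mul_pos_right (lt_of_lt_of_le h2 h1) hC.le
  obtain ⟨u1, hu1, hgu1⟩ : ∃ u ∈ nnC K, ⟪g, u⟫ ≠ 0 := by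
    obtain ⟨p, hp⟩ := hne
    by_cases hgp : ⟪g, p⟫ = 0
    · obtain ⟨t, ht, hm⟩ := posC_isOpen_dir hK hp g
      refine ⟨_, posC_sub_nnC hm, ?_⟩
      rw [inner_add_right, real_inner_smul_right, hgp, zero_add]
      exact mul_ne_zero ht.ne' (inner_self_ne_zero.mpr hg0)
    · exact ⟨p, posC_sub_nnC hp, hgp⟩
  obtain ⟨g', hg', hgv, hgu⟩ : ∃ g' ∈ W, (∀ v, Expo K v → ⟪g', v⟫ = 0) ∧ 0 < ⟪g', u1⟫ := by
    rcases lt_or_gt_of_ne hgu1 with hlt | hgt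
    · exact ⟨-g, W.neg_mem hg, fun v hv => by rw [inner_neg_left, h v hv, neg_zero], by
        rw [inner_neg_left]; linarith⟩
    · exact ⟨g, hg, h, hgt⟩
  obtain ⟨u0, hu0W, hu0n, hu01, hu0g⟩ : ∃ u ∈ W, u ∈ nnC K ∧ ⟪f0, u⟫ = 1 ∧ 0 < ⟪g', u⟫ := by
    have hmem := W.starProjection_apply_mem u1
    have hgp := hproj u1 g' hg'
    have hpos := hf0z _ hmem (hprojn _ hu1) (fun h0 => by
      rw [h0, inner_zero_right] at hgp; linarith)
    refine ⟨(⟪f0, W.starProjection u1⟫)⁻¹ • W.starProjection u1, W.smul_mem _ hmem,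
      nnC_smul (by positivity) (hprojn _ hu1), ?_, ?_⟩
    · rw [real_inner_smul_right, inv_mul_cancel₀ hpos.ne']
    · rw [real_inner_smul_right, hgp]; positivity
  set B : Set V := {u | u ∈ W ∧ u ∈ nnC K ∧ ⟪f0, u⟫ = 1}
  have hBc : IsCompact B := by
    refine Metric.isCompact_of_isClosed_isBounded ?_ ?_
    · exact (Submodule.closed_of_finiteDimensional W).inter (nnC_isClosed.inter
        (isClosed_eq (by fun_prop) continuous_const))
    · refine (Metric.isBounded_closedBall (x := (0 : V)) (r := C)).subset fun u hu => ?_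
      rw [mem_closedBall_zero_iff]
      have := hbound u hu.1 hu.2.1
      rwa [hu.2.2, mul_one] at this
  set R : ℝ := C ^ 2 / ⟪g', u0⟫
  have hR : 0 < R := by positivity
  obtain ⟨v, hvB, hmax⟩ := hBc.exists_isMaxOn ⟨u0, hu0W, hu0n, hu01⟩
    (f := fun u : V => ⟪u, u⟫ + 2 * R * ⟪g', u⟫) (by fun_prop)
  have hvC : ⟪v, v⟫ ≤ C ^ 2 := by
    have := hbound v hvB.1 hvB.2.1
    rw [hvB.2.2, mul_one] at this
    rw [real_inner_self_eq_norm_sq]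
    have := norm_nonneg v
    nlinarith
  have hgvpos : 0 < ⟪g', v⟫ := by
    have h1 := hmax (⟨hu0W, hu0n, hu01⟩ : u0 ∈ B)
    simp only [mem_ofPred_eq] at h1
    have h2 : R * ⟪g', u0⟫ = C ^ 2 := by simp only [R]; field_simp
    have h3 : 0 ≤ ⟪u0, u0⟫ := real_inner_self_nonneg
    have h4 : 0 < C ^ 2 := by positivity
    have h5 : 0 < 2 * R * ⟪g', v⟫ := by nlinarith
    exact pos_of_mul_pos_right h5 (by positivity)
  have hstrict : ∀ u ∈ B, ⟪u - v, u - v⟫ ≤ 2 * (⟪v + R • g', v⟫ - ⟪v + R • g', u⟫) := by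
    intro u hu
    have h1 := hmax hu
    simp only [mem_ofPred_eq] at h1
    simp only [inner_sub_left, inner_sub_right, inner_add_left, real_inner_smul_left]
    rw [real_inner_comm v u]
    linarith
  set hh : V := ⟪v + R • g', v⟫ • f0 - (v + R • g')
  have hhW : hh ∈ W := W.sub_mem (W.smul_mem _ hf0) (W.add_mem hvB.1 (W.smul_mem _ hg'))
  have hhB : ∀ u ∈ B, ⟪u - v, u - v⟫ ≤ 2 * ⟪hh, u⟫ := fun u hu => by
    have e : ⟪hh, u⟫ = ⟪v + R • g', v⟫ - ⟪v + R • g', u⟫ := by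
      simp only [hh]
      rw [inner_sub_left, real_inner_smul_left, hu.2.2, mul_one]
    rw [e]
    exact hstrict u hu
  have hsplit : ∀ u ∈ nnC K, 0 ≤ ⟪hh, u⟫ ∧ (⟪hh, u⟫ = 0 → ∃ l : ℝ, ∀ f ∈ K, ⟪f, u⟫ = l * ⟪f, v⟫) := by
    intro u hu
    have hmem := W.starProjection_apply_mem u
    have hpn := hprojn u hu
    rw [← hproj u hh hhW]
    by_cases hz : W.starProjection u = 0
    · rw [hz, inner_zero_right]
      refine ⟨le_rfl, fun _ => ⟨0, fun f hf => ?_⟩⟩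
      rw [← hproj u f (Submodule.subset_span hf), hz, inner_zero_right, zero_mul]
    have hs := hf0z _ hmem hpn hz
    set s := ⟪f0, W.starProjection u⟫
    have hB : s⁻¹ • W.starProjection u ∈ B := ⟨W.smul_mem _ hmem, nnC_smul (by positivity) hpn, by
      rw [real_inner_smul_right, inv_mul_cancel₀ hs.ne']⟩
    have h1 := hhB _ hB
    have h2 : ⟪hh, W.starProjection u⟫ = s * ⟪hh, s⁻¹ • W.starProjection u⟫ := by
      rw [real_inner_smul_right, ← mul_assoc, mul_inv_cancel₀ hs.ne', one_mul]
    have h3 : 0 ≤ ⟪s⁻¹ • W.starProjection u - v, s⁻¹ • W.starProjection u - v⟫ :=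
      real_inner_self_nonneg
    refine ⟨by rw [h2]; exact mul_nonneg hs.le (by linarith), fun h0 => ⟨s, fun f hf => ?_⟩⟩
    rw [h2] at h0
    have h4 : ⟪hh, s⁻¹ • W.starProjection u⟫ = 0 := by
      rcases mul_eq_zero.mp h0 with h | h
      · exact absurd h hs.ne'
      · exact h
    have h5 : s⁻¹ • W.starProjection u - v = 0 := by
      rw [← inner_self_eq_zero (𝕜 := ℝ)]
      exact le_antisymm (by rw [h4, mul_zero] at h1; exact h1) h3
    rw [← hproj u f (Submodule.subset_span hf), ← sub_eq_zero.mp h5, real_inner_smul_right,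
      ← mul_assoc, mul_inv_cancel₀ hs.ne', one_mul]
  have hE : Expo K v := by
    refine ⟨hvB.2.1, ?_, hh, fun u hu => (hsplit u hu).1, ?_, fun u hu => (hsplit u hu).2⟩
    · by_contra hcon
      push Not at hcon
      have h1 := span_inner_eq (u := v) (u' := 0) (fun f hf => by
        rw [inner_zero_right]; exact le_antisymm (hcon f hf) (hvB.2.1 f hf)) f0 hf0
      rw [hvB.2.2, inner_zero_right] at h1
      exact one_ne_zero h1
    · simp only [hh]
      rw [inner_sub_left, real_inner_smul_left, hvB.2.2, mul_one, sub_self]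
  exact hgvpos.ne' (hgv v hE)

/-- Exposed rays and the common kernel of `K` span the whole space. -/
lemma expo_span [FiniteDimensional ℝ V] (hne : (posC K).Nonempty) (hK : IsCompact K) {U : Set V}
    (h1 : ∀ v, Expo K v → v ∈ U) (h2 : ∀ v, (∀ f ∈ K, ⟪f, v⟫ = 0) → v ∈ U) :
    Submodule.span ℝ U = ⊤ := by
  rw [← Submodule.orthogonal_eq_bot_iff, Submodule.eq_bot_iff]
  intro g hg
  have hgU : ∀ v ∈ U, ⟪g, v⟫ = 0 := fun v hv => by
    rw [real_inner_comm]
    exact (Submodule.mem_orthogonal _ _).mp hg v (Submodule.subset_span hv)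
  have hgs : g ∈ Submodule.span ℝ K := by
    rw [← Submodule.orthogonal_orthogonal (Submodule.span ℝ K), Submodule.mem_orthogonal]
    intro v hv
    rw [real_inner_comm]
    exact hgU v (h2 v fun f hf => (Submodule.mem_orthogonal _ _).mp hv f (Submodule.subset_span hf))
  exact expo_detect hne hK hgs fun v hv => hgU v (h1 v hv)

/-- The span of a convex cone consists of differences of its elements. -/
lemma span_diff {U : Set V} (h0 : (0 : V) ∈ U) (ha : ∀ u ∈ U, ∀ v ∈ U, u + v ∈ U)
    (hs : ∀ c : ℝ, 0 ≤ c → ∀ u ∈ U, c • u ∈ U) {w : V} (hw : w ∈ Submodule.span ℝ U) :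
    ∃ u ∈ U, ∃ u' ∈ U, w = u - u' := by
  induction hw using Submodule.span_induction with
  | mem u hu => exact ⟨u, hu, 0, h0, by simp⟩
  | zero => exact ⟨0, h0, 0, h0, by simp⟩
  | add a b _ _ iha ihb =>
    obtain ⟨u, hu, u', hu', rfl⟩ := iha
    obtain ⟨v, hv, v', hv', rfl⟩ := ihb
    exact ⟨u + v, ha u hu v hv, u' + v', ha u' hu' v' hv', by abel⟩
  | smul c a _ iha =>
    obtain ⟨u, hu, u', hu', rfl⟩ := iha
    rcases le_total 0 c with hc | hc
    · exact ⟨c • u, hs c hc u hu, c • u', hs c hc u' hu', by rw [smul_sub]⟩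
    · exact ⟨(-c) • u', hs _ (by linarith) u' hu', (-c) • u, hs _ (by linarith) u hu, by module⟩

/-! ### Hilbert metrics do not split as sums -/

/-- A splitting of the Hilbert metric of the cone as a sum of two pseudometrics with corners. -/
structure Split (K : Set V) (d₁ d₂ : V → V → ℝ) : Prop where
  sum : ∀ p ∈ posC K, ∀ q ∈ posC K, Real.log (Dx K p q) = d₁ p q + d₂ p q
  n1 : ∀ p ∈ posC K, ∀ q ∈ posC K, 0 ≤ d₁ p q
  n2 : ∀ p ∈ posC K, ∀ q ∈ posC K, 0 ≤ d₂ p q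
  s1 : ∀ p ∈ posC K, ∀ q ∈ posC K, d₁ p q = d₁ q p
  s2 : ∀ p ∈ posC K, ∀ q ∈ posC K, d₂ p q = d₂ q p
  t1 : ∀ p ∈ posC K, ∀ q ∈ posC K, ∀ r ∈ posC K, d₁ p r ≤ d₁ p q + d₁ q r
  t2 : ∀ p ∈ posC K, ∀ q ∈ posC K, ∀ r ∈ posC K, d₂ p r ≤ d₂ p q + d₂ q r
  corner : ∀ p ∈ posC K, ∀ q ∈ posC K, ∃ r ∈ posC K, d₁ p r = 0 ∧ d₂ r q = 0

variable {d₁ d₂ : V → V → ℝ}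

lemma Split.swap (s : Split K d₁ d₂) : Split K d₂ d₁ where
  sum p hp q hq := by rw [s.sum p hp q hq, add_comm]
  n1 := s.n2
  n2 := s.n1
  s1 := s.s2
  s2 := s.s1
  t1 := s.t2
  t2 := s.t1
  corner p hp q hq := by
    obtain ⟨r, hr, h1, h2⟩ := s.corner q hq p hp
    exact ⟨r, hr, by rw [s.s2 p hp r hr, h2], by rw [s.s1 r hr q hq, h1]⟩

lemma Split.zero_of (hK : IsCompact K) (hn : K.Nonempty) (s : Split K d₁ d₂) (hp : p ∈ posC K)
    (hq : q ∈ posC K) {c : ℝ} (hc : 0 < c) (h : ∀ f ∈ K, ⟪f, p⟫ = c * ⟪f, q⟫) :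
    d₁ p q = 0 ∧ d₂ p q = 0 := by
  have h1 := s.sum p hp q hq
  rw [Dx_eq_one_of hK hn hq hc h, Real.log_one] at h1
  have := s.n1 p hp q hq
  have := s.n2 p hp q hq
  constructor <;> linarith

lemma Split.one_of (hK : IsCompact K) (hn : K.Nonempty) (s : Split K d₁ d₂) (hp : p ∈ posC K)
    (hq : q ∈ posC K) (h1 : d₁ p q = 0) (h2 : d₂ p q = 0) : Dx K p q = 1 := by
  have h := s.sum p hp q hq
  rw [h1, h2, add_zero] at h
  exact Real.eq_one_of_pos_of_log_eq_zero (Dx_pos hK hn hp hq) h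

/-- Directions along which the arguments run: extreme rays in the boundary of the cone. -/
def EB (K : Set V) (v : V) : Prop := ExtM K v ∧ (ann K v).Nonempty

lemma Dx_ray_add (hK : IsCompact K) (hn : K.Nonempty) {v : V} (hv : EB K v) (hp : p ∈ posC K)
    {a b : ℝ} (ha : 0 ≤ a) (hab : a ≤ b) :
    Dx K p (p + b • v) = Dx K p (p + a • v) * Dx K (p + a • v) (p + b • v) := by
  have hpa := posC_add_smul ha hp hv.1.1
  have e : p + b • v = (p + a • v) + (b - a) • v := by module
  rw [Dx_ray hK hn hp hv.1.1 hv.2 (ha.trans hab), e,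
    Dx_ray hK hn hpa hv.1.1 hv.2 (sub_nonneg.mpr hab), Dx_ray hK hn hp hv.1.1 hv.2 ha,
    Mx_dir_ray hK hn hp hv.1.1 ha]
  have := Mx_pos_of hK hn hp hv.1.2.1
  field_simp
  ring

lemma Split.mono (hK : IsCompact K) (hn : K.Nonempty) (s : Split K d₁ d₂) {v : V} (hv : EB K v)
    (hp : p ∈ posC K) {a b : ℝ} (ha : 0 ≤ a) (hab : a ≤ b) :
    d₁ p (p + a • v) ≤ d₁ p (p + b • v) := by
  have hpa := posC_add_smul ha hp hv.1.1
  have hpb := posC_add_smul (ha.trans hab) hp hv.1.1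
  have h := congrArg Real.log (Dx_ray_add hK hn hv hp ha hab)
  rw [Real.log_mul (Dx_pos hK hn hp hpa).ne' (Dx_pos hK hn hpa hpb).ne', s.sum _ hp _ hpa,
    s.sum _ hp _ hpb, s.sum _ hpa _ hpb] at h
  have := s.t2 _ hp _ hpa _ hpb
  have := s.n1 _ hpa _ hpb
  linarith

/-- By rigidity of rays, a corner between two points of an extreme ray lies on the ray. -/
lemma Split.corner_ray (hK : IsCompact K) (hn : K.Nonempty) (s : Split K d₁ d₂) {v : V}
    (hv : EB K v) (hp : p ∈ posC K) {t : ℝ} (ht : 0 < t) :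
    ∃ a : ℝ, 0 ≤ a ∧ a ≤ t ∧ d₁ p (p + a • v) = 0 ∧ d₂ (p + a • v) (p + t • v) = 0 := by
  have hq := posC_add_smul ht.le hp hv.1.1
  obtain ⟨r, hr, h1, h2⟩ := s.corner p hp _ hq
  have hle : Dx K p r * Dx K r (p + t • v) ≤ Dx K p (p + t • v) := by
    rw [← Real.log_le_log_iff (mul_pos (Dx_pos hK hn hp hr) (Dx_pos hK hn hr hq))
      (Dx_pos hK hn hp hq), Real.log_mul (Dx_pos hK hn hp hr).ne' (Dx_pos hK hn hr hq).ne',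
      s.sum _ hp _ hr, s.sum _ hr _ hq, s.sum _ hp _ hq]
    have a1 := s.t2 _ hp _ hq _ hr
    have a2 := s.t1 _ hr _ hp _ hq
    rw [s.s2 _ hq _ hr] at a1
    rw [s.s1 _ hr _ hp] at a2
    linarith
  obtain ⟨a, c, ha, hat, hc, hv'⟩ := ray_rigid hK hn hp hv.1 hv.2 ht hr
    (le_antisymm hle (Dx_tri hK hn hp hr hq))
  have hpa := posC_add_smul ha hp hv.1.1
  obtain ⟨z1, z2⟩ := s.zero_of hK hn hr hpa hc hv'
  refine ⟨a, ha, hat, le_antisymm ?_ (s.n1 _ hp _ hpa), le_antisymm ?_ (s.n2 _ hpa _ hq)⟩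
  · have := s.t1 _ hp _ hr _ hpa
    linarith
  · have := s.t2 _ hpa _ hr _ hq
    rw [s.s2 _ hpa _ hr] at this
    linarith

lemma ray_zero (hK : IsCompact K) (hn : K.Nonempty) {v : V} (hv : EB K v) (hp : p ∈ posC K)
    {a : ℝ} (ha : 0 ≤ a) (h : Dx K p (p + a • v) = 1) : a = 0 := by
  rw [Dx_ray hK hn hp hv.1.1 hv.2 ha] at h
  have h1 := Mx_pos_of hK hn hp hv.1.2.1
  have h2 : a * Mx K v p = 0 := by linarith
  rcases mul_eq_zero.mp h2 with h | h
  · exact h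
  · exact absurd h h1.ne'

lemma Split.ray_alt (hK : IsCompact K) (hn : K.Nonempty) (s : Split K d₁ d₂) {v : V}
    (hv : EB K v) (hp : p ∈ posC K) {t : ℝ} (ht : 0 < t) :
    d₁ p (p + t • v) = 0 ∨ d₂ p (p + t • v) = 0 := by
  obtain ⟨a, ha, hat, a1, a2⟩ := s.corner_ray hK hn hv hp ht
  obtain ⟨b, hb, hbt, b1, b2⟩ := s.swap.corner_ray hK hn hv hp ht
  have hpa := posC_add_smul ha hp hv.1.1
  have hpb := posC_add_smul hb hp hv.1.1
  rcases le_total a b with h | h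
  · have h1 := s.swap.mono hK hn hv hp ha h
    have h2 := s.n2 _ hp _ hpa
    have h3 := ray_zero hK hn hv hp ha (s.one_of hK hn hp hpa a1 (by linarith))
    rw [h3, zero_smul, add_zero] at a2
    exact Or.inr a2
  · have h1 := s.mono hK hn hv hp hb h
    have h2 := s.n1 _ hp _ hpb
    have h3 := ray_zero hK hn hv hp hb (s.one_of hK hn hp hpb (by linarith) b1)
    rw [h3, zero_smul, add_zero] at b2
    exact Or.inl b2

/-- The pseudometric `d` vanishes along the ray from `p` in direction `v`. -/
def P1 (d : V → V → ℝ) (p v : V) : Prop := ∀ t : ℝ, 0 ≤ t → d p (p + t • v) = 0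

lemma Split.P_or (hK : IsCompact K) (hn : K.Nonempty) (s : Split K d₁ d₂) {v : V}
    (hv : EB K v) (hp : p ∈ posC K) : P1 d₁ p v ∨ P1 d₂ p v := by
  by_contra hcon
  push Not at hcon
  obtain ⟨h1, h2⟩ := hcon
  simp only [P1, not_forall] at h1 h2
  obtain ⟨a, ha, h1⟩ := h1
  obtain ⟨b, hb, h2⟩ := h2
  have hm : 0 < max a b + 1 := by positivity
  have ea := s.mono hK hn hv hp ha (show a ≤ max a b + 1 by linarith [le_max_left a b])
  have eb := s.swap.mono hK hn hv hp hb (show b ≤ max a b + 1 by linarith [le_max_right a b])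
  have na := s.n1 _ hp _ (posC_add_smul ha hp hv.1.1)
  have nb := s.n2 _ hp _ (posC_add_smul hb hp hv.1.1)
  rcases s.ray_alt hK hn hv hp hm with h | h
  · exact h1 (by linarith)
  · exact h2 (by linarith)

lemma Split.P_excl (hK : IsCompact K) (hn : K.Nonempty) (s : Split K d₁ d₂) {v : V}
    (hv : EB K v) (hp : p ∈ posC K) (h1 : P1 d₁ p v) (h2 : P1 d₂ p v) : False := by
  have := ray_zero hK hn hv hp zero_le_one (s.one_of hK hn hp (posC_add_smul zero_le_one hp hv.1.1)
    (h1 1 zero_le_one) (h2 1 zero_le_one))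
  exact one_ne_zero this

lemma Split.P_fwd (s : Split K d₁ d₂) {v : V}
    (hv : EB K v) (hp : p ∈ posC K) {a : ℝ} (ha : 0 ≤ a) (h : P1 d₁ p v) :
    P1 d₁ (p + a • v) v := by
  intro t ht
  have hpa := posC_add_smul ha hp hv.1.1
  have e : p + a • v + t • v = p + (a + t) • v := by module
  have hpb := posC_add_smul (add_nonneg ha ht) hp hv.1.1
  rw [e]
  refine le_antisymm ?_ (s.n1 _ hpa _ hpb)
  have := s.t1 _ hpa _ hp _ hpb
  rw [s.s1 _ hpa _ hp, h a ha, h _ (add_nonneg ha ht)] at this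
  linarith

lemma Split.P_bwd (hK : IsCompact K) (hn : K.Nonempty) (s : Split K d₁ d₂) {v : V}
    (hv : EB K v) (hp : p ∈ posC K) {a : ℝ} (ha : 0 ≤ a) (h : P1 d₁ (p + a • v) v) :
    P1 d₁ p v := by
  rcases s.P_or hK hn hv hp with h1 | h2
  · exact h1
  · exact (s.P_excl hK hn hv (posC_add_smul ha hp hv.1.1) h (s.swap.P_fwd hv hp ha h2)).elim

/-- Displacements in complementary pseudometrics add up. -/
lemma Split.add (hK : IsCompact K) (hn : K.Nonempty) (s : Split K d₁ d₂) (hp : p ∈ posC K)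
    (hx : x ∈ posC K) (hy : y ∈ posC K) (h1 : d₁ p x = 0) (h2 : d₂ p y = 0) :
    Dx K x y = Dx K x p * Dx K p y := by
  refine le_antisymm (Dx_tri hK hn hx hp hy) ?_
  rw [← Real.log_le_log_iff (mul_pos (Dx_pos hK hn hx hp) (Dx_pos hK hn hp hy))
      (Dx_pos hK hn hx hy), Real.log_mul (Dx_pos hK hn hx hp).ne' (Dx_pos hK hn hp hy).ne',
      s.sum _ hx _ hp, s.sum _ hp _ hy, s.sum _ hx _ hy]
  have a1 := s.t1 _ hp _ hx _ hy
  have a2 := s.t2 _ hx _ hy _ hp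
  rw [s.s2 _ hy _ hp] at a2
  rw [s.s1 _ hx _ hp]
  linarith

/-- At one point the two pseudometrics cannot vanish along different extreme directions. -/
lemma Split.unmixed (hK : IsCompact K) (hn : K.Nonempty) (s : Split K d₁ d₂) {v₁ v₂ : V}
    (hv1 : EB K v₁) (hv2 : EB K v₂) (hp : p ∈ posC K) (h1 : P1 d₁ p v₁) (h2 : P1 d₂ p v₂) :
    False := by
  set x₀ := p + (1 : ℝ) • v₁ with hx0
  have hx : x₀ ∈ posC K := posC_add_smul zero_le_one hp hv1.1.1
  -- moving along `v₁` does not change the behaviour in direction `v₂`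
  have e1 : P1 d₂ x₀ v₂ := by
    rcases s.P_or hK hn hv2 hx with hc | hc
    swap
    · exact hc
    exfalso
    have key : ∀ t : ℝ, 0 < t → ∃ c : ℝ, ∀ f ∈ K, ⟪f, x₀ + t • v₂⟫ = c * ⟪f, p⟫ := by
      intro t ht
      have hxt := posC_add_smul ht.le hx hv2.1.1
      have hpt := posC_add_smul ht.le hp hv2.1.1
      have e : x₀ + t • v₂ = p + t • v₂ + (1 : ℝ) • v₁ := by rw [hx0]; module
      have z1 : d₁ p (x₀ + t • v₂) = 0 := by
        refine le_antisymm ?_ (s.n1 _ hp _ hxt)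
        have := s.t1 _ hp _ hx _ hxt
        rw [hc t ht.le, h1 1 zero_le_one] at this
        linarith
      rcases s.P_or hK hn hv1 hpt with hc' | hc'
      · exfalso
        have z2 : d₁ p (p + t • v₂) = 0 := by
          refine le_antisymm ?_ (s.n1 _ hp _ hpt)
          have := s.t1 _ hp _ hxt _ hpt
          rw [z1, s.s1 _ hxt _ hpt, e, hc' 1 zero_le_one] at this
          linarith
        exact ht.ne' (ray_zero hK hn hv2 hp ht.le (s.one_of hK hn hp hpt z2 (h2 t ht.le)))
      · have z2 : d₂ p (x₀ + t • v₂) = 0 := by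
          refine le_antisymm ?_ (s.n2 _ hp _ hxt)
          have := s.t2 _ hp _ hpt _ hxt
          rw [h2 t ht.le, e, hc' 1 zero_le_one] at this
          rw [e]; linarith
        obtain ⟨c, -, hh⟩ := Dx_one hK hn hxt hp (by rw [Dx_symm]; exact s.one_of hK hn hp hxt z1 z2)
        exact ⟨c, hh⟩
    obtain ⟨c1, k1⟩ := key 1 one_pos
    obtain ⟨c2, k2⟩ := key 2 two_pos
    have hdiff : ∀ f ∈ K, ⟪f, v₂⟫ = (c2 - c1) * ⟪f, p⟫ := fun f hf => by
      have a := k1 f hf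
      have b := k2 f hf
      rw [inner_add_right, real_inner_smul_right] at a b
      linarith
    obtain ⟨f, hf, hf0⟩ := hv2.2
    obtain ⟨g, hg, hgp⟩ := hv2.1.2.1
    have a := hdiff f hf
    rw [hf0] at a
    have b := hdiff g hg
    have : c2 - c1 = 0 := by
      rcases mul_eq_zero.mp a.symm with h | h
      · exact h
      · exact absurd h (hp f hf).ne'
    rw [this, zero_mul] at b
    linarith
  have hm2 := Mx_pos_of hK hn hp hv2.1.2.1
  have hle2 := le_Mx hK hn hp v₂
  set m := Mx K v₂ p
  -- a functional maximal on `v₂` and vanishing on `v₁`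
  obtain ⟨g, hg, hgv1, hgv2⟩ : ∃ g ∈ K, ⟪g, v₁⟫ = 0 ∧ ⟪g, v₂⟫ = m * ⟪g, p⟫ := by
    have hy := posC_add_smul zero_le_one hp hv2.1.1
    have hD := s.add hK hn hp hx hy (h1 1 zero_le_one) (h2 1 zero_le_one)
    have hM := (Mx_of_Dx_eq hK hn hx hp hy hD).2
    rw [Mx_ray hK hn hp zero_le_one, Mx_ray_self hK hn hp hv1.1.1 hv1.2 zero_le_one] at hM
    obtain ⟨g, hg, hge⟩ := Mx_att hK hn hx (p + (1 : ℝ) • v₂)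
    rw [hM, hx0] at hge
    simp only [inner_add_right, one_smul, one_mul, mul_one] at hge
    have a := hle2 g hg
    have b := hv1.1.1 g hg
    have hm' : m = Mx K v₂ p := rfl
    rw [← hm'] at hge
    have c : ⟪g, v₁⟫ = 0 := by nlinarith
    exact ⟨g, hg, c, by rw [c] at hge; linarith⟩
  have hgx : ⟪g, v₂⟫ = m * ⟪g, x₀⟫ := by
    rw [hx0, inner_add_right, real_inner_smul_right, hgv1, hgv2]; ring
  have hlex : ∀ f ∈ K, ⟪f, v₂⟫ ≤ m * ⟪f, x₀⟫ := fun f hf => by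
    have a := hle2 f hf
    have b := hv1.1.1 f hf
    rw [hx0, inner_add_right, real_inner_smul_right]
    nlinarith
  set t := 1 / (2 * m)
  have ht : 0 < t := by positivity
  have htm : t * m = 1 / 2 := by simp only [t]; field_simp
  set Y := x₀ - t • v₂ with hY
  have hYv : ∀ f ∈ K, ⟪f, x₀⟫ / 2 ≤ ⟪f, Y⟫ := fun f hf => by
    rw [hY, inner_sub_right, real_inner_smul_right]
    have := mul_le_mul_of_nonneg_left (hlex f hf) ht.le
    rw [← mul_assoc, htm] at this
    linarith
  have hYp : Y ∈ posC K := fun f hf => by linarith [hYv f hf, hx f hf]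
  have hYx : Y + t • v₂ = x₀ := by rw [hY]; abel
  have e2 : P1 d₂ Y v₂ := s.swap.P_bwd hK hn hv2 hYp ht.le (by rw [hYx]; exact e1)
  have hX := posC_add_smul zero_le_one hx hv1.1.1
  have hd1 : d₁ x₀ (x₀ + (1 : ℝ) • v₁) = 0 := s.P_fwd hv1 hp zero_le_one h1 1 zero_le_one
  have hd2 : d₂ x₀ Y = 0 := by
    have := e2 t ht.le
    rwa [hYx, s.s2 _ hYp _ hx] at this
  have hM := (Mx_of_Dx_eq hK hn hX hx hYp (s.add hK hn hx hX hYp hd1 hd2)).1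
  rw [Mx_ray hK hn hx zero_le_one, one_mul] at hM
  have hn1 := Mx_pos_of hK hn hx hv1.1.2.1
  have hle1 := le_Mx hK hn hx v₁
  set n₁ := Mx K v₁ x₀
  have h2le : 2 ≤ Mx K x₀ Y := by
    have a := le_Mx hK hn hYp x₀ g hg
    have b := hx g hg
    have c : ⟪g, Y⟫ = ⟪g, x₀⟫ / 2 := by
      rw [hY, inner_sub_right, real_inner_smul_right, hgx, ← mul_assoc, htm]; ring
    rw [c] at a
    by_contra hcon
    nlinarith
  obtain ⟨k, hk, hke⟩ := Mx_att hK hn hYp (x₀ + (1 : ℝ) • v₁)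
  rw [hM, inner_add_right, real_inner_smul_right, one_mul] at hke
  have a := hle1 k hk
  have b := hYv k hk
  have c := hYp k hk
  have d := hx k hk
  have hYle : ⟪k, Y⟫ ≤ ⟪k, x₀⟫ / 2 := by
    have e : (1 + n₁) * 2 * ⟪k, Y⟫ ≤ (1 + n₁) * ⟪k, x₀⟫ := by
      have : (1 + n₁) * 2 * ⟪k, Y⟫ ≤ (1 + n₁) * Mx K x₀ Y * ⟪k, Y⟫ := by
        refine mul_le_mul_of_nonneg_right ?_ c.le
        nlinarith
      nlinarith
    nlinarith
  have hkv1 : ⟪k, x₀⟫ * n₁ ≤ ⟪k, v₁⟫ := by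
    have : (1 + n₁) * 2 * (⟪k, x₀⟫ / 2) ≤ (1 + n₁) * Mx K x₀ Y * ⟪k, Y⟫ :=
      mul_le_mul (by nlinarith) b (by linarith) (by nlinarith)
    linarith
  have hkv1p : 0 < ⟪k, v₁⟫ := lt_of_lt_of_le (mul_pos d hn1) hkv1
  have hkv2 : m * ⟪k, x₀⟫ ≤ ⟪k, v₂⟫ := by
    rw [hY, inner_sub_right, real_inner_smul_right] at hYle
    have : t * (m * ⟪k, x₀⟫) ≤ t * ⟪k, v₂⟫ := by rw [← mul_assoc, htm]; linarith
    exact le_of_mul_le_mul_left this ht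
  have e := hle2 k hk
  rw [hx0, inner_add_right, real_inner_smul_right] at hkv2
  nlinarith

lemma Split.all_one [FiniteDimensional ℝ V] (hK : IsCompact K) (hn : K.Nonempty)
    (hEB : ∀ v, ExtM K v → (ann K v).Nonempty)
    (s : Split K d₁ d₂) (hp : p ∈ posC K) (h : ∀ v, EB K v → P1 d₁ p v) :
    ∀ x ∈ posC K, ∀ y ∈ posC K, d₁ x y = 0 := by
  set ty : V → Prop := fun p => ∀ v, EB K v → P1 d₁ p v
  have hty : ∀ p ∈ posC K, ∀ v, EB K v → P1 d₁ p v → ty p := by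
    intro p hp v hv hP w hw
    rcases s.P_or hK hn hw hp with h | h
    · exact h
    · exact (s.unmixed hK hn hv hw hp hP h).elim
  set U : Set V := {u | ∀ t : ℝ, 0 ≤ t → t • u ∈ nnC K ∧ ∀ p ∈ posC K, (ty p ∨ ty (p + t • u)) →
    ty p ∧ ty (p + t • u) ∧ d₁ p (p + t • u) = 0}
  have hU1 : ∀ v, Expo K v → v ∈ U := fun v hv t ht => by
    have hvE : EB K v := ⟨hv.ext, hEB v hv.ext⟩
    refine ⟨nnC_smul ht hv.1, fun p hp hor => ?_⟩
    have hpt := posC_add_smul ht hp hv.1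
    have hP : P1 d₁ p v := by
      rcases hor with h | h
      · exact h v hvE
      · exact s.P_bwd hK hn hvE hp ht (h v hvE)
    exact ⟨hty p hp v hvE hP, hty _ hpt v hvE (s.P_fwd hvE hp ht hP), hP t ht⟩
  have hU2 : ∀ v, (∀ f ∈ K, ⟪f, v⟫ = 0) → v ∈ U := fun v hv t ht => by
    have hvn : v ∈ nnC K := fun f hf => (hv f hf).ge
    refine ⟨nnC_smul ht hvn, fun p hp hor => ?_⟩
    -- translations along the common kernel are invisible
    have hz : ∀ a ∈ posC K, a + t • v ∈ posC K ∧ d₁ a (a + t • v) = 0 := fun a ha => by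
      have hat := posC_add_smul ht ha hvn
      refine ⟨hat, (s.zero_of hK hn ha hat one_pos fun f hf => ?_).1⟩
      rw [inner_add_right, real_inner_smul_right, hv f hf]; ring
    have hpt := hz p hp
    have hmv : ∀ w, EB K w → ∀ r : ℝ, 0 ≤ r →
        (d₁ p (p + r • w) = 0 ↔ d₁ (p + t • v) (p + t • v + r • w) = 0) := by
      intro w hw r hr
      have hpw := posC_add_smul hr hp hw.1.1
      have e : p + t • v + r • w = p + r • w + t • v := by abel
      obtain ⟨m1, z1⟩ := hz _ hpw
      rw [e]
      have a := s.t1 _ hp _ hpt.1 _ m1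
      have b := s.t1 _ hp _ m1 _ hpw
      rw [s.s1 _ m1 _ hpw] at b
      have c := s.t1 _ hpt.1 _ hp _ hpw
      rw [s.s1 _ hpt.1 _ hp] at c
      have d := s.t1 _ hpt.1 _ hpw _ m1
      have n1 := s.n1 _ hp _ hpw
      have n2 := s.n1 _ hpt.1 _ m1
      have h2 := hpt.2
      constructor <;> intro <;> linarith
    have hiff : ty p ↔ ty (p + t • v) :=
      forall₂_congr fun w hw => forall₂_congr fun r hr => hmv w hw r hr
    rcases hor with h | h
    · exact ⟨h, hiff.mp h, hpt.2⟩
    · exact ⟨hiff.mpr h, h, hpt.2⟩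
  have hspan := expo_span ⟨p, hp⟩ hK hU1 hU2
  have hUa : ∀ a ∈ U, ∀ b ∈ U, a + b ∈ U := by
    intro a ha b hb t ht
    have hna := (ha t ht).1
    have hnb := (hb t ht).1
    refine ⟨by rw [smul_add]; exact nnC_add hna hnb, fun r hr hor => ?_⟩
    have e : r + t • (a + b) = r + t • a + t • b := by rw [smul_add]; abel
    rw [e] at hor ⊢
    have hra := posC_add_nn hr hna
    have hrb := posC_add_nn hra hnb
    have A := (ha t ht).2 r hr
    have B := (hb t ht).2 _ hra
    have h3 : ty (r + t • a) := by
      rcases hor with h | h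
      · exact (A (Or.inl h)).2.1
      · exact (B (Or.inr h)).1
    obtain ⟨A1, -, A3⟩ := A (Or.inr h3)
    obtain ⟨-, B2, B3⟩ := B (Or.inl h3)
    refine ⟨A1, B2, le_antisymm ?_ (s.n1 _ hr _ hrb)⟩
    have := s.t1 _ hr _ hra _ hrb
    linarith
  have hUs : ∀ c : ℝ, 0 ≤ c → ∀ u ∈ U, c • u ∈ U := by
    intro c hc u hu t ht
    have := hu (t * c) (mul_nonneg ht hc)
    rw [smul_smul]
    exact this
  have key : ∀ q ∈ posC K, d₁ p q = 0 := by
    intro q hq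
    obtain ⟨u, hu, u', hu', hw⟩ := span_diff (hU2 0 fun f _ => inner_zero_right f) hUa hUs
      (w := q - p) (by rw [hspan]; trivial)
    have hpu : p + u = q + u' := by
      have : q = p + (u - u') := by rw [← hw]; abel
      rw [this]; abel
    have a := hu 1 zero_le_one
    have b := hu' 1 zero_le_one
    rw [one_smul] at a b
    have hm := posC_add_nn hp a.1
    obtain ⟨-, a2, a3⟩ := a.2 p hp (Or.inl h)
    obtain ⟨-, b2, b3⟩ := b.2 q hq (Or.inr (by rw [← hpu]; exact a2))
    rw [← hpu] at b3
    refine le_antisymm ?_ (s.n1 _ hp _ hq)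
    have := s.t1 _ hp _ hm _ hq
    rw [s.s1 _ hm _ hq] at this
    linarith
  intro x hx y hy
  refine le_antisymm ?_ (s.n1 _ hx _ hy)
  have := s.t1 _ hx _ hp _ hy
  rw [s.s1 _ hx _ hp, key x hx, key y hy] at this
  linarith

/-- The Hilbert metric of a cone is indecomposable. -/
lemma Split.indecomp [FiniteDimensional ℝ V] (hK : IsCompact K) (hn : K.Nonempty)
    (hne : (posC K).Nonempty) (s : Split K d₁ d₂) :
    (∀ x ∈ posC K, ∀ y ∈ posC K, d₁ x y = 0) ∨ (∀ x ∈ posC K, ∀ y ∈ posC K, d₂ x y = 0) := by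
  obtain ⟨p, hp⟩ := hne
  by_cases hEB : ∀ v, ExtM K v → (ann K v).Nonempty
  · by_cases h : ∀ v, EB K v → P1 d₁ p v
    · exact Or.inl (s.all_one hK hn hEB hp h)
    · push Not at h
      obtain ⟨v, hv, hP⟩ := h
      have h2 : P1 d₂ p v := (s.P_or hK hn hv hp).resolve_left hP
      refine Or.inr (s.swap.all_one hK hn hEB hp fun w hw => ?_)
      rcases s.P_or hK hn hw hp with h | h
      · exact (s.unmixed hK hn hw hv hp h h2).elim
      · exact h
  · -- an interior extreme ray forces the cone to be one-dimensional
    push Not at hEB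
    obtain ⟨v, hv, h0⟩ := hEB
    have hvp : v ∈ posC K := fun f hf => lt_of_le_of_ne (hv.1 f hf) fun h =>
      (h0 ▸ (⟨hf, h.symm⟩ : f ∈ ann K v) : f ∈ (∅ : Set V))
    have hz : ∀ x ∈ posC K, d₁ x v = 0 := by
      intro x hx
      obtain ⟨t, ht, hm⟩ := posC_isOpen_dir hK hvp (-x)
      obtain ⟨l, hl⟩ := hv.2.2 (t • x) (nnC_smul ht.le (posC_sub_nnC hx)) (by
        have : v - t • x = v + t • -x := by module
        rw [this]; exact posC_sub_nnC hm)
      have hlx : ∀ f ∈ K, ⟪f, x⟫ = l / t * ⟪f, v⟫ := fun f hf => by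
        have := hl f hf
        rw [real_inner_smul_right] at this
        field_simp
        linarith
      obtain ⟨f, hf⟩ := hn
      have hpos : 0 < l / t := by
        have h1 := hx f hf
        rw [hlx f hf] at h1
        exact pos_of_mul_pos_left h1 (hvp f hf).le
      exact (s.zero_of hK ⟨f, hf⟩ hx hvp hpos hlx).1
    left
    intro x hx y hy
    refine le_antisymm ?_ (s.n1 _ hx _ hy)
    have := s.t1 _ hx _ hvp _ hy
    rw [s.s1 _ hvp _ hy, hz x hx, hz y hy] at this
    linarith

end HilbertIso

namespace HilbertIso

open Filter Topology
open scoped RealInnerProductSpace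

variable {V : Type*} [NormedAddCommGroup V] [InnerProductSpace ℝ V]
variable {K : Set V} {x y z p q : V} {T S : V → V}

/-! ### Comparison of Busemann functions -/

/-- `y` and `z` dominate each other for the order of `K` (they lie in the same open face). -/
def Eqv (K : Set V) (y z : V) : Prop :=
  (∃ l : ℝ, 0 < l ∧ ∀ f ∈ K, ⟪f, y⟫ ≤ l * ⟪f, z⟫) ∧ ∃ l : ℝ, 0 < l ∧ ∀ f ∈ K, ⟪f, z⟫ ≤ l * ⟪f, y⟫

lemma Eqv.symm (h : Eqv K y z) : Eqv K z y := ⟨h.2, h.1⟩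

lemma Eqv.refl : Eqv K y y := ⟨⟨1, one_pos, fun f _ => by simp⟩, ⟨1, one_pos, fun f _ => by simp⟩⟩

lemma Eqv.ann_eq (h : Eqv K y z) (hy : y ∈ nnC K) (hz : z ∈ nnC K) : ann K y = ann K z := by
  obtain ⟨⟨l, _, h1⟩, ⟨m, _, h2⟩⟩ := h
  exact (ann_of_le hz h2).antisymm (ann_of_le hy h1)

lemma Eqv.le (h : Eqv K y z) (hz : Bd K z) : ∀ f ∈ K, ⟪f, y⟫ ≤ Mx K y z * ⟪f, z⟫ :=
  le_Mx_gen hz.2.1 (h.1.imp fun _ h => h.2)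

lemma Eqv.pos (h : Eqv K y z) (hy : Bd K y) (hz : Bd K z) : 0 < Mx K y z := by
  obtain ⟨f, hf, h1⟩ := hy.2.1
  have h2 := h.le hz f hf
  have h3 := hz.1 f hf
  exact pos_of_mul_pos_left (h1.trans_le h2) h3

lemma Eqv.tri {w : V} (h : Eqv K y z) (h' : Eqv K z w) (hy : Bd K y) (hz : Bd K z) (hw : Bd K w) :
    Mx K y w ≤ Mx K y z * Mx K z w :=
  Mx_le_gen hw.2.1 fun f hf => by
    have h1 := h.le hz f hf
    have h2 := h'.le hw f hf
    have h3 := h.pos hy hz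
    nlinarith

lemma Mx_self_bd (hy : Bd K y) : Mx K y y = 1 := by
  refine le_antisymm (Mx_le_gen hy.2.1 fun f _ => by simp) ?_
  obtain ⟨f, hf, h1⟩ := hy.2.1
  have h2 := Eqv.refl.le hy f hf
  nlinarith

lemma Eqv.Dx_ge (h : Eqv K y z) (hy : Bd K y) (hz : Bd K z) : 1 ≤ Dx K y z := by
  have := h.tri h.symm hy hz hy
  rwa [Mx_self_bd hy] at this

/-- `c` is the best constant with `β ≤ c γ` on the open cone. -/
def Best (K : Set V) (β γ : V → ℝ) (c : ℝ) : Prop :=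
  (∀ x ∈ posC K, β x ≤ c * γ x) ∧ ∀ c', (∀ x ∈ posC K, β x ≤ c' * γ x) → c ≤ c'

lemma Best.unique {β γ : V → ℝ} {c d : ℝ} (h : Best K β γ c) (h' : Best K β γ d) : c = d :=
  le_antisymm (h.2 _ h'.1) (h'.2 _ h.1)

lemma best_Bf (hK : IsCompact K) (hn : K.Nonempty) (hy : Bd K y) (hz : Bd K z) (h : Eqv K y z)
    (hp : p ∈ posC K) (hq : q ∈ posC K) :
    Best K (Bf K y p) (Bf K z q) (Mx K y z * Mx (ann K y) q p) :=
  have ha := h.ann_eq hy.1 hz.1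
  ⟨fun _ hx => Bf_le hK hn hz hp hq hx (h.pos hy hz).le (h.le hz) ha,
    fun _ hc => Bf_const hK hn hy hz hp hq ha hc⟩

lemma eqv_of_Bf (hK : IsCompact K) (hn : K.Nonempty) (hy : Bd K y) (hz : Bd K z)
    (hp : p ∈ posC K) (hq : q ∈ posC K) {C C' : ℝ} (hC : 0 < C) (hC' : 0 < C')
    (h : ∀ x ∈ posC K, Bf K y p x ≤ C * Bf K z q x)
    (h' : ∀ x ∈ posC K, Bf K z q x ≤ C' * Bf K y p x) : Eqv K y z :=
  ⟨(Bf_dom_Bf hK hn hy hp hz hq hC h).1, (Bf_dom_Bf hK hn hz hq hy hp hC' h').1⟩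

lemma Bf_scale (hK : IsCompact K) (hn : K.Nonempty) (hy : Bd K y) (hp : p ∈ posC K)
    (hx : x ∈ posC K) {c : ℝ} (hc : 0 < c) : Bf K y p (c • x) = Bf K y p x :=
  (BusZ_Bf hK hn hy hp).ray hK hn hx hc

/-- Statements about all values of a scale invariant function may be checked on the image of `T`. -/
lemma Iso.forall_im (G : Good K) (I : Iso K T S) (hy : Bd K y) (hz : Bd K z) (hp : p ∈ posC K)
    (hq : q ∈ posC K) {P : ℝ → ℝ → Prop}
    (h : ∀ x ∈ posC K, P (Bf K y p (T x)) (Bf K z q (T x))) :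
    ∀ x ∈ posC K, P (Bf K y p x) (Bf K z q x) := by
  intro x hx
  have h1 := h (S x) (I.mapS x hx)
  obtain ⟨c, hc, e⟩ := I.TS x hx
  rwa [e, Bf_scale G.cpt G.ne hy hp hx hc, Bf_scale G.cpt G.ne hz hq hx hc] at h1

lemma ExtM.bd {e : V} (he : ExtM K e) (h0 : (ann K e).Nonempty) : Bd K e := ⟨he.1, he.2.1, h0⟩

lemma EB.bd {e : V} (he : EB K e) : Bd K e := he.1.bd he.2

/-- The endpoints of the images of two rays towards the same point lie in the same open face. -/
lemma Ray.eqv (G : Good K) (I : Iso K T S) {e : V} (he : Bd K e) (hp : p ∈ posC K)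
    (hq : q ∈ posC K) (hy : Ray K T e p y) (hz : Ray K T e q z) : Eqv K y z := by
  have hK := G.cpt
  have hn := G.ne
  have b1 := (best_Bf hK hn he he Eqv.refl hp hq).1
  have b2 := (best_Bf hK hn he he Eqv.refl hq hp).1
  have k : ∀ {a b : V}, a ∈ posC K → b ∈ posC K → 0 < Mx K e e * Mx (ann K e) a b :=
    fun ha hb => mul_pos (by rw [Mx_self_bd he]; exact one_pos)
      (Mx_pos (ann_compact hK) he.2.2 (posC_mono ann_sub ha) (posC_mono ann_sub hb))
  refine eqv_of_Bf hK hn hy.1 hz.1 (I.mapT p hp) (I.mapT q hq) (k hq hp) (k hp hq) ?_ ?_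
  · refine I.forall_im G hy.1 hz.1 (I.mapT p hp) (I.mapT q hq) (P := fun a b => a ≤ _ * b) ?_
    intro x hx
    rw [← hy.Bf_eq G I he hp hx, ← hz.Bf_eq G I he hq hx]
    exact b1 x hx
  · refine I.forall_im G hz.1 hy.1 (I.mapT q hq) (I.mapT p hp) (P := fun a b => a ≤ _ * b) ?_
    intro x hx
    rw [← hy.Bf_eq G I he hp hx, ← hz.Bf_eq G I he hq hx]
    exact b2 x hx

lemma Ray.core_M (G : Good K) (I : Iso K T S) {e : V} (he : Bd K e) (hp : p ∈ posC K)
    (hq : q ∈ posC K) (hy : Ray K T e p y) (hz : Ray K T e q z) :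
    Mx (ann K e) q p = Mx K y z * Mx (ann K y) (T q) (T p) := by
  have hK := G.cpt
  have hn := G.ne
  have hE := hy.eqv G I he hp hq hz
  have b1 := best_Bf hK hn he he Eqv.refl hp hq
  rw [Mx_self_bd he, one_mul] at b1
  refine b1.unique (d := Mx K y z * Mx (ann K y) (T q) (T p)) ?_
  have b2 := best_Bf hK hn hy.1 hz.1 hE (I.mapT p hp) (I.mapT q hq)
  refine ⟨fun x hx => ?_, fun c hc => b2.2 c ?_⟩
  · rw [hy.Bf_eq G I he hp hx, hz.Bf_eq G I he hq hx]
    exact b2.1 _ (I.mapT x hx)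
  · refine I.forall_im G hy.1 hz.1 (I.mapT p hp) (I.mapT q hq) (P := fun a b => a ≤ _ * b) ?_
    intro x hx
    rw [← hy.Bf_eq G I he hp hx, ← hz.Bf_eq G I he hq hx]
    exact hc x hx

/-- The transverse Hilbert metric at `e` splits into a part seen along the face of `y` and a part
seen transversally to that face. -/
lemma Ray.core (G : Good K) (I : Iso K T S) {e : V} (he : Bd K e) (hp : p ∈ posC K)
    (hq : q ∈ posC K) (hy : Ray K T e p y) (hz : Ray K T e q z) :
    Dx (ann K e) p q = Dx K y z * Dx (ann K y) (T p) (T q) := by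
  have h1 := hy.core_M G I he hp hq hz
  have h2 := hz.core_M G I he hq hp hy
  rw [← (hy.eqv G I he hp hq hz).ann_eq hy.1.1 hz.1.1] at h2
  unfold Dx
  rw [h1, h2]
  ring

lemma posC_ortho (hK : IsCompact K) (hp : p ∈ posC K) {v : V} (h : ∀ x ∈ posC K, ⟪v, x⟫ = 0) :
    v = 0 := by
  obtain ⟨t, ht, hm⟩ := posC_isOpen_dir hK hp v
  have h1 := h _ hm
  rw [inner_add_right, h p hp, real_inner_smul_right, zero_add] at h1
  have := (mul_eq_zero.mp h1).resolve_left ht.ne'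
  exact inner_self_eq_zero.mp this

/-- All supporting functionals at `y` are proportional. -/
def Sm (K : Set V) (y : V) : Prop := ∀ f ∈ ann K y, ∀ g ∈ ann K y, ∃ c : ℝ, 0 < c ∧ f = c • g

/-- The images of all rays towards `e` converge to one point. -/
def CA (K : Set V) (T : V → V) (e : V) : Prop :=
  ∃ e', ∀ p ∈ posC K, ∃ c : ℝ, 0 < c ∧ Ray K T e p (c • e')

/-- The images of all rays towards `e` converge to smooth points. -/
def CB (K : Set V) (T : V → V) (e : V) : Prop := ∀ p ∈ posC K, ∀ y, Ray K T e p y → Sm K y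

lemma sm_of (G : Good K) (hy : Bd K y)
    (h : ∀ a ∈ posC K, ∀ b ∈ posC K, Dx (ann K y) a b = 1) : Sm K y := by
  intro f hf g hg
  obtain ⟨x0, hx0⟩ := G.pos
  have h1 : f = (⟪f, x0⟫ / ⟪g, x0⟫) • g := by
    rw [← sub_eq_zero]
    refine posC_ortho G.cpt hx0 fun x hx => ?_
    obtain ⟨c, hc, he⟩ := Dx_one (ann_compact G.cpt) hy.2.2 (posC_mono ann_sub hx)
      (posC_mono ann_sub hx0) (h x hx x0 hx0)
    have hg0 := hx0 g hg.1
    rw [inner_sub_left, real_inner_smul_left, he f hf, he g hg]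
    field_simp
    ring
  exact ⟨_, div_pos (hx0 f hf.1) (hx0 g hg.1), h1⟩

/-- The dichotomy for the behaviour of an isometry at an extreme point. -/
lemma dichotomy [FiniteDimensional ℝ V] (G : Good K) (I : Iso K T S) {e : V} (he : EB K e) :
    CA K T e ∨ CB K T e := by
  have hK := G.cpt
  have hn := G.ne
  have hb := he.bd
  have hKe := ann_compact (y := e) hK
  -- lift the transverse cone at `e` to the cone itself
  have hL : ∀ g : V, ∃ r, g ∈ posC (ann K e) →
      r ∈ posC K ∧ (∀ f ∈ ann K e, ⟪f, r⟫ = ⟪f, g⟫) ∧ (g ∈ posC K → r = g) := by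
    intro g
    by_cases hg : g ∈ posC K
    · exact ⟨g, fun _ => ⟨hg, fun _ _ => rfl, fun _ => rfl⟩⟩
    · by_cases hg' : g ∈ posC (ann K e)
      · obtain ⟨t, ht, h1⟩ := absorb hK hb.1 hg'
        refine ⟨g + t • e, fun _ => ⟨h1 t le_rfl, fun f hf => ?_, fun h => absurd h hg⟩⟩
        rw [inner_add_right, real_inner_smul_right, hf.2]; ring
      · exact ⟨0, fun h => absurd h hg'⟩
  choose r hr using hL
  have hY : ∀ g : V, ∃ y, g ∈ posC (ann K e) → Ray K T e (r g) y := by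
    intro g
    by_cases hg : g ∈ posC (ann K e)
    · obtain ⟨y, hy⟩ := ray_image G I he.1 he.2 (hr g hg).1
      exact ⟨y, fun _ => hy⟩
    · exact ⟨0, fun h => absurd h hg⟩
  choose Y hY using hY
  have hE : ∀ p ∈ posC (ann K e), ∀ q ∈ posC (ann K e), Eqv K (Y p) (Y q) := fun p hp q hq =>
    (hY p hp).eqv G I hb (hr p hp).1 (hr q hq).1 (hY q hq)
  have hA : ∀ p ∈ posC (ann K e), ∀ q ∈ posC (ann K e), ann K (Y p) = ann K (Y q) :=
    fun p hp q hq => (hE p hp q hq).ann_eq (hY p hp).1.1 (hY q hq).1.1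
  have hTr : ∀ p ∈ posC (ann K e), ∀ y, T (r p) ∈ posC (ann K y) := fun p hp y =>
    posC_mono ann_sub (I.mapT _ (hr p hp).1)
  have hc : ∀ p ∈ posC (ann K e), IsCompact (ann K (Y p)) := fun p _ => ann_compact hK
  have hD1 : ∀ p ∈ posC (ann K e), ∀ q ∈ posC (ann K e), 1 ≤ Dx K (Y p) (Y q) := fun p hp q hq =>
    (hE p hp q hq).Dx_ge (hY p hp).1 (hY q hq).1
  have hD2 : ∀ p ∈ posC (ann K e), ∀ q ∈ posC (ann K e),
      1 ≤ Dx (ann K (Y p)) (T (r p)) (T (r q)) := fun p hp q hq =>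
    Dx_ge_one (hc p hp) (hY p hp).1.2.2 (hTr p hp _) (hTr q hq _)
  have hs : Split (ann K e) (fun p q => Real.log (Dx K (Y p) (Y q)))
      (fun p q => Real.log (Dx (ann K (Y p)) (T (r p)) (T (r q)))) := by
    refine ⟨?_, ?_, ?_, ?_, ?_, ?_, ?_, ?_⟩
    · intro p hp q hq
      have := (hY p hp).core G I hb (hr p hp).1 (hr q hq).1 (hY q hq)
      rw [Dx_congr (fun f hf => ((hr p hp).2.1 f hf).symm) (fun f hf => ((hr q hq).2.1 f hf).symm),
        this, Real.log_mul (by linarith [hD1 p hp q hq]) (by linarith [hD2 p hp q hq])]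
    · exact fun p hp q hq => Real.log_nonneg (hD1 p hp q hq)
    · exact fun p hp q hq => Real.log_nonneg (hD2 p hp q hq)
    · exact fun p hp q hq => by rw [Dx_symm]
    · exact fun p hp q hq => by rw [Dx_symm, hA p hp q hq]
    · intro p hp q hq s hs
      rw [← Real.log_mul (by linarith [hD1 p hp q hq]) (by linarith [hD1 q hq s hs])]
      refine Real.log_le_log (by linarith [hD1 p hp s hs]) ?_
      have h1 := (hE p hp q hq).tri (hE q hq s hs) (hY p hp).1 (hY q hq).1 (hY s hs).1
      have h2 := (hE s hs q hq).tri (hE q hq p hp) (hY s hs).1 (hY q hq).1 (hY p hp).1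
      have h3 := (hE s hs p hp).pos (hY s hs).1 (hY p hp).1
      have h4 := mul_pos ((hE p hp q hq).pos (hY p hp).1 (hY q hq).1)
        ((hE q hq s hs).pos (hY q hq).1 (hY s hs).1)
      have := mul_le_mul h1 h2 h3.le h4.le
      unfold Dx
      linarith
    · intro p hp q hq s hs
      rw [← Real.log_mul (by linarith [hD2 p hp q hq]) (by linarith [hD2 q hq s hs])]
      refine Real.log_le_log (by linarith [hD2 p hp s hs]) ?_
      rw [← hA p hp q hq]
      exact Dx_tri (hc p hp) (hY p hp).1.2.2 (hTr p hp _) (hTr q hq _) (hTr s hs _)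
    · intro p hp q hq
      -- pull back the Busemann function based at `Y p` and normalised at the image of `q`
      have hyp := (hY p hp).1
      have hTq := I.mapT _ (hr q hq).1
      have hTp := I.mapT _ (hr p hp).1
      have hz := (BusZ_Bf hK hn hyp hTq).comp G I
      obtain ⟨zi, w, N, B, -⟩ := hz.struct G
      have b1 := (best_Bf hK hn hyp hyp Eqv.refl hTq hTp).1
      have b2 := (best_Bf hK hn hyp hyp Eqv.refl hTp hTq).1
      set c1 := Mx K (Y p) (Y p) * Mx (ann K (Y p)) (T (r p)) (T (r q))
      set c2 := Mx K (Y p) (Y p) * Mx (ann K (Y p)) (T (r q)) (T (r p))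
      obtain ⟨s, hs, k, hk, hβ⟩ := B.onto G he.1 he.2 (hr p hp).1 (C := max c1 (max c2 1))
        (by positivity) (fun x hx => by
          rw [(hY p hp).Bf_eq G I hb (hr p hp).1 hx]
          refine (b1 _ (I.mapT x hx)).trans ?_
          exact mul_le_mul_of_nonneg_right (le_max_left _ _)
            (Bf_pos hK hn hyp hTp (I.mapT x hx)).le) (fun x hx => by
          rw [(hY p hp).Bf_eq G I hb (hr p hp).1 hx]
          refine (b2 _ (I.mapT x hx)).trans ?_
          exact mul_le_mul_of_nonneg_right ((le_max_left _ _).trans (le_max_right _ _))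
            (Bf_pos hK hn hyp hTq (I.mapT x hx)).le)
      have hs' : s ∈ posC (ann K e) := posC_mono ann_sub hs
      have hrs : r s = s := (hr s hs').2.2 hs
      have hRs := hY s hs'
      rw [hrs] at hRs
      have hEs := hE p hp s hs'
      have hys := hRs.1
      have hTs := I.mapT s hs
      have hβ' : ∀ x ∈ posC K, Bf K (Y p) (T (r q)) x = k * Bf K (Y s) (T s) x := by
        refine I.forall_im G hyp hys hTq hTs (P := fun a b => a = k * b) fun x hx => ?_
        rw [← hRs.Bf_eq G I hb hs hx]
        exact hβ x hx
      have m1 := best_Bf hK hn hyp hys hEs hTq hTs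
      have m2 := best_Bf hK hn hys hyp hEs.symm hTs hTq
      have l1 := m1.2 k fun x hx => (hβ' x hx).le
      have l2 := m2.2 k⁻¹ fun x hx => by rw [hβ' x hx, inv_mul_cancel_left₀ hk.ne']
      rw [← hEs.ann_eq hyp.1 hys.1] at l2
      have d1 := hD1 p hp s hs'
      have d2 := hD2 s hs' q hq
      rw [hrs, ← hA p hp s hs'] at d2
      have hle : Dx K (Y p) (Y s) * Dx (ann K (Y p)) (T s) (T (r q)) ≤ 1 := by
        have a1 := mul_pos (hEs.symm.pos hys hyp) (Mx_pos (hc p hp) hyp.2.2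
          (posC_mono ann_sub hTq) (posC_mono ann_sub hTs))
        have := mul_le_mul l1 l2 a1.le hk.le
        rw [mul_inv_cancel₀ hk.ne'] at this
        unfold Dx
        linarith
      refine ⟨s, hs', ?_, ?_⟩
      · have : Dx K (Y p) (Y s) = 1 := le_antisymm (by nlinarith) d1
        simp only [this, Real.log_one]
      · have : Dx (ann K (Y p)) (T s) (T (r q)) = 1 := le_antisymm (by nlinarith) d2
        simp only [hrs, ← hA p hp s hs', this, Real.log_one]
  have hne : (posC (ann K e)).Nonempty := G.pos.mono (posC_mono ann_sub)
  have toG : ∀ {x}, x ∈ posC K → x ∈ posC (ann K e) := fun h => posC_mono ann_sub h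
  rcases hs.indecomp hKe he.2 hne with h | h
  · left
    obtain ⟨p0, hp0⟩ := G.pos
    refine ⟨Y p0, fun p hp => ?_⟩
    have h0 := h p (toG hp) p0 (toG hp0)
    have hR := hY p (toG hp)
    rw [(hr p (toG hp)).2.2 hp] at hR
    have h1 : Dx K (Y p) (Y p0) = 1 := by
      have := Real.exp_log (show 0 < Dx K (Y p) (Y p0) by linarith [hD1 p (toG hp) p0 (toG hp0)])
      rw [← this]
      rw [h0, Real.exp_zero]
    have hEq := hE p (toG hp) p0 (toG hp0)
    have hp' := hEq.pos hR.1 (hY p0 (toG hp0)).1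
    have h2 := eq_of_Mx_mul (hEq.le (hY p0 (toG hp0)).1) (hEq.symm.le hR.1) hp' h1
    refine ⟨_, hp', ?_⟩
    rw [← G.eq_smul h2]
    exact hR
  · right
    have hk : ∀ p ∈ posC K, Sm K (Y p) := by
      intro p hp
      have hk1 : ∀ a ∈ posC K, ∀ b ∈ posC K, Dx (ann K (Y p)) (T a) (T b) = 1 := by
        intro a ha b hb'
        have h0 := h a (toG ha) b (toG hb')
        have hpos : 0 < Dx (ann K (Y a)) (T (r a)) (T (r b)) := by
          linarith [hD2 a (toG ha) b (toG hb')]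
        rw [← hA p (toG hp) a (toG ha), (hr a (toG ha)).2.2 ha, (hr b (toG hb')).2.2 hb']
          at h0 hpos
        rw [← Real.exp_log hpos, h0, Real.exp_zero]
      refine sm_of G (hY p (toG hp)).1 fun a ha b hb' => ?_
      obtain ⟨c, hc, ea⟩ := I.TS a ha
      obtain ⟨d, hd, eb⟩ := I.TS b hb'
      have := hk1 _ (I.mapS a ha) _ (I.mapS b hb')
      have hcc := ann_compact (y := Y p) hK
      have hnn := (hY p (toG hp)).1.2.2
      rwa [ea, eb, Dx_smul_left hcc hnn (posC_mono ann_sub ha)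
        (posC_smul hd (posC_mono ann_sub hb')) hc,
        Dx_smul_right hcc hnn (posC_mono ann_sub ha) (posC_mono ann_sub hb') hd] at this
    intro p hp y hy
    have := hk p hp
    have hR := hY p (toG hp)
    rw [(hr p (toG hp)).2.2 hp] at hR
    unfold Sm at *
    rwa [(hy.eqv G I hb hp hp hR).ann_eq hy.1.1 hR.1.1]

end HilbertIso

namespace HilbertIso

open Filter Topology
open scoped RealInnerProductSpace

variable {V : Type*} [NormedAddCommGroup V] [InnerProductSpace ℝ V]
variable {K : Set V} {x y z p q : V} {T S : V → V}

/-- If `e` is a smooth point, all rays towards `e` have image rays towards one point. -/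
lemma ca_of_sm (G : Good K) (I : Iso K T S) {e : V} (he : EB K e) (hs : Sm K e) : CA K T e := by
  have hK := G.cpt
  have hb := he.bd
  obtain ⟨p0, hp0⟩ := G.pos
  obtain ⟨y0, hy0⟩ := ray_image G I he.1 he.2 hp0
  refine ⟨y0, fun p hp => ?_⟩
  obtain ⟨y, hy⟩ := ray_image G I he.1 he.2 hp
  have h1 := hy.core G I hb hp hp0 hy0
  obtain ⟨g, hg⟩ := he.2
  have h2 : Dx (ann K e) p p0 = 1 := by
    refine Dx_eq_one_of (ann_compact hK) he.2 (posC_mono ann_sub hp0)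
      (c := ⟪g, p⟫ / ⟪g, p0⟫) (div_pos (hp g hg.1) (hp0 g hg.1)) fun f hf => ?_
    obtain ⟨c, hc, rfl⟩ := hs f hf g hg
    have := hp0 g hg.1
    rw [real_inner_smul_left, real_inner_smul_left]
    field_simp
  have hE := hy.eqv G I hb hp hp0 hy0
  have h3 := hE.Dx_ge hy.1 hy0.1
  have h4 := Dx_ge_one (ann_compact hK) hy.1.2.2 (posC_mono ann_sub (I.mapT p hp))
    (posC_mono (ann_sub (y := y)) (I.mapT p0 hp0))
  rw [h2] at h1
  have h5 : Dx K y y0 = 1 := le_antisymm (by nlinarith) h3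
  have hp' := hE.pos hy.1 hy0.1
  have h6 := eq_of_Mx_mul (hE.le hy0.1) (hE.symm.le hy.1) hp' h5
  refine ⟨_, hp', ?_⟩
  rw [← G.eq_smul h6]
  exact hy

/-! ### Incidence -/

/-- Two boundary points are incident if the supporting functionals of one of them all vanish at
the other. -/
def Inc (K : Set V) (y z : V) : Prop := (∀ f ∈ ann K y, ⟪f, z⟫ = 0) ∨ ∀ f ∈ ann K z, ⟪f, y⟫ = 0

lemma Inc.symm (h : Inc K y z) : Inc K z y := Or.symm h

lemma inc_low_aux (hK : IsCompact K) (hn : K.Nonempty) (hy : Bd K y) (hz : Bd K z)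
    (hp : p ∈ posC K) (hq : q ∈ posC K) (h : ∀ f ∈ ann K y, ⟪f, z⟫ = 0) {ε : ℝ} (hε : 0 < ε) :
    ∃ x ∈ posC K, Bf K y p x * Bf K z q x < ε := by
  have hKz := ann_compact (y := z) hK
  have hKy := ann_compact (y := y) hK
  set C := Mx (ann K z) (y + p) q with hC
  have hyp : y + p ∈ posC K := by rw [add_comm]; exact posC_add_nn hp hy.1
  have hCp : 0 < C := Mx_pos hKz hz.2.2 (posC_mono ann_sub hyp) (posC_mono ann_sub hq)
  obtain ⟨δ, hδ, hδ1, hδ2⟩ : ∃ δ : ℝ, 0 < δ ∧ δ ≤ 1 ∧ δ * C < ε := by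
    refine ⟨min 1 (ε / (2 * C)), by positivity, min_le_left _ _, ?_⟩
    calc min 1 (ε / (2 * C)) * C ≤ ε / (2 * C) * C := by gcongr; exact min_le_right _ _
      _ = ε / 2 := by field_simp
      _ < ε := by linarith
  have hx : y + z + δ • p ∈ posC K := by
    rw [add_comm]; exact posC_add_nn (posC_smul hδ hp) (nnC_add hy.1 hz.1)
  refine ⟨_, hx, ?_⟩
  have a1 : Mx K y (y + z + δ • p) ≤ 1 := Mx_le hn hx fun f hf => by
    have := hz.1 f hf
    have := hp f hf
    rw [inner_add_right, inner_add_right, real_inner_smul_right]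
    nlinarith
  have a2 : Mx K z (y + z + δ • p) ≤ 1 := Mx_le hn hx fun f hf => by
    have := hy.1 f hf
    have := hp f hf
    rw [inner_add_right, inner_add_right, real_inner_smul_right]
    nlinarith
  have a3 : Mx (ann K y) (y + z + δ • p) p ≤ δ :=
    Mx_le hy.2.2 (posC_mono ann_sub hp) fun f hf => by
      rw [inner_add_right, inner_add_right, real_inner_smul_right, hf.2, h f hf]
      linarith
  have a4 : Mx (ann K z) (y + z + δ • p) q ≤ C :=
    Mx_le hz.2.2 (posC_mono ann_sub hq) fun f hf => by
      have h1 := le_Mx hKz hz.2.2 (posC_mono ann_sub hq) (y + p) f hf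
      have h2 := hp f hf.1
      rw [inner_add_right] at h1
      rw [inner_add_right, inner_add_right, real_inner_smul_right, hf.2]
      nlinarith
  have b2 := Mx_pos_of hK hn hx hz.2.1
  have b3 := Mx_pos hKy hy.2.2 (posC_mono ann_sub hx) (posC_mono ann_sub hp)
  have b4 := Mx_pos hKz hz.2.2 (posC_mono ann_sub hx) (posC_mono ann_sub hq)
  have c1 : Bf K y p (y + z + δ • p) ≤ 1 * δ := mul_le_mul a1 a3 b3.le zero_le_one
  have c2 : Bf K z q (y + z + δ • p) ≤ 1 * C := mul_le_mul a2 a4 b4.le zero_le_one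
  have := mul_le_mul c1 c2 (mul_pos b2 b4).le (by linarith)
  linarith

/-- Incidence is read off the Busemann functions: it means that their product has infimum `0`. -/
lemma inc_iff (hK : IsCompact K) (hn : K.Nonempty) (hy : Bd K y) (hz : Bd K z)
    (hp : p ∈ posC K) (hq : q ∈ posC K) :
    Inc K y z ↔ ∀ ε : ℝ, 0 < ε → ∃ x ∈ posC K, Bf K y p x * Bf K z q x < ε := by
  constructor
  · rintro (h | h) ε hε
    · exact inc_low_aux hK hn hy hz hp hq h hε
    · obtain ⟨x, hx, h1⟩ := inc_low_aux hK hn hz hy hq hp h hε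
      exact ⟨x, hx, by rwa [mul_comm]⟩
  · intro h
    by_contra hI
    simp only [Inc, not_or, not_forall] at hI
    obtain ⟨⟨f, hf, hfz⟩, ⟨g, hg, hgy⟩⟩ := hI
    have hKz := ann_compact (y := z) hK
    have hKy := ann_compact (y := y) hK
    have p1 : 0 < Mx (ann K y) z p := Mx_pos_of hKy hy.2.2 (posC_mono ann_sub hp)
      ⟨f, hf, (hz.1 f hf.1).lt_of_ne' hfz⟩
    have p2 : 0 < Mx (ann K z) y q := Mx_pos_of hKz hz.2.2 (posC_mono ann_sub hq)
      ⟨g, hg, (hy.1 g hg.1).lt_of_ne' hgy⟩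
    obtain ⟨x, hx, hlt⟩ := h _ (mul_pos p1 p2)
    have q1 := Mx_pos_of hK hn hx hy.2.1
    have q2 := Mx_pos_of hK hn hx hz.2.1
    have m1 : Mx (ann K y) z p ≤ Mx K z x * Mx (ann K y) x p :=
      Mx_tri' hKy hy.2.2 q2.le (posC_mono ann_sub hp) fun f hf => le_Mx hK hn hx z f hf.1
    have m2 : Mx (ann K z) y q ≤ Mx K y x * Mx (ann K z) x q :=
      Mx_tri' hKz hz.2.2 q1.le (posC_mono ann_sub hq) fun f hf => le_Mx hK hn hx y f hf.1
    have := mul_le_mul m1 m2 p2.le (p1.le.trans m1)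
    unfold Bf at hlt
    linarith

/-- Isometries preserve incidence. -/
lemma inc_transfer (G : Good K) (I : Iso K T S) {y' z' p' q' : V} (hy : Bd K y) (hz : Bd K z)
    (hp : p ∈ posC K) (hq : q ∈ posC K) (hy' : Bd K y') (hz' : Bd K z') (hp' : p' ∈ posC K)
    (hq' : q' ∈ posC K) (h1 : ∀ x ∈ posC K, Bf K y p x = Bf K y' p' (T x))
    (h2 : ∀ x ∈ posC K, Bf K z q x = Bf K z' q' (T x)) : Inc K y z ↔ Inc K y' z' := by
  rw [inc_iff G.cpt G.ne hy hz hp hq, inc_iff G.cpt G.ne hy' hz' hp' hq']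
  constructor
  · intro h ε hε
    obtain ⟨x, hx, h3⟩ := h ε hε
    exact ⟨T x, I.mapT x hx, by rwa [← h1 x hx, ← h2 x hx]⟩
  · intro h ε hε
    obtain ⟨x, hx, h3⟩ := h ε hε
    refine ⟨S x, I.mapS x hx, ?_⟩
    obtain ⟨c, hc, e⟩ := I.TS x hx
    rwa [h1 _ (I.mapS x hx), h2 _ (I.mapS x hx), e, Bf_scale G.cpt G.ne hy' hp' hx hc,
      Bf_scale G.cpt G.ne hz' hq' hx hc]

/-! ### Exposed points -/

lemma Expo.supp (G : Good K) {e : V} (he : Expo K e) :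
    ∃ f ∈ ann K e, ∀ u ∈ nnC K, ⟪f, u⟫ = 0 → ∃ l : ℝ, u = l • e := by
  obtain ⟨-, -, h, h1, h2, h3⟩ := he
  have hne : h ≠ 0 := by
    rintro rfl
    obtain ⟨p, hp⟩ := G.pos
    have key : ∀ u ∈ nnC K, ∃ l : ℝ, u = l • e := fun u hu =>
      (h3 u hu (inner_zero_left _)).imp fun l hl => G.eq_smul hl
    have hd : Module.finrank ℝ V ≤ 1 := by
      refine finrank_le_one e fun v => ?_
      obtain ⟨t, ht, hm⟩ := posC_isOpen_dir G.cpt hp v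
      obtain ⟨a, ha⟩ := key p (posC_sub_nnC hp)
      obtain ⟨b, hb⟩ := key _ (posC_sub_nnC hm)
      refine ⟨t⁻¹ * (b - a), ?_⟩
      have : v = t⁻¹ • ((p + t • v) - p) := by
        rw [add_sub_cancel_left, smul_smul, inv_mul_cancel₀ ht.ne', one_smul]
      rw [this, hb, ha]
      module
    have := G.dim
    omega
  obtain ⟨c, hc, hm⟩ := G.sat h hne h1
  refine ⟨c • h, ⟨hm, by rw [real_inner_smul_left, h2, mul_zero]⟩, fun u hu h0 => ?_⟩
  rw [real_inner_smul_left] at h0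
  exact (h3 u hu ((mul_eq_zero.mp h0).resolve_left hc.ne')).imp fun l hl => G.eq_smul hl

lemma Expo.EB (G : Good K) {e : V} (he : Expo K e) : EB K e :=
  ⟨he.ext, let ⟨f, hf, _⟩ := he.supp G; ⟨f, hf⟩⟩

/-- An exposed point `e` is the only boundary point at which all supporting functionals of `e`
vanish. -/
lemma Expo.inc (G : Good K) {e u : V} (he : Expo K e) (hu : Bd K u) (h : ∀ f ∈ ann K e, ⟪f, u⟫ = 0) :
    ∃ l : ℝ, 0 < l ∧ u = l • e := by
  obtain ⟨f, hf, h1⟩ := he.supp G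
  obtain ⟨l, rfl⟩ := h1 u hu.1 (h f hf)
  obtain ⟨g, hg, hgu⟩ := hu.2.1
  rw [real_inner_smul_right] at hgu
  exact ⟨l, pos_of_mul_pos_left hgu (he.1 g hg), rfl⟩

lemma expo_pos [FiniteDimensional ℝ V] (G : Good K) {f : V} (hf : f ∈ K) :
    ∃ e, Expo K e ∧ 0 < ⟪f, e⟫ := by
  by_contra hcon
  push Not at hcon
  have := expo_detect G.pos G.cpt (Submodule.subset_span hf) fun v hv =>
    le_antisymm (hcon v hv) (hv.1 f hf)
  obtain ⟨p, hp⟩ := G.pos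
  have h1 := hp f hf
  rw [this, inner_zero_left] at h1
  exact lt_irrefl _ h1

lemma CA.scale {e : V} (h : CA K T e) {c : ℝ} (hc : 0 < c) : CA K T (c • e) := by
  obtain ⟨e', h⟩ := h
  refine ⟨e', fun p hp => ?_⟩
  obtain ⟨d, hd, ⟨b1, ⟨f, hf, b2⟩, ⟨g, hg⟩⟩, hR⟩ := h p hp
  refine ⟨c * d, by positivity, ⟨?_, ⟨f, hf, ?_⟩, ⟨g, hg.1, ?_⟩⟩, fun t ht => ?_⟩
  · rw [← smul_smul]; exact nnC_smul hc.le b1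
  · rw [← smul_smul, real_inner_smul_right]; positivity
  · rw [← smul_smul, real_inner_smul_right, hg.2, mul_zero]
  · obtain ⟨k, hk, hT⟩ := hR (t * c) (by positivity)
    refine ⟨k, hk, ?_⟩
    rw [smul_smul, hT]
    module

end HilbertIso

namespace HilbertIso

open Filter Topology
open scoped RealInnerProductSpace

variable {V : Type*} [NormedAddCommGroup V] [InnerProductSpace ℝ V]
variable {K : Set V} {x y z p q : V} {T S : V → V}

/-! ### Isometries focusing at every exposed point are linear -/

/-- The scaling factor of `T` at `x`, measured by `e` and the limit `e'` of its rays. -/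
def rho (K : Set V) (T : V → V) (e e' x : V) : ℝ := Mx K e' (T x) / Mx K e x

/-- Rays towards `e` are mapped to rays towards `e'`. -/
structure Foc (K : Set V) (T : V → V) (e e' : V) : Prop where
  bd : Bd K e
  bd' : Bd K e'
  ray : ∀ p ∈ posC K, Ray K T e p ((rho K T e e' p)⁻¹ • e')

/-- Isometries preserve the parametrisation of rays. -/
lemma Ray.Mx_eq (G : Good K) (I : Iso K T S) {e : V} (he : Bd K e) (hp : p ∈ posC K)
    (hR : Ray K T e p y) : Mx K e p = Mx K y (T p) := by
  have hTp := I.mapT p hp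
  have h1 := Dx_ray G.cpt G.ne hp he.1 he.2.2 zero_le_one
  have h2 := Dx_ray G.cpt G.ne hTp hR.1.1 hR.1.2.2 zero_le_one
  obtain ⟨c, hc, h3⟩ := hR.2 1 zero_le_one
  rw [← I.dT p hp _ (posC_add_smul zero_le_one hp he.1), h3, Dx_smul_right G.cpt G.ne hTp
    (posC_add_smul zero_le_one hTp hR.1.1) hc, h2] at h1
  linarith

lemma CA.foc (G : Good K) (I : Iso K T S) {e : V} (he : EB K e) (h : CA K T e) :
    ∃ e', Foc K T e e' := by
  obtain ⟨e', h⟩ := h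
  have hbd : Bd K e' := by
    obtain ⟨p, hp⟩ := G.pos
    obtain ⟨c, hc, ⟨h1, ⟨f, hf, h2⟩, g, hg⟩, -⟩ := h p hp
    have e1 : ∀ f : V, ⟪f, e'⟫ = c⁻¹ * ⟪f, c • e'⟫ := fun f => by
      rw [real_inner_smul_right, inv_mul_cancel_left₀ hc.ne']
    have hci := inv_pos.mpr hc
    refine ⟨fun f hf => ?_, ⟨f, hf, ?_⟩, ⟨g, hg.1, ?_⟩⟩
    · rw [e1]; exact mul_nonneg hci.le (h1 f hf)
    · rw [e1]; exact mul_pos hci h2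
    · rw [e1, hg.2, mul_zero]
  refine ⟨e', he.bd, hbd, fun p hp => ?_⟩
  obtain ⟨c, hc, hR⟩ := h p hp
  have hTp := I.mapT p hp
  have h1 := hR.Mx_eq G I he.bd hp
  rw [Mx_smul_left G.cpt G.ne hTp hc.le] at h1
  have h2 := Mx_pos_of G.cpt G.ne hTp hbd.2.1
  have h3 : (rho K T e e' p)⁻¹ = c := by
    unfold rho
    rw [h1]
    field_simp
  rw [h3]
  exact hR

variable {e e' f f' : V}

lemma Foc.rho_pos (G : Good K) (I : Iso K T S) (F : Foc K T e e') (hp : p ∈ posC K) :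
    0 < rho K T e e' p :=
  div_pos (Mx_pos_of G.cpt G.ne (I.mapT p hp) F.bd'.2.1) (Mx_pos_of G.cpt G.ne hp F.bd.2.1)

lemma Foc.self (G : Good K) (I : Iso K T S) (F : Foc K T e e') (hp : p ∈ posC K) {t k : ℝ}
    (ht : 0 ≤ t) (hk : 0 < k) (h : T (p + t • e) = k • (T p + t • (rho K T e e' p)⁻¹ • e')) :
    rho K T e e' (p + t • e) = rho K T e e' p / k := by
  have hK := G.cpt
  have hn := G.ne
  have hTp := I.mapT p hp
  have hr := F.rho_pos G I hp
  have m1 := Mx_pos_of hK hn hp F.bd.2.1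
  have m2 := Mx_pos_of hK hn hTp F.bd'.2.1
  have hs : 0 ≤ t * (rho K T e e' p)⁻¹ := by positivity
  have e1 : rho K T e e' p * Mx K e p = Mx K e' (T p) := by unfold rho; field_simp
  have e2 : rho K T e e' (p + t • e) = (Mx K e' (T p) / (1 + t * (rho K T e e' p)⁻¹ *
      Mx K e' (T p)) / k) / (Mx K e p / (1 + t * Mx K e p)) := by
    conv_lhs => unfold rho
    rw [h, smul_smul, Mx_smul_right hK hn (posC_add_smul hs hTp F.bd'.1) hk,
      Mx_dir_ray hK hn hTp F.bd'.1 hs, Mx_dir_ray hK hn hp F.bd.1 ht]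
  rw [e2, ← e1]
  field_simp

lemma Mx_pair (hK : IsCompact K) (hn : K.Nonempty) {a b : ℝ} (ha : 0 ≤ a) (hb : 0 < b)
    (he : Bd K e) (h : a • e + b • f ∈ posC K) : Mx K f (a • e + b • f) = 1 / b := by
  refine Mx_eq hK hn h (fun g hg => ?_) ?_
  · have := he.1 g hg
    rw [inner_add_right, real_inner_smul_right, real_inner_smul_right]
    field_simp
    nlinarith
  · obtain ⟨g, hg⟩ := he.2.2
    refine ⟨g, hg.1, ?_⟩
    rw [inner_add_right, real_inner_smul_right, real_inner_smul_right, hg.2]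
    field_simp
    ring

/-- Foci whose image points span the same ray themselves span the same ray. -/
lemma Foc.inj (G : Good K) (I : Iso K T S) (F : Foc K T e e') (F' : Foc K T f f') {d : ℝ}
    (hd : f' = d • e') : ∃ l : ℝ, 0 < l ∧ f = l • e := by
  obtain ⟨p, hp⟩ := G.pos
  have hd0 : 0 < d := by
    obtain ⟨g, hg, h1⟩ := F'.bd'.2.1
    rw [hd, real_inner_smul_right] at h1
    exact pos_of_mul_pos_left h1 (F.bd'.1 g hg)
  have r1 := F.rho_pos G I hp
  have r2 := F'.rho_pos G I hp
  set s := (rho K T e e' p)⁻¹ * rho K T f f' p / d with hs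
  have hs0 : 0 < s := by positivity
  obtain ⟨k, hk, h1⟩ := (F.ray p hp).2 1 zero_le_one
  obtain ⟨k', hk', h2⟩ := (F'.ray p hp).2 s hs0.le
  have h3 : T (p + (1 : ℝ) • e) = (k / k') • T (p + s • f) := by
    have e1 : k / k' * k' = k := div_mul_cancel₀ _ hk'.ne'
    have e2 : s * (rho K T f f' p)⁻¹ * d = (rho K T e e' p)⁻¹ := by rw [hs]; field_simp
    have e3 : s • (rho K T f f' p)⁻¹ • f' = (rho K T e e' p)⁻¹ • e' := by
      rw [← e2, mul_smul, mul_smul, ← hd]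
    rw [h1, h2, e3, smul_smul (k / k') k', e1, one_smul]
  obtain ⟨c, hc, h4⟩ := I.inj G (posC_add_smul zero_le_one hp F.bd.1)
    (posC_add_smul hs0.le hp F'.bd.1) (div_pos hk hk') h3
  have hc1 : c = 1 := by
    apply le_antisymm
    · obtain ⟨g, hg⟩ := F.bd.2.2
      have h5 := congrArg (fun v => ⟪g, v⟫) h4
      simp only [inner_add_right, real_inner_smul_right, hg.2] at h5
      have h6 := hp g hg.1
      have h7 := F'.bd.1 g hg.1
      by_contra hcon
      push Not at hcon
      have : 0 ≤ s * ⟪g, f⟫ := by positivity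
      nlinarith
    · obtain ⟨g, hg⟩ := F'.bd.2.2
      have h5 := congrArg (fun v => ⟪g, v⟫) h4
      simp only [inner_add_right, real_inner_smul_right, hg.2] at h5
      have h6 := hp g hg.1
      have h7 := F.bd.1 g hg.1
      by_contra hcon
      push Not at hcon
      nlinarith
  rw [hc1, one_smul, one_smul] at h4
  refine ⟨s⁻¹, inv_pos.mpr hs0, ?_⟩
  rw [add_left_cancel h4, smul_smul, inv_mul_cancel₀ hs0.ne', one_smul]

/-- Along a ray towards `e`, all scaling factors change in the same way. -/
lemma Foc.cross (G : Good K) (I : Iso K T S) (F : Foc K T e e') (F' : Foc K T f f')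
    (hp : p ∈ posC K) {t k : ℝ} (ht : 0 ≤ t) (hk : 0 < k)
    (h : T (p + t • e) = k • (T p + t • (rho K T e e' p)⁻¹ • e')) :
    rho K T f f' (p + t • e) = rho K T f f' p / k := by
  have hK := G.cpt
  have hn := G.ne
  have hTp := I.mapT p hp
  have r1 := F.rho_pos G I hp
  have r2 := F'.rho_pos G I hp
  have hq := posC_add_smul ht hp F.bd.1
  by_cases hd : ∃ d : ℝ, f' = d • e'
  · obtain ⟨d, hd⟩ := hd
    obtain ⟨l, hl, hf⟩ := F.inj G I F' hd
    have hd0 : 0 < d := by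
      obtain ⟨g, hg, h1⟩ := F'.bd'.2.1
      rw [hd, real_inner_smul_right] at h1
      exact pos_of_mul_pos_left h1 (F.bd'.1 g hg)
    have e1 : ∀ x ∈ posC K, rho K T f f' x = d / l * rho K T e e' x := by
      intro x hx
      unfold rho
      rw [hf, hd, Mx_smul_left hK hn (I.mapT x hx) hd0.le, Mx_smul_left hK hn hx hl.le]
      field_simp
    rw [e1 _ hq, e1 _ hp, F.self G I hp ht hk h]
    ring
  by_cases hab : ∃ a b : ℝ, T p = a • e' + b • f'
  · obtain ⟨a, b, hab⟩ := hab
    have hb : 0 < b := by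
      obtain ⟨g, hg⟩ := F.bd'.2.2
      have h1 := hTp g hg.1
      rw [hab, inner_add_right, real_inner_smul_right, real_inner_smul_right, hg.2, mul_zero,
        zero_add] at h1
      exact pos_of_mul_pos_left h1 (F'.bd'.1 g hg.1)
    have ha : 0 < a := by
      obtain ⟨g, hg⟩ := F'.bd'.2.2
      have h1 := hTp g hg.1
      rw [hab, inner_add_right, real_inner_smul_right, real_inner_smul_right, hg.2, mul_zero,
        add_zero] at h1
      exact pos_of_mul_pos_left h1 (F.bd'.1 g hg.1)
    -- travelling towards `e'` and then towards `f'` leads back to the ray of `T p`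
    obtain ⟨α, β, hα, hβ, hpe⟩ : ∃ α β : ℝ, 0 < α ∧ 0 < β ∧ p = α • e + β • f := by
      obtain ⟨k0, hk0, h0⟩ := (F.ray p hp).2 1 zero_le_one
      set u := (rho K T e e' p)⁻¹ with hu
      have hu0 : 0 < u := inv_pos.mpr r1
      have hq1 := posC_add_smul zero_le_one hp F.bd.1
      set q := p + (1 : ℝ) • e with hqdef
      have r3 := F'.rho_pos G I hq1
      set s := k0 * b * u / a * rho K T f f' q with hs
      have hs0 : 0 < s := by positivity
      obtain ⟨k1, hk1, h1⟩ := (F'.ray q hq1).2 s hs0.le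
      have h2 : T (q + s • f) = (k1 * k0 * (1 + u / a)) • T p := by
        rw [h1, h0, hab, smul_smul s]
        have : s * (rho K T f f' q)⁻¹ = k0 * b * u / a := by rw [hs]; field_simp
        rw [this]
        have e1 : (k1 * k0 * (1 + u / a)) • (a • e' + b • f') =
          (k1 * k0 * (1 + u / a) * a) • e' + (k1 * k0 * (1 + u / a) * b) • f' := by module
        have e2 : k1 * k0 * (1 + u / a) * a = k1 * k0 * (a + u) := by field_simp
        rw [e1, e2]
        module
      obtain ⟨d, hd0, h3⟩ := I.inj G (posC_add_smul hs0.le hq1 F'.bd.1) hp (by positivity) h2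
      have h4 : e + s • f = (d - 1) • p := by
        rw [sub_smul, ← h3, hqdef]; module
      have hd1 : 0 < d - 1 := by
        obtain ⟨g, hg, h5⟩ := F.bd.2.1
        have h6 := congrArg (fun v => ⟪g, v⟫) h4
        simp only [inner_add_right, real_inner_smul_right] at h6
        have h7 := F'.bd.1 g hg
        have h8 := hp g hg
        have h9 : 0 < (d - 1) * ⟪g, p⟫ := by rw [← h6]; positivity
        exact pos_of_mul_pos_left h9 h8.le
      refine ⟨(d - 1)⁻¹, (d - 1)⁻¹ * s, by positivity, by positivity, ?_⟩
      rw [← smul_smul, ← smul_add, h4, smul_smul, inv_mul_cancel₀ hd1.ne', one_smul]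
    have e1 : p + t • e = (α + t) • e + β • f := by rw [hpe]; module
    have e2 : T p + t • (rho K T e e' p)⁻¹ • e' = (a + t * (rho K T e e' p)⁻¹) • e' + b • f' := by
      rw [hab]; module
    have hs : 0 ≤ t * (rho K T e e' p)⁻¹ := by positivity
    have hm : T p + t • (rho K T e e' p)⁻¹ • e' ∈ posC K := by
      rw [smul_smul]; exact posC_add_smul hs hTp F.bd'.1
    have m1 : Mx K f (p + t • e) = 1 / β := by
      rw [e1]
      exact Mx_pair hK hn (by positivity) hβ F.bd (by rw [← e1]; exact hq)
    have m2 : Mx K f p = 1 / β := by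
      conv_lhs => rw [hpe]
      exact Mx_pair hK hn hα.le hβ F.bd (by rw [← hpe]; exact hp)
    have m3 : Mx K f' (T p) = 1 / b := by
      rw [hab]
      exact Mx_pair hK hn ha.le hb F.bd' (by rw [← hab]; exact hTp)
    have m4 : Mx K f' (T (p + t • e)) = 1 / b / k := by
      rw [h, Mx_smul_right hK hn hm hk, e2,
        Mx_pair hK hn (by positivity) hb F.bd' (by rw [← e2]; exact hm)]
    unfold rho
    rw [m1, m2, m3, m4]
    ring
  · -- compare the two ways of computing the image of `p + t e + f`
    obtain ⟨k', hk', h1⟩ := (F'.ray _ hq).2 1 zero_le_one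
    obtain ⟨k1, hk1, h2⟩ := (F'.ray p hp).2 1 zero_le_one
    have hq2 := posC_add_smul zero_le_one hp F'.bd.1
    obtain ⟨k2, hk2, h3⟩ := (F.ray _ hq2).2 t ht
    rw [show p + t • e + (1 : ℝ) • f = p + (1 : ℝ) • f + t • e by module, h3, h2, h] at h1
    have r3 := F'.rho_pos G I hq
    set c := (rho K T e e' p)⁻¹
    set c1 := (rho K T f f' p)⁻¹ with hc1
    set c2 := (rho K T f f' (p + t • e))⁻¹ with hc2
    set c3 := (rho K T e e' (p + (1 : ℝ) • f))⁻¹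
    have h4 : (k2 * k1 - k' * k) • T p + (k2 * t * c3 - k' * k * t * c) • e' +
        (k2 * k1 * c1 - k' * c2) • f' = 0 := by
      have := sub_eq_zero.mpr h1
      rw [← this]
      module
    have hA : k2 * k1 - k' * k = 0 := by
      by_contra hne
      refine hab ⟨-(k2 * k1 - k' * k)⁻¹ * (k2 * t * c3 - k' * k * t * c),
        -(k2 * k1 - k' * k)⁻¹ * (k2 * k1 * c1 - k' * c2), ?_⟩
      have : T p = (k2 * k1 - k' * k)⁻¹ • ((k2 * k1 - k' * k) • T p) := by
        rw [smul_smul, inv_mul_cancel₀ hne, one_smul]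
      rw [this, eq_neg_of_add_eq_zero_left ((add_assoc _ _ _).symm.trans h4)]
      module
    rw [hA, zero_smul, zero_add] at h4
    have hC : k2 * k1 * c1 - k' * c2 = 0 := by
      by_contra hne
      refine hd ⟨-(k2 * k1 * c1 - k' * c2)⁻¹ * (k2 * t * c3 - k' * k * t * c), ?_⟩
      have : f' = (k2 * k1 * c1 - k' * c2)⁻¹ • ((k2 * k1 * c1 - k' * c2) • f') := by
        rw [smul_smul, inv_mul_cancel₀ hne, one_smul]
      rw [this, eq_neg_of_add_eq_zero_right h4]
      module
    have h5 : c2 = k * c1 := by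
      have : k' * c2 = k' * (k * c1) := by
        rw [sub_eq_zero.mp hA] at hC
        linarith
      exact mul_left_cancel₀ hk'.ne' this
    rw [hc1, hc2] at h5
    rw [← inv_inj, h5]
    field_simp

end HilbertIso

namespace HilbertIso

open Filter Topology
open scoped RealInnerProductSpace

variable {V : Type*} [NormedAddCommGroup V] [InnerProductSpace ℝ V]
variable {K : Set V} {x y z p q : V} {T S : V → V}

variable {e e' f f' : V}

/-- If translations by exposed directions change `A` by a constant in `N`, so do all
translations. -/
lemma translate_all [FiniteDimensional ℝ V] (G : Good K) {W : Type*} [AddCommGroup W] [Module ℝ W]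
    (N : Submodule ℝ W) {A : V → W}
    (h : ∀ e, Expo K e → ∃ w ∈ N, ∀ t : ℝ, 0 ≤ t → ∀ p ∈ posC K, A (p + t • e) = A p + t • w)
    (v : V) : ∃ w ∈ N, ∀ p ∈ posC K, p + v ∈ posC K → A (p + v) = A p + w := by
  let U : Set V := {u | u ∈ nnC K ∧
    ∃ w ∈ N, ∀ t : ℝ, 0 ≤ t → ∀ p ∈ posC K, A (p + t • u) = A p + t • w}
  have h0 : (0 : V) ∈ U := ⟨fun f _ => by simp, 0, N.zero_mem, fun t _ p _ => by simp⟩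
  have hsp : Submodule.span ℝ U = ⊤ := by
    refine expo_span G.pos G.cpt (fun v hv => ⟨hv.1, h v hv⟩) fun v hv => ?_
    rw [G.sep v hv]
    exact h0
  have hadd : ∀ u ∈ U, ∀ v ∈ U, u + v ∈ U := by
    rintro u ⟨hu, w, hwN, hw⟩ v ⟨hv, w', hwN', hw'⟩
    refine ⟨nnC_add hu hv, w + w', N.add_mem hwN hwN', fun t ht p hp => ?_⟩
    rw [smul_add, ← add_assoc, hw' t ht _ (posC_add_smul ht hp hu), hw t ht p hp, smul_add,
      add_assoc]
  have hsm : ∀ c : ℝ, 0 ≤ c → ∀ u ∈ U, c • u ∈ U := by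
    rintro c hc u ⟨hu, w, hwN, hw⟩
    refine ⟨nnC_smul hc hu, c • w, N.smul_mem c hwN, fun t ht p hp => ?_⟩
    rw [smul_smul, hw _ (mul_nonneg ht hc) p hp, smul_smul]
  obtain ⟨u, ⟨hu, w, hwN, hw⟩, u', ⟨hu', w', hwN', hw'⟩, huv⟩ :=
    span_diff h0 hadd hsm (w := v) (by rw [hsp]; trivial)
  refine ⟨w - w', N.sub_mem hwN hwN', fun p hp hpv => ?_⟩
  have e1 := hw 1 zero_le_one p hp
  have e2 := hw' 1 zero_le_one _ hpv
  rw [one_smul, one_smul] at e1 e2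
  rw [huv, show p + (u - u') + u' = p + u by abel, e1] at e2
  rw [huv, eq_sub_of_add_eq e2.symm]
  abel

lemma exists_base (G : Good K) (v : V) : ∃ p ∈ posC K, p + v ∈ posC K := by
  obtain ⟨p, hp⟩ := G.pos
  obtain ⟨t, ht, h⟩ := posC_isOpen_dir G.cpt hp v
  refine ⟨t⁻¹ • p, posC_smul (inv_pos.mpr ht) hp, ?_⟩
  have := posC_smul (inv_pos.mpr ht) h
  rwa [smul_add, smul_smul, inv_mul_cancel₀ ht.ne', one_smul] at this

/-- A positively homogeneous map for which exposed directions translate is linear. -/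
lemma linear_of_translate [FiniteDimensional ℝ V] (G : Good K) {A : V → V}
    (h : ∀ e, Expo K e → ∃ w, ∀ t : ℝ, 0 ≤ t → ∀ p ∈ posC K, A (p + t • e) = A p + t • w)
    (hh : ∀ c : ℝ, 0 < c → ∀ x ∈ posC K, A (c • x) = c • A x) :
    ∃ g : V →ₗ[ℝ] V, ∀ x ∈ posC K, A x = g x := by
  have h1 : ∀ v, ∃ w, ∀ p ∈ posC K, p + v ∈ posC K → A (p + v) = A p + w := fun v => by
    obtain ⟨w, -, hw⟩ := translate_all G ⊤ (A := A)
      (fun e he => (h e he).imp fun w hw => ⟨trivial, hw⟩) v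
    exact ⟨w, hw⟩
  choose W hW using h1
  have hadd : ∀ u v, W (u + v) = W u + W v := by
    intro u v
    obtain ⟨p, hp, hpu⟩ := exists_base G u
    obtain ⟨q, hq, hquv⟩ := exists_base G (u + v)
    have a1 : p + q ∈ posC K := posC_add_nn hp (posC_sub_nnC hq)
    have a2 : p + q + u ∈ posC K := by
      rw [show p + q + u = p + u + q by abel]
      exact posC_add_nn hpu (posC_sub_nnC hq)
    have a3 : p + q + (u + v) ∈ posC K := by
      rw [show p + q + (u + v) = q + (u + v) + p by abel]
      exact posC_add_nn hquv (posC_sub_nnC hp)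
    have b1 := hW (u + v) _ a1 a3
    rw [← add_assoc, hW v _ a2 (by rw [add_assoc]; exact a3), hW u _ a1 a2, add_assoc] at b1
    exact (add_left_cancel b1).symm
  have h0 : W 0 = 0 := by
    have := hadd 0 0
    rw [add_zero] at this
    exact left_eq_add.mp this
  have hneg : ∀ u, W (-u) = -W u := fun u => by
    rw [eq_neg_iff_add_eq_zero, ← hadd, neg_add_cancel, h0]
  have hpos : ∀ c : ℝ, 0 < c → ∀ u, W (c • u) = c • W u := by
    intro c hc u
    obtain ⟨p, hp, hpu⟩ := exists_base G u
    have b1 := hW (c • u) _ (posC_smul hc hp) (by rw [← smul_add]; exact posC_smul hc hpu)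
    rw [← smul_add, hh c hc _ hpu, hh c hc p hp, hW u p hp hpu, smul_add] at b1
    exact (add_left_cancel b1).symm
  have hsm : ∀ (c : ℝ) u, W (c • u) = c • W u := by
    intro c u
    rcases lt_trichotomy c 0 with hc | hc | hc
    · have := hpos (-c) (neg_pos.mpr hc) u
      rw [neg_smul, neg_smul, hneg] at this
      exact neg_inj.mp this
    · rw [hc, zero_smul, zero_smul, h0]
    · exact hpos c hc u
  refine ⟨⟨⟨W, hadd⟩, hsm⟩, fun x hx => ?_⟩
  change A x = W x
  have b1 := hW x x hx (posC_add_nn hx (posC_sub_nnC hx))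
  rw [← two_smul ℝ x, hh 2 two_pos x hx, two_smul] at b1
  exact add_left_cancel b1

/-- `T` agrees with a linear automorphism up to positive factors. -/
def Lin (K : Set V) (T : V → V) : Prop :=
  ∃ g : V ≃ₗ[ℝ] V, ∀ x ∈ posC K, ∃ c : ℝ, 0 < c ∧ T x = c • g x

lemma span_posC (G : Good K) : Submodule.span ℝ (posC K) = ⊤ := by
  refine (Submodule.eq_top_iff'.mpr fun v => ?_)
  obtain ⟨p, hp, hpv⟩ := exists_base G v
  rw [show v = p + v - p by abel]
  exact Submodule.sub_mem _ (Submodule.subset_span hpv) (Submodule.subset_span hp)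

/-- The rescaled map `x ↦ rho(x) T x` is translated by a constant vector along every exposed
direction: by `Foc.cross` the scaling factors of any two foci have constant ratio. -/
lemma lin_of_ca [FiniteDimensional ℝ V] (G : Good K) (I : Iso K T S)
    (h : ∀ e, Expo K e → CA K T e) : Lin K T := by
  have hK := G.cpt
  have hn := G.ne
  obtain ⟨f, hf⟩ := hn
  obtain ⟨e1, he1, -⟩ := expo_pos G hf
  obtain ⟨e1', F1⟩ := (h e1 he1).foc G I (he1.EB G)
  set r := rho K T e1 e1' with hr
  have hrp : ∀ p ∈ posC K, 0 < r p := fun p hp => F1.rho_pos G I hp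
  -- the ratio of the scaling factors of two foci is constant
  have hφ : ∀ e e', Foc K T e e' → ∃ c : ℝ, ∀ p ∈ posC K, r p / rho K T e e' p = c := by
    intro e e' F
    obtain ⟨p0, hp0⟩ := G.pos
    refine ⟨r p0 / rho K T e e' p0, fun p hp => ?_⟩
    obtain ⟨w, hw, h1⟩ := translate_all G (⊥ : Submodule ℝ ℝ)
      (A := fun p => r p / rho K T e e' p) (by
        intro ε hε
        refine ⟨0, Submodule.zero_mem _, fun t ht p hp => ?_⟩
        obtain ⟨ε', Fε⟩ := (h ε hε).foc G I (hε.EB G)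
        obtain ⟨k, hk, h2⟩ := (Fε.ray p hp).2 t ht
        simp only [smul_zero, add_zero]
        rw [hr, Fε.cross G I F1 hp ht hk h2, Fε.cross G I F hp ht hk h2]
        field_simp) (p - p0)
    have h2 := h1 p0 hp0 (by rw [add_sub_cancel]; exact hp)
    rw [add_sub_cancel, (Submodule.mem_bot ℝ).mp hw, add_zero] at h2
    exact h2
  obtain ⟨g, hg⟩ := linear_of_translate G (A := fun x => r x • T x) (by
      intro e he
      obtain ⟨e', F⟩ := (h e he).foc G I (he.EB G)
      obtain ⟨c, hc⟩ := hφ e e' F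
      refine ⟨c • e', fun t ht p hp => ?_⟩
      obtain ⟨k, hk, h2⟩ := (F.ray p hp).2 t ht
      rw [h2, hr, F.cross G I F1 hp ht hk h2, ← hr, smul_smul, div_mul_cancel₀ _ hk.ne', smul_add,
        ← hc p hp]
      module) (by
      intro c hc x hx
      obtain ⟨d, hd, h1⟩ := I.ray G hx hc
      have h2 : r (c • x) = c / d * r x := by
        rw [hr]
        unfold rho
        rw [h1, Mx_smul_right hK G.ne (I.mapT x hx) hd, Mx_smul_right hK G.ne hx hc]
        field_simp
      change r (c • x) • T (c • x) = c • r x • T x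
      rw [h1, h2, smul_smul, smul_smul]
      congr 1
      field_simp)
  have hsurj : Function.Surjective g := by
    rw [← LinearMap.range_eq_top, eq_top_iff, ← span_posC G, Submodule.span_le]
    intro x hx
    obtain ⟨c, hc, h1⟩ := I.TS x hx
    have h2 := hg _ (I.mapS x hx)
    have h3 := hrp _ (I.mapS x hx)
    refine ⟨(r (S x) * c)⁻¹ • S x, ?_⟩
    rw [map_smul, ← h2, h1, smul_smul, smul_smul]
    have : (r (S x) * c)⁻¹ * r (S x) * c = 1 := by field_simp
    rw [this, one_smul]
  have hbij : Function.Bijective g := ⟨LinearMap.injective_iff_surjective.mpr hsurj, hsurj⟩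
  refine ⟨LinearEquiv.ofBijective g hbij, fun x hx => ⟨(r x)⁻¹, inv_pos.mpr (hrp x hx), ?_⟩⟩
  rw [LinearEquiv.ofBijective_apply, ← hg x hx, smul_smul, inv_mul_cancel₀ (hrp x hx).ne', one_smul]

end HilbertIso

namespace HilbertIso

open Filter Topology
open scoped RealInnerProductSpace

variable {V : Type*} [NormedAddCommGroup V] [InnerProductSpace ℝ V]
variable {K : Set V} {x y z p q : V} {T S : V → V}

/-! ### One focusing extreme point makes all exposed points focus -/

/-- If `T` focuses at `e1` and the image of a ray towards `e2` ends at `y`, the preimage of the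
segment from `e1'` to `y` lies in the plane of `e1` and `e2`. -/
lemma mix_plane [FiniteDimensional ℝ V] (G : Good K) (I : Iso K T S) {e1 e1' e2 : V}
    (F : Foc K T e1 e1') (h2 : Expo K e2) (hne : ∀ l : ℝ, e2 ≠ l • e1) (hp : p ∈ posC K)
    (hR : Ray K T e2 p y) (hw : e1' + y ∈ posC K) :
    ∃ P ∈ posC K, ∃ α β c : ℝ, 0 < β ∧ 0 < c ∧ P = α • e1 + β • e2 ∧ T P = c • (e1' + y) := by
  have hK := G.cpt
  have hn := G.ne
  set w := e1' + y with hwdef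
  have hP := I.mapS w hw
  obtain ⟨c, hc, hTP⟩ := I.TS w hw
  set P := S w with hPdef
  set U : Submodule ℝ V := Submodule.span ℝ {P, e1} with hU
  have hBZ := BusZ_Bf hK hn hR.1 hw
  have hzU : ∀ k : ℕ, S (y + ((1 : ℝ) / (k + 1)) • w) ∈ U := by
    intro k
    have hδ : (0 : ℝ) < 1 / (k + 1) := by positivity
    have hz : y + ((1 : ℝ) / (k + 1)) • w ∈ posC K := hBZ.2.1 k
    generalize (1 : ℝ) / (k + 1) = δ at hδ hz
    obtain ⟨c', hc', h1⟩ := I.TS _ hz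
    have hs := I.mapS _ hz
    set s := S (y + δ • w) with hsdef
    have hr := F.rho_pos G I hs
    have ht : 0 ≤ c' * rho K T e1 e1' s := by positivity
    obtain ⟨k', hk', h3⟩ := (F.ray s hs).2 _ ht
    have h4 : T (s + (c' * rho K T e1 e1' s) • e1) = (k' * c' * (1 + δ) / c) • T P := by
      rw [h3, h1, hTP, smul_smul (c' * rho K T e1 e1' s), mul_assoc, mul_inv_cancel₀ hr.ne',
        mul_one, smul_smul _ c, div_mul_cancel₀ _ hc.ne', hwdef]
      module
    obtain ⟨d, hd, h5⟩ := I.inj G (posC_add_smul ht hs F.bd.1) hP (by positivity) h4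
    rw [eq_sub_of_add_eq h5]
    exact U.sub_mem (U.smul_mem _ (Submodule.subset_span (by simp)))
      (U.smul_mem _ (Submodule.subset_span (by simp)))
  obtain ⟨zi, w', N, B, hw'⟩ := (hBZ.comp G I).struct G
  have hzi : zi ∈ U := by
    refine (Submodule.closed_of_finiteDimensional U).mem_of_tendsto B.lim
      (Eventually.of_forall fun k => ?_)
    obtain ⟨c0, j, h⟩ := hw' k
    rw [h]
    exact U.smul_mem _ (hzU j)
  have hTp := I.mapT p hp
  have hEB := h2.EB G
  have hC : 0 < 1 * Mx (ann K y) w (T p) := by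
    rw [one_mul]
    exact Mx_pos (ann_compact hK) hR.1.2.2 (posC_mono ann_sub hw) (posC_mono ann_sub hTp)
  have hdom := (B.dom G hEB.bd hp hC fun x hx => by
    rw [hR.Bf_eq G I hEB.bd hp hx]
    exact Bf_le hK hn hR.1 hTp hw (I.mapT x hx) zero_le_one (fun f _ => by rw [one_mul]) rfl).2
  obtain ⟨f, hf, hsupp⟩ := h2.supp G
  obtain ⟨l, hl⟩ := hsupp zi B.zn (hdom f hf)
  have hl0 : l ≠ 0 := by
    rintro rfl
    obtain ⟨g, hg, h1⟩ := B.zpos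
    rw [hl, zero_smul, inner_zero_right] at h1
    exact lt_irrefl _ h1
  rw [hU, Submodule.mem_span_pair] at hzi
  obtain ⟨a, b, hab⟩ := hzi
  have ha : a ≠ 0 := by
    rintro rfl
    refine hne (l⁻¹ * b) ?_
    rw [zero_smul, zero_add, hl] at hab
    rw [mul_smul, hab, smul_smul, inv_mul_cancel₀ hl0, one_smul]
  have hPe : P = (-(a⁻¹ * b)) • e1 + (a⁻¹ * l) • e2 := by
    have : P = a⁻¹ • (a • P) := by rw [smul_smul, inv_mul_cancel₀ ha, one_smul]
    rw [this, eq_sub_of_add_eq hab, hl]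
    module
  refine ⟨P, hP, _, _, c, ?_, hc, hPe, hTP⟩
  obtain ⟨g, hg⟩ := F.bd.2.2
  have h1 := hP g hg.1
  rw [hPe, inner_add_right, real_inner_smul_right, hg.2, mul_zero, zero_add,
    real_inner_smul_right] at h1
  exact pos_of_mul_pos_left h1 (h2.1 g hg.1)

lemma mix_prop (G : Good K) (I : Iso K T S) {e1 e1' e2 f' : V}
    (F : Foc K T e1 e1') {P Q : V} (hP : P ∈ posC K) (hQ : Q ∈ posC K) {α β c α' β' c' : ℝ}
    (hβ : 0 < β) (hβ' : 0 < β') (hc : 0 < c) (hc' : 0 < c') (hPe : P = α • e1 + β • e2)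
    (hQe : Q = α' • e1 + β' • e2) (hTP : T P = c • (e1' + y)) (hTQ : T Q = c' • (e1' + z))
    (hf : 0 < ⟪f', e1'⟫) (hfy : ⟪f', y⟫ = 0) (hfz : ⟪f', z⟫ = 0) (h : α * β' ≤ α' * β) :
    ∃ k : ℝ, 0 < k ∧ y = k • z := by
  have ht : 0 ≤ β / β' * α' - α := by
    have : β / β' * α' - α = (α' * β - α * β') / β' := by field_simp
    rw [this]
    exact div_nonneg (by linarith) hβ'.le
  obtain ⟨k, hk, h1⟩ := (F.ray P hP).2 _ ht
  obtain ⟨d, hd, h2⟩ := I.ray G hQ (div_pos hβ hβ')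
  have hPQ : P + (β / β' * α' - α) • e1 = (β / β') • Q := by
    have : β / β' * β' = β := by field_simp
    rw [hPe, hQe, smul_add, smul_smul (β / β') β', this]
    module
  rw [hPQ, h2, hTP, hTQ] at h1
  have h3 := congrArg (fun v => ⟪f', v⟫) h1
  simp only [inner_add_right, real_inner_smul_right, hfy, hfz] at h3
  set r := (rho K T e1 e1' P)⁻¹
  set t := β / β' * α' - α
  have h4 : d * c' = k * (c + t * r) := by
    have : d * c' * ⟪f', e1'⟫ = k * (c + t * r) * ⟪f', e1'⟫ := by linarith
    exact mul_right_cancel₀ hf.ne' this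
  have h5 : (k * c) • y = (d * c') • z + (d * c' - k * (c + t * r)) • e1' := by
    rw [← sub_eq_zero, ← neg_eq_zero, ← sub_eq_zero.mpr h1]
    module
  rw [h4, sub_self, zero_smul, add_zero, ← h4] at h5
  refine ⟨(k * c)⁻¹ * (d * c'), by positivity, ?_⟩
  rw [mul_smul, ← h5, smul_smul, inv_mul_cancel₀ (by positivity), one_smul]

/-- An isometry focusing at an extreme point focuses at every exposed point not incident to it. -/
lemma no_mix [FiniteDimensional ℝ V] (G : Good K) (I : Iso K T S) {e1 e2 : V} (h1 : EB K e1)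
    (c1 : CA K T e1) (h2 : Expo K e2) (hinc : ¬ Inc K e1 e2) : CA K T e2 := by
  have hEB := h2.EB G
  by_contra hcon
  have hCB := (dichotomy G I hEB).resolve_left hcon
  obtain ⟨e1', F⟩ := c1.foc G I h1
  have hne : ∀ l : ℝ, e2 ≠ l • e1 := by
    intro l hl
    refine hinc (Or.inl fun f hf => ?_)
    rw [hl, real_inner_smul_right, hf.2, mul_zero]
  have key : ∀ p ∈ posC K, ∀ y, Ray K T e2 p y →
      (∃ f ∈ ann K y, 0 < ⟪f, e1'⟫) ∧ e1' + y ∈ posC K := by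
    intro p hp y hR
    have hTp := I.mapT p hp
    have hRe := F.ray p hp
    have hi : ¬ Inc K ((rho K T e1 e1' p)⁻¹ • e1') y := by
      rw [← inc_transfer G I F.bd hEB.bd hp hp hRe.1 hR.1 hTp hTp
        (fun x hx => hRe.Bf_eq G I F.bd hp hx) (fun x hx => hR.Bf_eq G I hEB.bd hp hx)]
      exact hinc
    have h3 : ∃ f ∈ ann K y, 0 < ⟪f, e1'⟫ := by
      by_contra hc
      push Not at hc
      refine hi (Or.inr fun f hf => ?_)
      rw [real_inner_smul_right, le_antisymm (hc f hf) (F.bd'.1 f hf.1), mul_zero]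
    refine ⟨h3, fun g hg => ?_⟩
    obtain ⟨f, hf, hf1⟩ := h3
    rw [inner_add_right]
    rcases (hR.1.1 g hg).eq_or_lt with h0 | h0
    · obtain ⟨c, hc, hgf⟩ := hCB p hp y hR g ⟨hg, h0.symm⟩ f hf
      rw [← h0, add_zero, hgf, real_inner_smul_left]
      positivity
    · have := F.bd'.1 g hg
      positivity
  obtain ⟨p, hp⟩ := G.pos
  obtain ⟨y, hy⟩ := ray_image G I hEB.1 hEB.2 hp
  obtain ⟨q, hq, hqn⟩ : ∃ q ∈ posC K, ∀ c : ℝ, 0 < c → ¬ Ray K T e2 q (c • y) := by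
    by_contra hc
    push Not at hc
    exact hcon ⟨y, hc⟩
  obtain ⟨z, hz⟩ := ray_image G I hEB.1 hEB.2 hq
  obtain ⟨⟨f, hf, hf1⟩, hw⟩ := key p hp y hy
  obtain ⟨-, hw'⟩ := key q hq z hz
  have hfz : f ∈ ann K z := by
    rw [← (hy.eqv G I hEB.bd hp hq hz).ann_eq hy.1.1 hz.1.1]
    exact hf
  obtain ⟨P, hP, α, β, c, hβ, hc, hPe, hTP⟩ := mix_plane G I F h2 hne hp hy hw
  obtain ⟨Q, hQ, α', β', c', hβ', hc', hQe, hTQ⟩ := mix_plane G I F h2 hne hq hz hw'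
  rcases le_total (α * β') (α' * β) with h | h
  · obtain ⟨k, hk, h5⟩ := mix_prop G I F hP hQ hβ hβ' hc hc' hPe hQe hTP hTQ hf1 hf.2 hfz.2 h
    refine hqn k⁻¹ (inv_pos.mpr hk) ?_
    rw [h5, smul_smul, inv_mul_cancel₀ hk.ne', one_smul]
    exact hz
  · obtain ⟨k, hk, h5⟩ := mix_prop G I F hQ hP hβ' hβ hc' hc hQe hPe hTQ hTP hf1 hfz.2 hf.2 h
    refine hqn k hk ?_
    rw [← h5]
    exact hz

/-- An isometry focusing at one extreme point is linear. -/
lemma lin_of_one [FiniteDimensional ℝ V] (G : Good K) (I : Iso K T S) {e1 : V} (h1 : EB K e1)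
    (c1 : CA K T e1) : Lin K T := by
  obtain ⟨f, hf⟩ := h1.2
  obtain ⟨e3, he3, hfe⟩ := expo_pos G hf.1
  have hc3 : CA K T e3 := by
    refine no_mix G I h1 c1 he3 ?_
    rintro (h | h)
    · exact hfe.ne' (h f hf)
    · obtain ⟨l, hl, h2⟩ := he3.inc G h1.bd h
      have := hf.2
      rw [h2, real_inner_smul_right] at this
      exact (mul_pos hl hfe).ne' this
  refine lin_of_ca G I fun e he => ?_
  by_cases hi : Inc K e3 e
  · rcases hi with h | h
    · obtain ⟨l, hl, h2⟩ := he3.inc G (he.EB G).bd h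
      rw [h2]
      exact hc3.scale hl
    · obtain ⟨l, hl, h2⟩ := he.inc G (he3.EB G).bd h
      have : e = l⁻¹ • e3 := by rw [h2, smul_smul, inv_mul_cancel₀ hl.ne', one_smul]
      rw [this]
      exact hc3.scale (inv_pos.mpr hl)
  · exact no_mix G I (he3.EB G) hc3 he hi

end HilbertIso

namespace HilbertIso

open Filter Topology
open scoped RealInnerProductSpace

variable {V : Type*} [NormedAddCommGroup V] [InnerProductSpace ℝ V]
variable {K : Set V} {x y z p q : V} {T S : V → V}

/-! ### Two nonlinear isometries differ by a linear one -/

lemma Iso.comp (G : Good K) {T₁ S₁ T₂ S₂ : V → V} (I₁ : Iso K T₁ S₁) (I₂ : Iso K T₂ S₂) :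
    Iso K (fun x => T₂ (S₁ x)) (fun x => T₁ (S₂ x)) where
  mapT x hx := I₂.mapT _ (I₁.mapS x hx)
  mapS x hx := I₁.mapT _ (I₂.mapS x hx)
  dT x hx y hy := by
    rw [I₂.dT _ (I₁.mapS x hx) _ (I₁.mapS y hy), I₁.dS x hx y hy]
  dS x hx y hy := by
    rw [I₁.dT _ (I₂.mapS x hx) _ (I₂.mapS y hy), I₂.dS x hx y hy]
  TS x hx := by
    obtain ⟨c, hc, h⟩ := I₁.ST _ (I₂.mapS x hx)
    obtain ⟨d, hd, h'⟩ := I₂.ray G (I₂.mapS x hx) hc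
    obtain ⟨k, hk, h''⟩ := I₂.TS x hx
    exact ⟨d * k, mul_pos hd hk, by rw [h, h', h'', smul_smul]⟩
  ST x hx := by
    obtain ⟨c, hc, h⟩ := I₂.ST _ (I₁.mapS x hx)
    obtain ⟨d, hd, h'⟩ := I₁.ray G (I₁.mapS x hx) hc
    obtain ⟨k, hk, h''⟩ := I₁.TS x hx
    exact ⟨d * k, mul_pos hd hk, by rw [h, h', h'', smul_smul]⟩

/-- Krein–Milman in an exposed face: a functional vanishing at a boundary point vanishes at an
extreme one. -/
lemma exists_EB [FiniteDimensional ℝ V] (G : Good K) {f : V} (hf : f ∈ K) (hy : Bd K y)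
    (hfy : ⟪f, y⟫ = 0) : ∃ ε, EB K ε ∧ ⟪f, ε⟫ = 0 := by
  obtain ⟨f0, -, h1, -, C, hC, h2⟩ := span_bound K
  have hsp : Submodule.span ℝ K = ⊤ := by
    rw [← Submodule.orthogonal_eq_bot_iff, Submodule.eq_bot_iff]
    intro v hv
    exact G.sep v fun f hf => (Submodule.mem_orthogonal _ _).mp hv f (Submodule.subset_span hf)
  have h3 : ∀ u ∈ nnC K, ‖u‖ ≤ C * ⟪f0, u⟫ := fun u hu => h2 u (by rw [hsp]; trivial) hu
  have h4 : ∀ u ∈ nnC K, ⟪f0, u⟫ = 0 → u = 0 := fun u hu h => by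
    have := h3 u hu
    rw [h, mul_zero] at this
    exact norm_le_zero_iff.mp this
  set B : Set V := {u | u ∈ nnC K ∧ ⟪f, u⟫ = 0 ∧ ⟪f0, u⟫ = 1} with hB
  have hmem : ∀ u ∈ nnC K, ⟪f, u⟫ = 0 → 0 < ⟪f0, u⟫ → ⟪f0, u⟫⁻¹ • u ∈ B := fun u hu hfu h => by
    refine ⟨nnC_smul (inv_pos.mpr h).le hu, ?_, ?_⟩
    · rw [real_inner_smul_right, hfu, mul_zero]
    · rw [real_inner_smul_right, inv_mul_cancel₀ h.ne']
  have hBc : IsCompact B := by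
    refine Metric.isCompact_of_isClosed_isBounded ?_ ?_
    · exact nnC_isClosed.inter ((isClosed_eq (by fun_prop) (by fun_prop)).inter
        (isClosed_eq (by fun_prop) (by fun_prop)))
    · refine (Metric.isBounded_closedBall (x := (0 : V)) (r := C)).subset fun u hu => ?_
      have := h3 u hu.1
      rw [hu.2.2, mul_one] at this
      simpa using this
  have hBn : B.Nonempty := by
    refine ⟨_, hmem y hy.1 hfy ((h1 y hy.1).lt_of_ne fun h => ?_)⟩
    obtain ⟨g, hg, h5⟩ := hy.2.1
    rw [h4 y hy.1 h.symm, inner_zero_right] at h5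
    exact lt_irrefl _ h5
  obtain ⟨ε, hε⟩ := hBc.extremePoints_nonempty hBn
  rw [mem_extremePoints] at hε
  obtain ⟨⟨hε1, hε2, hε3⟩, hext⟩ := hε
  refine ⟨ε, ⟨⟨hε1, ?_, fun u hu hu' => ?_⟩, f, hf, hε2⟩, hε2⟩
  · by_contra hc
    push Not at hc
    have : ε = 0 := G.sep ε fun g hg => le_antisymm (hc g hg) (hε1 g hg)
    rw [this, inner_zero_right] at hε3
    exact zero_ne_one hε3
  · have a1 := hu f hf
    have a2 := hu' f hf
    rw [inner_sub_right, hε2] at a2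
    have hfu : ⟪f, u⟫ = 0 := by linarith
    have hfu' : ⟪f, ε - u⟫ = 0 := by rw [inner_sub_right, hε2, hfu, sub_zero]
    have hsum : ⟪f0, ε - u⟫ = 1 - ⟪f0, u⟫ := by rw [inner_sub_right, hε3]
    rcases (h1 u hu).eq_or_lt with h | h
    · exact ⟨0, fun g _ => by rw [h4 u hu h.symm, inner_zero_right, zero_mul]⟩
    rcases (h1 _ hu').eq_or_lt with h' | h'
    · have := h4 _ hu' h'.symm
      exact ⟨1, fun g _ => by rw [one_mul, sub_eq_zero.mp this]⟩
    · refine ⟨⟪f0, u⟫, fun g _ => ?_⟩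
      have := (hext _ (hmem u hu hfu h) _ (hmem _ hu' hfu' h') ⟨⟪f0, u⟫, ⟪f0, ε - u⟫, h, h',
        by rw [hsum]; ring, ?_⟩).1
      · conv_rhs => rw [← this]
        rw [real_inner_smul_right, mul_inv_cancel_left₀ h.ne']
      · rw [smul_smul, smul_smul, mul_inv_cancel₀ h.ne', mul_inv_cancel₀ h'.ne']
        module

lemma cb_of_not_lin [FiniteDimensional ℝ V] (G : Good K) (I : Iso K T S) (h : ¬ Lin K T) {e : V}
    (he : EB K e) : CB K T e :=
  (dichotomy G I he).resolve_left fun hc => h (lin_of_one G I he hc)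

lemma Sm.ann_eq (hz : Sm K z) (hy : (ann K y).Nonempty) (h : ∀ f ∈ ann K y, ⟪f, z⟫ = 0) :
    ann K y = ann K z := by
  refine Subset.antisymm (fun f hf => ⟨hf.1, h f hf⟩) fun g hg => ?_
  obtain ⟨f, hf⟩ := hy
  obtain ⟨c, -, hgf⟩ := hz g hg f ⟨hf.1, h f hf⟩
  exact ⟨hg.1, by rw [hgf, real_inner_smul_left, hf.2, mul_zero]⟩

/-- Among two isometries and their quotient, one is linear. -/
lemma lin_three [FiniteDimensional ℝ V] (G : Good K) {T₁ S₁ T₂ S₂ : V → V} (I₁ : Iso K T₁ S₁)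
    (I₂ : Iso K T₂ S₂) : Lin K T₁ ∨ Lin K T₂ ∨ Lin K (fun x => T₂ (S₁ x)) := by
  by_contra hcon
  push Not at hcon
  obtain ⟨n1, n2, n3⟩ := hcon
  have hK := G.cpt
  have hn := G.ne
  have J := Iso.comp G I₁ I₂
  set σ : V → V := fun x => T₂ (S₁ x) with hσ
  obtain ⟨f, hf⟩ := hn
  obtain ⟨e, he, -⟩ := expo_pos G hf
  have hEB := he.EB G
  obtain ⟨p, hp⟩ := G.pos
  obtain ⟨y, hy⟩ := ray_image G I₁ hEB.1 hEB.2 hp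
  obtain ⟨z, hz⟩ := ray_image G I₂ hEB.1 hEB.2 hp
  have sy := cb_of_not_lin G I₁ n1 hEB p hp y hy
  have sz := cb_of_not_lin G I₂ n2 hEB p hp z hz
  have hp1 := I₁.mapT p hp
  have hp2 := I₂.mapT p hp
  have hyz : ∀ x ∈ posC K, Bf K y (T₁ p) x = Bf K z (T₂ p) (σ x) := by
    intro x hx
    have hx1 := I₁.mapS x hx
    obtain ⟨c, hc, h1⟩ := I₁.TS x hx
    rw [hσ, ← hz.Bf_eq G I₂ hEB.bd hp hx1, hy.Bf_eq G I₁ hEB.bd hp hx1, h1,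
      Bf_scale hK G.ne hy.1 hp1 hx hc]
  -- an extreme point `ε` in the face exposed by the only supporting functional at `y`
  obtain ⟨f', hf'⟩ := hy.1.2.2
  obtain ⟨ε, hε, hfε⟩ := exists_EB G hf'.1 hy.1 hf'.2
  have hkill : ∀ g ∈ ann K y, ⟪g, ε⟫ = 0 := fun g hg => by
    obtain ⟨c, -, h⟩ := sy g hg f' hf'
    rw [h, real_inner_smul_left, hfε, mul_zero]
  obtain ⟨w, hw⟩ := ray_image G J hε.1 hε.2 hp
  have sw := cb_of_not_lin G J n3 hε p hp w hw
  have hp3 := J.mapT p hp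
  have hεw : ∀ x ∈ posC K, Bf K ε p x = Bf K w (σ p) (σ x) := fun x hx =>
    hw.Bf_eq G J hε.bd hp hx
  have hinc : Inc K w z :=
    (inc_transfer G J hε.bd hy.1 hp hp1 hw.1 hz.1 hp3 hp2 hεw hyz).mp (Or.inr hkill)
  -- incident smooth points have the same supporting functional
  have hann : ann K w = ann K z := by
    rcases hinc with h | h
    · exact sz.ann_eq hw.1.2.2 h
    · exact (sw.ann_eq hz.1.2.2 h).symm
  have hannz : ann K z = ann K (z + w) := by
    ext g
    constructor
    · intro hg
      exact ⟨hg.1, by rw [inner_add_right, hg.2, (hann ▸ hg : g ∈ ann K w).2, add_zero]⟩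
    · intro hg
      have h1 := hz.1.1 g hg.1
      have h2 := hw.1.1 g hg.1
      have h3 := hg.2
      rw [inner_add_right] at h3
      exact ⟨hg.1, by linarith⟩
  have hbd : Bd K (z + w) := by
    refine ⟨nnC_add hz.1.1 hw.1.1, ?_, hannz ▸ hz.1.2.2⟩
    obtain ⟨g, hg, h⟩ := hz.1.2.1
    exact ⟨g, hg, by rw [inner_add_right]; have := hw.1.1 g hg; positivity⟩
  -- pulling back the Busemann function of `z + w` gives one limit point dominating `y` and `ε`
  obtain ⟨zi, w', N, B, -⟩ := ((BusZ_Bf hK G.ne hbd hp2).comp G J).struct G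
  have hC : ∀ (v q : V), ann K v = ann K (z + w) → q ∈ posC K →
      0 < 1 * Mx (ann K v) (T₂ p) q := fun v q hv hq => by
    rw [one_mul]
    exact Mx_pos (ann_compact hK) (by rw [hv]; exact hbd.2.2) (posC_mono ann_sub hp2)
      (posC_mono ann_sub hq)
  obtain ⟨l, hl, hle⟩ := (B.dom G hy.1 hp1 (hC z _ hannz hp2) fun x hx => by
    rw [hyz x hx]
    exact Bf_le hK G.ne hbd hp2 hp2 (J.mapT x hx) zero_le_one (fun g hg => by
      rw [one_mul, inner_add_right]; linarith [hw.1.1 g hg]) hannz).1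
  have hkill' := (B.dom G hε.bd hp (hC w _ (hann.trans hannz) hp3) fun x hx => by
    rw [hεw x hx]
    exact Bf_le hK G.ne hbd hp3 hp2 (J.mapT x hx) zero_le_one (fun g hg => by
      rw [one_mul, inner_add_right]; linarith [hz.1.1 g hg]) (hann.trans hannz)).2
  have hsub : ∀ g ∈ ann K ε, g ∈ ann K y := fun g hg => by
    have h1 := hle g hg.1
    rw [hkill' g hg, mul_zero] at h1
    exact ⟨hg.1, le_antisymm h1 (hy.1.1 g hg.1)⟩
  -- so `ε` is smooth as well, and an isometry focuses at a smooth extreme point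
  have hsm : Sm K ε := fun g hg h hh => sy g (hsub g hg) h (hsub h hh)
  exact n3 (lin_of_one G J hε (ca_of_sm G J hε hsm))

end HilbertIso

namespace HilbertIso

open Filter Topology
open scoped RealInnerProductSpace

/-! ### The cone over a convex domain -/

variable {n : ℕ} {Ω : Set (Euc n)}

/-- The lift `(x, 1)` of a point to the cone over the domain. -/
def hat (x : Euc n) : Euc (n + 1) := WithLp.toLp 2 (Fin.snoc (fun i => x i) 1)

/-- The first `n` coordinates. -/
def ini (v : Euc (n + 1)) : Euc n := WithLp.toLp 2 (fun i => v i.castSucc)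

/-- The last coordinate. -/
def lst (v : Euc (n + 1)) : ℝ := v (Fin.last n)

@[simp] lemma ini_hat (x : Euc n) : ini (hat x) = x := by
  ext i
  simp [ini, hat]

@[simp] lemma lst_hat (x : Euc n) : lst (hat x) = 1 := by
  simp [lst, hat]

@[simp] lemma ini_add (v w : Euc (n + 1)) : ini (v + w) = ini v + ini w := rfl
@[simp] lemma ini_sub (v w : Euc (n + 1)) : ini (v - w) = ini v - ini w := rfl
@[simp] lemma ini_smul (c : ℝ) (v : Euc (n + 1)) : ini (c • v) = c • ini v := rfl
@[simp] lemma lst_add (v w : Euc (n + 1)) : lst (v + w) = lst v + lst w := rfl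
@[simp] lemma lst_sub (v w : Euc (n + 1)) : lst (v - w) = lst v - lst w := rfl
@[simp] lemma lst_smul (c : ℝ) (v : Euc (n + 1)) : lst (c • v) = c * lst v := rfl

lemma ext_il {v w : Euc (n + 1)} (h1 : ini v = ini w) (h2 : lst v = lst w) : v = w := by
  ext i
  induction i using Fin.lastCases with
  | last => exact h2
  | cast i => exact congrArg (fun u : Euc n => u i) h1

lemma inner_il (v w : Euc (n + 1)) : ⟪v, w⟫ = ⟪ini v, ini w⟫ + lst v * lst w := by
  simp only [PiLp.inner_apply, Fin.sum_univ_castSucc, ini, lst]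
  simp [mul_comm]

lemma inner_hat (f : Euc (n + 1)) (x : Euc n) : ⟪f, hat x⟫ = ⟪ini f, x⟫ + lst f := by
  rw [inner_il, ini_hat, lst_hat, mul_one]

lemma hat_comb (x y : Euc n) {a b : ℝ} (h : a + b = 1) :
    hat (a • x + b • y) = a • hat x + b • hat y := by
  apply ext_il <;> simp [h]

lemma exists_il (u : Euc n) (a : ℝ) : ∃ v : Euc (n + 1), ini v = u ∧ lst v = a :=
  ⟨WithLp.toLp 2 (Fin.snoc (fun i => u i) a), by ext i; simp [ini], by simp [lst]⟩

/-- The unit functionals which are nonnegative on the domain. -/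
def dualK (Ω : Set (Euc n)) : Set (Euc (n + 1)) := {f | ‖f‖ = 1 ∧ ∀ x ∈ Ω, 0 ≤ ⟪f, hat x⟫}

lemma dualK_compact : IsCompact (dualK Ω) := by
  refine Metric.isCompact_of_isClosed_isBounded ?_ ?_
  · have : dualK Ω = {f | ‖f‖ = 1} ∩ ⋂ x ∈ Ω, {f : Euc (n + 1) | 0 ≤ ⟪f, hat x⟫} := by
      ext f; simp [dualK]
    rw [this]
    exact (isClosed_eq continuous_norm continuous_const).inter
      (isClosed_biInter fun x _ => isClosed_le continuous_const (by fun_prop))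
  · refine (Metric.isBounded_closedBall (x := (0 : Euc (n + 1))) (r := 1)).subset fun u hu => ?_
    simpa using hu.1.le

lemma dualK_of {h : Euc (n + 1)} (h0 : h ≠ 0) (hx : ∀ x ∈ Ω, 0 ≤ ⟪h, hat x⟫) :
    ‖h‖⁻¹ • h ∈ dualK Ω := by
  have : 0 < ‖h‖ := norm_pos_iff.mpr h0
  refine ⟨by rw [norm_smul, norm_inv, norm_norm, inv_mul_cancel₀ this.ne'], fun x hxΩ => ?_⟩
  rw [real_inner_smul_left]
  have := hx x hxΩ
  positivity

lemma hat_zero_mem : hat (0 : Euc n) ∈ dualK Ω := by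
  have h1 : ∀ x : Euc n, ⟪hat (0 : Euc n), hat x⟫ = 1 := fun x => by
    rw [inner_hat, ini_hat, lst_hat, inner_zero_left, zero_add]
  refine ⟨?_, fun x _ => by rw [h1]; exact zero_le_one⟩
  have := real_inner_self_eq_norm_sq (hat (0 : Euc n))
  rw [h1] at this
  nlinarith [norm_nonneg (hat (0 : Euc n))]

lemma inner_hat_zero (v : Euc (n + 1)) : ⟪hat (0 : Euc n), v⟫ = lst v := by
  rw [inner_il, ini_hat, lst_hat, inner_zero_left, zero_add, one_mul]

lemma hat_pos (hop : IsOpen Ω) {x : Euc n} (hx : x ∈ Ω) : hat x ∈ posC (dualK Ω) := by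
  intro f hf
  refine (hf.2 x hx).lt_of_ne fun h0 => ?_
  have hini : ini f = 0 := by
    have hc : Continuous fun s : ℝ => x - s • ini f := by fun_prop
    have hmem : ∀ᶠ s in 𝓝[>] (0 : ℝ), x - s • ini f ∈ Ω :=
      (hc.tendsto' 0 x (by simp)).eventually (hop.mem_nhds hx) |>.filter_mono nhdsWithin_le_nhds
    obtain ⟨s, hs, hs0⟩ := (hmem.and self_mem_nhdsWithin).exists
    have h1 := hf.2 _ hs
    rw [inner_hat] at h0 h1
    rw [inner_sub_right, real_inner_smul_right] at h1
    have h2 : s * ⟪ini f, ini f⟫ ≤ 0 := by linarith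
    have h3 : ⟪ini f, ini f⟫ ≤ 0 := by
      by_contra hc
      push Not at hc
      have := mul_pos (show (0 : ℝ) < s from hs0) hc
      linarith
    exact inner_self_eq_zero.mp (le_antisymm h3 real_inner_self_nonneg)
  rw [inner_hat, hini, inner_zero_left, zero_add] at h0
  have : f = 0 := ext_il (by rw [hini]; rfl) (by rw [← h0]; rfl)
  have h1 := hf.1
  rw [this, norm_zero] at h1
  exact zero_ne_one h1

/-- The point of the affine chart represented by a vector. -/
def deh (v : Euc (n + 1)) : Euc n := (lst v)⁻¹ • ini v

@[simp] lemma deh_hat (x : Euc n) : deh (hat x) = x := by simp [deh]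

lemma lst_pos {v : Euc (n + 1)} (hv : v ∈ posC (dualK Ω)) : 0 < lst v := by
  rw [← inner_hat_zero]
  exact hv _ hat_zero_mem

lemma hat_deh {v : Euc (n + 1)} (h : 0 < lst v) : v = lst v • hat (deh v) := by
  apply ext_il
  · rw [ini_smul, ini_hat, deh, smul_smul, mul_inv_cancel₀ h.ne', one_smul]
  · simp

lemma deh_mem (hne : Ω.Nonempty) (hop : IsOpen Ω) (hcv : Convex ℝ Ω) {v : Euc (n + 1)}
    (hv : v ∈ posC (dualK Ω)) : deh v ∈ Ω := by
  by_contra hx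
  obtain ⟨φ, hφ⟩ := geometric_hahn_banach_open_point hcv hop hx
  set u := (InnerProductSpace.toDual ℝ (Euc n)).symm φ with hu
  have hu' : ∀ a, ⟪u, a⟫ = φ a := fun a => InnerProductSpace.toDual_symm_apply
  obtain ⟨h, hi, hl⟩ := exists_il (-u) (φ (deh v))
  have hval : ∀ a, ⟪h, hat a⟫ = φ (deh v) - φ a := fun a => by
    rw [inner_hat, hi, hl, inner_neg_left, hu']; ring
  have h0 : h ≠ 0 := by
    rintro rfl
    obtain ⟨a, ha⟩ := hne
    have := hval a
    rw [inner_zero_left] at this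
    linarith [hφ a ha]
  have h1 := hv _ (dualK_of h0 fun a ha => by rw [hval]; linarith [hφ a ha])
  rw [hat_deh (lst_pos hv), real_inner_smul_left, real_inner_smul_right, hval, sub_self, mul_zero,
    mul_zero] at h1
  exact lt_irrefl _ h1

lemma mem_iff (hne : Ω.Nonempty) (hop : IsOpen Ω) (hcv : Convex ℝ Ω) {x : Euc n} :
    hat x ∈ posC (dualK Ω) ↔ x ∈ Ω :=
  ⟨fun h => by simpa using deh_mem hne hop hcv h, hat_pos hop⟩

/-- A bounded set leaves every half line. -/
lemma exit (hbd : Bornology.IsBounded Ω) (x : Euc n) {u : Euc n} (hu : u ≠ 0) :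
    ∃ s : ℝ, 0 ≤ s ∧ x + s • u ∉ Ω := by
  obtain ⟨R, hR⟩ := hbd.exists_norm_le
  have hu' : 0 < ‖u‖ := norm_pos_iff.mpr hu
  by_contra hc
  push Not at hc
  have hs : 0 ≤ (|R| + ‖x‖ + 1) / ‖u‖ := by positivity
  have h1 := hR _ (hc _ hs)
  have h2 : ‖((|R| + ‖x‖ + 1) / ‖u‖) • u‖ = |R| + ‖x‖ + 1 := by
    rw [norm_smul, Real.norm_of_nonneg hs, div_mul_cancel₀ _ hu'.ne']
  have h3 := norm_sub_norm_le (((|R| + ‖x‖ + 1) / ‖u‖) • u) (-x)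
  rw [sub_neg_eq_add, norm_neg, add_comm _ x, h2] at h3
  linarith [le_abs_self R]

lemma good_dualK (hne : Ω.Nonempty) (hop : IsOpen Ω) (hbd : Bornology.IsBounded Ω)
    (hcv : Convex ℝ Ω) (hn : 0 < n) : Good (dualK Ω) where
  cpt := dualK_compact
  ne := ⟨_, hat_zero_mem⟩
  pos := ⟨_, hat_pos hop hne.some_mem⟩
  sep v hv := by
    have hl : lst v = 0 := by rw [← inner_hat_zero]; exact hv _ hat_zero_mem
    have hi : ini v = 0 := by
      by_contra hi
      obtain ⟨x, hx⟩ := hne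
      obtain ⟨s, -, hs⟩ := exit hbd x hi
      refine hs ((mem_iff ⟨x, hx⟩ hop hcv).mp ?_)
      have : hat (x + s • ini v) = hat x + s • v := by
        apply ext_il <;> simp [hl]
      rw [this]
      intro f hf
      rw [inner_add_right, real_inner_smul_right, hv f hf, mul_zero, add_zero]
      exact hat_pos hop hx f hf
    exact ext_il (by rw [hi]; rfl) (by rw [hl]; rfl)
  sat h h0 hu := by
    refine ⟨‖h‖⁻¹, inv_pos.mpr (norm_pos_iff.mpr h0), dualK_of h0 fun x hx => hu _ ?_⟩
    exact posC_sub_nnC (hat_pos hop hx)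
  dim := by
    rw [finrank_euclideanSpace, Fintype.card_fin]
    omega

/-! ### The Hilbert metric in terms of the cone -/

lemma ratio_eq (hop : IsOpen Ω) (hne : Ω.Nonempty)
    (hcv : Convex ℝ Ω) {x y α : Euc n} (hx : x ∈ Ω) (hy : y ∈ Ω) (hxy : x ≠ y)
    (hα : α ∈ frontier Ω) (hcol : Collinear ℝ ({α, x, y} : Set (Euc n)))
    (hd : dist α x < dist α y) :
    dist α y / dist α x = Mx (dualK Ω) (hat y) (hat x) := by
  have hαn : α ∉ Ω := fun h => by
    rw [hop.frontier_eq] at hα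
    exact hα.2 h
  obtain ⟨m, hm⟩ : ∃ m : ℝ, α = x + m • (y - x) := by
    obtain ⟨v, hv⟩ := (collinear_iff_of_mem (p₀ := x) (by simp)).mp hcol
    obtain ⟨r, hr⟩ := hv α (by simp)
    obtain ⟨s, hs⟩ := hv y (by simp)
    rw [vadd_eq_add] at hr hs
    have hs0 : s ≠ 0 := by
      rintro rfl
      exact hxy (by rw [hs]; simp)
    refine ⟨r / s, ?_⟩
    rw [hs, add_sub_cancel_right, smul_smul, div_mul_cancel₀ _ hs0, hr, add_comm]
  have hpos : 0 < ‖y - x‖ := norm_pos_iff.mpr (sub_ne_zero.mpr hxy.symm)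
  have d1 : dist α x = |m| * ‖y - x‖ := by
    rw [dist_eq_norm, hm, add_sub_cancel_left, norm_smul, Real.norm_eq_abs]
  have d2 : dist α y = |m - 1| * ‖y - x‖ := by
    rw [dist_eq_norm, hm, ← Real.norm_eq_abs, ← norm_smul]
    congr 1
    module
  have hm0 : m < 0 := by
    by_contra hc
    push Not at hc
    have hm1 : m ≤ 1 := by
      by_contra hc1
      push Not at hc1
      rw [d1, d2, abs_of_nonneg hc, abs_of_pos (by linarith)] at hd
      nlinarith
    refine hαn ?_
    rw [hm, show x + m • (y - x) = (1 - m) • x + m • y by module]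
    exact hcv hx hy (by linarith) hc (by ring)
  have hhat : hat α = (1 - m) • hat x + m • hat y := by
    rw [hm, show x + m • (y - x) = (1 - m) • x + m • y by module]
    exact hat_comb x y (by ring)
  have hclos : ∀ f ∈ dualK Ω, 0 ≤ ⟪f, hat α⟫ := by
    intro f hf
    have hcl : IsClosed {a : Euc n | 0 ≤ ⟪f, hat a⟫} := by
      simp only [inner_hat]
      exact isClosed_le continuous_const (by fun_prop)
    exact closure_minimal (fun a ha => hf.2 a ha) hcl (frontier_subset_closure hα)
  obtain ⟨f, hf, hf0⟩ : ∃ f ∈ dualK Ω, ⟪f, hat α⟫ = 0 := by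
    by_contra hc
    push Not at hc
    exact hαn ((mem_iff hne hop hcv).mp fun f hf => (hclos f hf).lt_of_ne (hc f hf).symm)
  have hval : dist α y / dist α x = (1 - m) / (-m) := by
    rw [d1, d2, abs_of_neg hm0, abs_of_neg (by linarith), mul_div_mul_right _ _ hpos.ne', neg_sub]
  rw [hval]
  symm
  have hm' : 0 < -m := by linarith
  refine Mx_eq dualK_compact ⟨_, hat_zero_mem⟩ (hat_pos hop hx) (fun g hg => ?_) ⟨f, hf, ?_⟩
  · have := hclos g hg
    rw [hhat, inner_add_right, real_inner_smul_right, real_inner_smul_right] at this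
    rw [div_mul_eq_mul_div, le_div_iff₀ hm']
    linarith
  · rw [hhat, inner_add_right, real_inner_smul_right, real_inner_smul_right] at hf0
    rw [div_mul_eq_mul_div, eq_div_iff hm'.ne']
    linarith

lemma frontier_meets (hop : IsOpen Ω) {t : Set (Euc n)} (ht : IsPreconnected t)
    (h1 : (t ∩ Ω).Nonempty) (h2 : (t ∩ Ωᶜ).Nonempty) : (t ∩ frontier Ω).Nonempty := by
  by_contra hcon
  have hno : ∀ z ∈ t, z ∉ frontier Ω := fun z hz hf => hcon ⟨z, hz, hf⟩
  have hcl : ∀ z ∈ t, z ∉ Ω → z ∈ (closure Ω)ᶜ := fun z hz hzn hc =>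
    hno z hz ((hop.frontier_eq).symm ▸ ⟨hc, hzn⟩)
  obtain ⟨w, hw, hwn⟩ := h2
  obtain ⟨z, -, hz1, hz2⟩ := ht Ω (closure Ω)ᶜ hop isClosed_closure.isOpen_compl
    (fun z hz => (em (z ∈ Ω)).imp_right (hcl z hz)) h1 ⟨w, hw, hcl w hw hwn⟩
  exact hz2 (subset_closure hz1)

lemma exists_end (hop : IsOpen Ω) (hbd : Bornology.IsBounded Ω) {x y : Euc n} (hx : x ∈ Ω)
    (hxy : x ≠ y) : ∃ α ∈ frontier Ω, Collinear ℝ ({α, x, y} : Set (Euc n)) ∧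
      dist α x < dist α y := by
  have hu : x - y ≠ 0 := sub_ne_zero.mpr hxy
  have hpos : 0 < ‖x - y‖ := norm_pos_iff.mpr hu
  obtain ⟨s, hs, hsn⟩ := exit hbd x hu
  have hpre : IsPreconnected ((fun s : ℝ => x + s • (x - y)) '' Ici 0) :=
    isPreconnected_Ici.image _ (by fun_prop)
  obtain ⟨α, ⟨t, ht, rfl⟩, hα⟩ := frontier_meets hop hpre
    ⟨x, ⟨0, self_mem_Ici, by simp⟩, hx⟩ ⟨_, ⟨s, hs, rfl⟩, hsn⟩
  refine ⟨_, hα, ?_, ?_⟩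
  · refine (collinear_iff_of_mem (p₀ := x) (by simp)).mpr ⟨x - y, fun p hp => ?_⟩
    simp only [mem_insert_iff, mem_singleton_iff] at hp
    rcases hp with rfl | rfl | rfl
    · exact ⟨t, by rw [vadd_eq_add, add_comm]⟩
    · exact ⟨0, by simp⟩
    · exact ⟨-1, by rw [vadd_eq_add]; module⟩
  · have ht' : (0 : ℝ) ≤ t := ht
    have e2 : x + t • (x - y) - y = (t + 1) • (x - y) := by module
    simp only [dist_eq_norm]
    rw [add_sub_cancel_left, e2, norm_smul, norm_smul, Real.norm_of_nonneg ht',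
      Real.norm_of_nonneg (by linarith)]
    nlinarith

lemma hilbert_eq (hop : IsOpen Ω) (hbd : Bornology.IsBounded Ω)
    (hcv : Convex ℝ Ω) {x y : Euc n} (hx : x ∈ Ω) (hy : y ∈ Ω) :
    hilbertDist Ω x y = Real.log (Dx (dualK Ω) (hat x) (hat y)) := by
  have hne : Ω.Nonempty := ⟨x, hx⟩
  unfold hilbertDist
  by_cases hxy : x = y
  · subst hxy
    rw [dif_neg, Dx_self dualK_compact ⟨_, hat_zero_mem⟩ (hat_pos hop hx), Real.log_one]
    rintro ⟨p, hp⟩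
    exact lt_irrefl _ hp.2.2.2.2.1
  · have hex : ∃ p : Euc n × Euc n, IsHilbertPair Ω x y p.1 p.2 := by
      obtain ⟨α, h1, h2, h3⟩ := exists_end hop hbd hx hxy
      obtain ⟨β, h4, h5, h6⟩ := exists_end hop hbd hy (Ne.symm hxy)
      rw [pair_comm y x] at h5
      exact ⟨(α, β), h1, h4, h2, h5, h3, h6⟩
    rw [dif_pos hex]
    have hp := hex.choose_spec
    have h5 := hp.2.2.2.1
    rw [pair_comm x y] at h5
    rw [ratio_eq hop hne hcv hx hy hxy hp.1 hp.2.2.1 hp.2.2.2.2.1,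
      ratio_eq hop hne hcv hy hx (Ne.symm hxy) hp.2.1 h5 hp.2.2.2.2.2, mul_comm]
    rfl

end HilbertIso

namespace HilbertIso

open Filter Topology
open scoped RealInnerProductSpace

/-! ### Projective transformations are isometries -/

variable {n : ℕ} {Ω : Set (Euc n)}

lemma dist_eq_iff (hop : IsOpen Ω) (hbd : Bornology.IsBounded Ω) (hcv : Convex ℝ Ω)
    {x y x' y' : Euc n} (hx : x ∈ Ω) (hy : y ∈ Ω) (hx' : x' ∈ Ω) (hy' : y' ∈ Ω) :
    hilbertDist Ω x' y' = hilbertDist Ω x y ↔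
      Dx (dualK Ω) (hat x') (hat y') = Dx (dualK Ω) (hat x) (hat y) := by
  rw [hilbert_eq hop hbd hcv hx hy, hilbert_eq hop hbd hcv hx' hy']
  refine ⟨fun h => Real.log_injOn_pos ?_ ?_ h, fun h => by rw [h]⟩
  · exact Dx_pos dualK_compact ⟨_, hat_zero_mem⟩ (hat_pos hop hx') (hat_pos hop hy')
  · exact Dx_pos dualK_compact ⟨_, hat_zero_mem⟩ (hat_pos hop hx) (hat_pos hop hy)

lemma chart_eq_iff (g : (Fin (n + 1) → ℝ) ≃ₗ[ℝ] (Fin (n + 1) → ℝ)) (x y : Euc n) :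
    chart y = projMap g (chart x) ↔ ∃ a : ℝ, WithLp.toLp 2 (g (WithLp.ofLp (hat x))) = a • hat y := by
  unfold chart projMap
  rw [Projectivization.map_mk, eq_comm, Projectivization.mk_eq_mk_iff']
  refine exists_congr fun a => ⟨fun h => ?_, fun h => ?_⟩
  · exact (congrArg (WithLp.toLp 2) h).symm
  · exact (congrArg WithLp.ofLp h).symm

/-- Membership in `PGL(Ω)`, phrased by a linear map acting on the cone over `Ω`. -/
lemma mem_PGL_iff (e : Equiv.Perm Ω) : e ∈ hilbertPGLGroup Ω ↔
    ∃ G : Euc (n + 1) ≃ₗ[ℝ] Euc (n + 1), ∀ x : Ω, ∃ a : ℝ, G (hat x) = a • hat (e x : Euc n) := by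
  have key : e ∈ hilbertPGLGroup Ω ↔ ∃ g : (Fin (n + 1) → ℝ) ≃ₗ[ℝ] (Fin (n + 1) → ℝ),
      ∀ x : Ω, chart ((e x : Ω) : Euc n) = projMap g (chart (x : Euc n)) := Iff.rfl
  rw [key]
  constructor
  · rintro ⟨g, hg⟩
    refine ⟨(WithLp.linearEquiv 2 ℝ (Fin (n + 1) → ℝ)) ≪≫ₗ g ≪≫ₗ
      (WithLp.linearEquiv 2 ℝ (Fin (n + 1) → ℝ)).symm, fun x => ?_⟩
    exact (chart_eq_iff g _ _).mp (hg x)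
  · rintro ⟨G, hG⟩
    refine ⟨(WithLp.linearEquiv 2 ℝ (Fin (n + 1) → ℝ)).symm ≪≫ₗ G ≪≫ₗ
      (WithLp.linearEquiv 2 ℝ (Fin (n + 1) → ℝ)), fun x => ?_⟩
    exact (chart_eq_iff _ _ _).mpr (hG x)

/-- On a convex set the homogenizing factor of a projective map has constant sign. -/
lemma sign_const (hcv : Convex ℝ Ω) (G : Euc (n + 1) →ₗ[ℝ] Euc (n + 1))
    (h0 : ∀ x ∈ Ω, lst (G (hat x)) ≠ 0) :
    (∀ x ∈ Ω, 0 < lst (G (hat x))) ∨ (∀ x ∈ Ω, lst (G (hat x)) < 0) := by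
  by_contra hcon
  push Not at hcon
  obtain ⟨⟨y, hy, hy0⟩, x, hx, hx0⟩ := hcon
  have hy1 := lt_of_le_of_ne hy0 (h0 y hy)
  have hx1 := lt_of_le_of_ne hx0 (h0 x hx).symm
  set p := lst (G (hat x)) with hp
  set q := lst (G (hat y)) with hq
  have hpq : 0 < p - q := by linarith
  have hab : -q / (p - q) + p / (p - q) = 1 := by field_simp; ring
  have hmem := hcv hx hy (div_nonneg (by linarith : 0 ≤ -q) hpq.le)
    (div_nonneg hx1.le hpq.le) hab
  apply h0 _ hmem
  rw [hat_comb _ _ hab, map_add, map_smul, map_smul, lst_add, lst_smul, lst_smul, ← hp, ← hq]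
  field_simp
  ring

lemma map_nnC {V : Type*} [NormedAddCommGroup V] [InnerProductSpace ℝ V] {K : Set V}
    (G : V →ₗ[ℝ] V) {p : V} (hp : p ∈ posC K)
    (hG : ∀ v ∈ posC K, G v ∈ posC K) {w : V} (hw : w ∈ nnC K) : G w ∈ nnC K := by
  intro f hf
  refine le_of_forall_pos_le_add fun ε hε => ?_
  have hGp := hG p hp f hf
  have h1 := hG _ (posC_add_nn (posC_smul (div_pos hε hGp) hp) hw) f hf
  rw [map_add, map_smul, inner_add_right, real_inner_smul_right, div_mul_cancel₀ _ hGp.ne'] at h1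
  linarith

lemma Mx_map {V : Type*} [NormedAddCommGroup V] [InnerProductSpace ℝ V] {K : Set V}
    (G : V ≃ₗ[ℝ] V) (hG : ∀ w, G w ∈ nnC K ↔ w ∈ nnC K) (u v : V) :
    Mx K (G u) (G v) = Mx K u v := by
  have key : ∀ (a b : V) (l : ℝ), (∀ f ∈ K, ⟪f, a⟫ ≤ l * ⟪f, b⟫) ↔ l • b - a ∈ nnC K := by
    intro a b l
    refine forall₂_congr fun f _ => ?_
    rw [inner_sub_right, real_inner_smul_right, sub_nonneg]
  unfold Mx
  congr 1
  ext l
  rw [mem_ofPred_eq, mem_ofPred_eq, key, key, ← hG (l • v - u), map_sub, map_smul]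

lemma posC_of_hat (hne : Ω.Nonempty) (hop : IsOpen Ω) (hcv : Convex ℝ Ω)
    (G : Euc (n + 1) →ₗ[ℝ] Euc (n + 1))
    (h : ∀ x ∈ Ω, ∃ y ∈ Ω, ∃ a : ℝ, 0 < a ∧ G (hat x) = a • hat y) :
    ∀ v ∈ posC (dualK Ω), G v ∈ posC (dualK Ω) := by
  intro v hv
  obtain ⟨y, hy, a, ha, e⟩ := h _ (deh_mem hne hop hcv hv)
  rw [hat_deh (lst_pos hv), map_smul, e]
  exact posC_smul (lst_pos hv) (posC_smul ha (hat_pos hop hy))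

lemma isom_of_pos (hop : IsOpen Ω) (hbd : Bornology.IsBounded Ω) (hcv : Convex ℝ Ω)
    (e : Equiv.Perm Ω) (G : Euc (n + 1) ≃ₗ[ℝ] Euc (n + 1))
    (h : ∀ x : Ω, ∃ a : ℝ, 0 < a ∧ G (hat x) = a • hat (e x : Euc n)) :
    e ∈ hilbertIsomGroup Ω := by
  intro x y
  have hne : Ω.Nonempty := ⟨_, x.2⟩
  have h1 : ∀ v ∈ posC (dualK Ω), G v ∈ posC (dualK Ω) :=
    posC_of_hat hne hop hcv G.toLinearMap fun z hz =>
      let ⟨a, ha, ee⟩ := h ⟨z, hz⟩; ⟨_, (e ⟨z, hz⟩).2, a, ha, ee⟩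
  have h2 : ∀ v ∈ posC (dualK Ω), G.symm v ∈ posC (dualK Ω) := by
    refine posC_of_hat hne hop hcv G.symm.toLinearMap fun z hz => ?_
    obtain ⟨a, ha, ee⟩ := h (e.symm ⟨z, hz⟩)
    rw [Equiv.apply_symm_apply] at ee
    refine ⟨_, (e.symm ⟨z, hz⟩).2, a⁻¹, inv_pos.mpr ha, ?_⟩
    rw [LinearEquiv.coe_coe, LinearEquiv.symm_apply_eq, map_smul, ee, inv_smul_smul₀ ha.ne']
  have hp := hat_pos hop x.2
  have hnn : ∀ w, G w ∈ nnC (dualK Ω) ↔ w ∈ nnC (dualK Ω) := by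
    refine fun w => ⟨fun hw => ?_, fun hw => map_nnC G.toLinearMap hp h1 hw⟩
    have := map_nnC G.symm.toLinearMap hp h2 hw
    rwa [LinearEquiv.coe_coe, LinearEquiv.symm_apply_apply] at this
  rw [dist_eq_iff hop hbd hcv x.2 y.2 (e x).2 (e y).2]
  obtain ⟨a, ha, ea⟩ := h x
  obtain ⟨b, hb, eb⟩ := h y
  have hK : IsCompact (dualK Ω) := dualK_compact
  have hn : (dualK Ω).Nonempty := ⟨_, hat_zero_mem⟩
  have hD : Dx (dualK Ω) (G (hat x)) (G (hat y)) = Dx (dualK Ω) (hat x) (hat y) := by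
    unfold Dx; rw [Mx_map G hnn, Mx_map G hnn]
  rw [← hD, ea, eb, Dx_smul_left hK hn (hat_pos hop (e x).2)
    (posC_smul hb (hat_pos hop (e y).2)) ha, Dx_smul_right hK hn (hat_pos hop (e x).2)
    (hat_pos hop (e y).2) hb]

lemma PGL_le (hop : IsOpen Ω) (hbd : Bornology.IsBounded Ω) (hcv : Convex ℝ Ω) :
    hilbertPGLGroup Ω ≤ hilbertIsomGroup Ω := by
  intro e he
  obtain ⟨G, hG⟩ := (mem_PGL_iff e).mp he
  have ha : ∀ x : Ω, G (hat x) = lst (G (hat x)) • hat (e x : Euc n) := by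
    intro x
    obtain ⟨a, h⟩ := hG x
    rw [h, lst_smul, lst_hat, mul_one]
  have h0 : ∀ x ∈ Ω, lst (G (hat x)) ≠ 0 := by
    intro x hx hz
    have h1 := ha ⟨x, hx⟩
    rw [hz, zero_smul, LinearEquiv.map_eq_zero_iff] at h1
    have h2 := lst_hat x
    rw [show hat x = 0 from h1] at h2
    exact zero_ne_one h2
  rcases sign_const hcv G.toLinearMap h0 with hs | hs
  · exact isom_of_pos hop hbd hcv e G fun x => ⟨_, hs x x.2, ha x⟩
  · refine isom_of_pos hop hbd hcv e (G ≪≫ₗ LinearEquiv.neg ℝ) fun x =>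
      ⟨-lst (G (hat x)), neg_pos.mpr (hs x x.2), ?_⟩
    rw [LinearEquiv.trans_apply, LinearEquiv.neg_apply, neg_smul, ← ha x]

/-! ### Passing between isometries of the domain and of its cone -/

/-- The map of the cone over `Ω` induced by a permutation of `Ω`. -/
def coneMap (e : Equiv.Perm Ω) (v : Euc (n + 1)) : Euc (n + 1) :=
  if h : deh v ∈ Ω then hat (e ⟨deh v, h⟩ : Euc n) else v

lemma coneMap_hat (e : Equiv.Perm Ω) (x : Ω) : coneMap e (hat x) = hat (e x : Euc n) := by
  have h : deh (hat (x : Euc n)) = x := deh_hat _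
  unfold coneMap
  rw [dif_pos (h.symm ▸ x.2)]
  congr 3
  exact Subtype.ext h

lemma coneMap_eq (hne : Ω.Nonempty) (hop : IsOpen Ω) (hcv : Convex ℝ Ω) (e : Equiv.Perm Ω)
    {v : Euc (n + 1)} (hv : v ∈ posC (dualK Ω)) :
    coneMap e v = hat (e ⟨deh v, deh_mem hne hop hcv hv⟩ : Euc n) :=
  dif_pos _

lemma coneMap_comp (hne : Ω.Nonempty) (hop : IsOpen Ω) (hcv : Convex ℝ Ω) (a b : Equiv.Perm Ω)
    {v : Euc (n + 1)} (hv : v ∈ posC (dualK Ω)) :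
    coneMap b (coneMap a v) = coneMap (b * a) v := by
  rw [coneMap_eq hne hop hcv a hv, coneMap_hat, coneMap_eq hne hop hcv (b * a) hv]
  rfl

lemma coneMap_dist (hne : Ω.Nonempty) (hop : IsOpen Ω) (hbd : Bornology.IsBounded Ω)
    (hcv : Convex ℝ Ω) {e : Equiv.Perm Ω} (he : e ∈ hilbertIsomGroup Ω) {v w : Euc (n + 1)}
    (hv : v ∈ posC (dualK Ω)) (hw : w ∈ posC (dualK Ω)) :
    Dx (dualK Ω) (coneMap e v) (coneMap e w) = Dx (dualK Ω) v w := by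
  have hK : IsCompact (dualK Ω) := dualK_compact
  have hn : (dualK Ω).Nonempty := ⟨_, hat_zero_mem⟩
  have mv := deh_mem hne hop hcv hv
  have mw := deh_mem hne hop hcv hw
  rw [coneMap_eq hne hop hcv e hv, coneMap_eq hne hop hcv e hw,
    (dist_eq_iff hop hbd hcv mv mw (e ⟨_, mv⟩).2 (e ⟨_, mw⟩).2).mp (he ⟨_, mv⟩ ⟨_, mw⟩)]
  conv_rhs => rw [hat_deh (lst_pos hv), hat_deh (lst_pos hw)]
  rw [Dx_smul_left hK hn (hat_pos hop mv) (posC_smul (lst_pos hw) (hat_pos hop mw)) (lst_pos hv),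
    Dx_smul_right hK hn (hat_pos hop mv) (hat_pos hop mw) (lst_pos hw)]

lemma coneMap_iso (hne : Ω.Nonempty) (hop : IsOpen Ω) (hbd : Bornology.IsBounded Ω)
    (hcv : Convex ℝ Ω) {e : Equiv.Perm Ω} (he : e ∈ hilbertIsomGroup Ω) :
    Iso (dualK Ω) (coneMap e) (coneMap e⁻¹) := by
  have hmap : ∀ e : Equiv.Perm Ω, ∀ v ∈ posC (dualK Ω), coneMap e v ∈ posC (dualK Ω) := by
    intro e v hv
    rw [coneMap_eq hne hop hcv e hv]
    exact hat_pos hop (e _).2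
  have hinv : ∀ a b : Equiv.Perm Ω, b * a = 1 → ∀ v ∈ posC (dualK Ω),
      ∃ c : ℝ, 0 < c ∧ coneMap b (coneMap a v) = c • v := by
    intro a b hab v hv
    refine ⟨(lst v)⁻¹, inv_pos.mpr (lst_pos hv), ?_⟩
    rw [coneMap_comp hne hop hcv a b hv, hab, coneMap_eq hne hop hcv 1 hv]
    exact (eq_inv_smul_iff₀ (lst_pos hv).ne').mpr (hat_deh (lst_pos hv)).symm
  exact {
    mapT := hmap e
    mapS := hmap e⁻¹
    dT := fun v hv w hw => coneMap_dist hne hop hbd hcv he hv hw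
    dS := fun v hv w hw => coneMap_dist hne hop hbd hcv (inv_mem he) hv hw
    TS := hinv _ _ (mul_inv_cancel e)
    ST := hinv _ _ (inv_mul_cancel e) }

lemma PGL_of_Lin (hop : IsOpen Ω) {e : Equiv.Perm Ω} (h : Lin (dualK Ω) (coneMap e)) :
    e ∈ hilbertPGLGroup Ω := by
  obtain ⟨g, hg⟩ := h
  refine (mem_PGL_iff e).mpr ⟨g, fun x => ?_⟩
  obtain ⟨c, hc, hx⟩ := hg _ (hat_pos hop x.2)
  refine ⟨c⁻¹, ?_⟩
  rw [← coneMap_hat, hx, inv_smul_smul₀ hc.ne']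

/-- Of two isometries and their quotient, at least one is projective. -/
lemma PGL_three (hne : Ω.Nonempty) (hop : IsOpen Ω) (hbd : Bornology.IsBounded Ω)
    (hcv : Convex ℝ Ω) (hn : 0 < n) {a b : Equiv.Perm Ω} (ha : a ∈ hilbertIsomGroup Ω)
    (hb : b ∈ hilbertIsomGroup Ω) :
    a ∈ hilbertPGLGroup Ω ∨ b ∈ hilbertPGLGroup Ω ∨ b * a⁻¹ ∈ hilbertPGLGroup Ω := by
  refine (lin_three (good_dualK hne hop hbd hcv hn) (coneMap_iso hne hop hbd hcv ha)
    (coneMap_iso hne hop hbd hcv hb)).imp (PGL_of_Lin hop)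
    (Or.imp (PGL_of_Lin hop) fun h => PGL_of_Lin hop ?_)
  obtain ⟨g, hg⟩ := h
  refine ⟨g, fun x hx => ?_⟩
  obtain ⟨c, hc, e⟩ := hg x hx
  exact ⟨c, hc, by rw [← coneMap_comp hne hop hcv _ _ hx]; exact e⟩

lemma index_le_two {H : Type*} [Group H] (N : Subgroup H)
    (h : ∀ a b : H, a ∈ N ∨ b ∈ N ∨ b * a⁻¹ ∈ N) : N.Normal ∧ (N.index = 1 ∨ N.index = 2) := by
  by_cases hN : N = ⊤
  · subst hN
    exact ⟨inferInstance, Or.inl Subgroup.index_top⟩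
  · obtain ⟨a, ha⟩ : ∃ a, a ∉ N := by
      by_contra hcon
      push Not at hcon
      exact hN (eq_top_iff.mpr fun x _ => hcon x)
    have h2 : N.index = 2 := by
      refine Subgroup.index_eq_two_iff.mpr ⟨a⁻¹, fun b => ?_⟩
      rcases (h a b).resolve_left ha with hb | hb
      · refine Or.inr ⟨hb, fun hba => ha ?_⟩
        exact inv_mem_iff.mp ((N.mul_mem_cancel_left hb).mp hba)
      · refine Or.inl ⟨hb, fun hbN => ha ?_⟩
        exact inv_mem_iff.mp ((N.mul_mem_cancel_left hbN).mp hb)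
    exact ⟨Subgroup.normal_of_index_eq_two h2, Or.inr h2⟩

end HilbertIso

/-- For an open bounded convex set `Ω ⊆ ℝⁿ` with its Hilbert metric,
`PGL(Ω)` is a normal subgroup of `Isom(Ω)` of index at most `2`: either
`PGL(Ω) = Isom(Ω)` (index `1`) or the quotient `Isom(Ω)/PGL(Ω)` has order `2`,
i.e. is isomorphic to `ℤ/2ℤ`. -/
theorem stmt_0 {n : ℕ} (Ω : Set (Euc n)) (hne : Ω.Nonempty) (hop : IsOpen Ω)
    (hbd : Bornology.IsBounded Ω) (hcv : Convex ℝ Ω) :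
    hilbertPGLGroup Ω ≤ hilbertIsomGroup Ω ∧
    ((hilbertPGLGroup Ω).subgroupOf (hilbertIsomGroup Ω)).Normal ∧
    (((hilbertPGLGroup Ω).subgroupOf (hilbertIsomGroup Ω)).index = 1 ∨
      ((hilbertPGLGroup Ω).subgroupOf (hilbertIsomGroup Ω)).index = 2) := by
  refine ⟨HilbertIso.PGL_le hop hbd hcv, HilbertIso.index_le_two _ fun a b => ?_⟩
  rcases Nat.eq_zero_or_pos n with rfl | hn
  · left
    -- a domain in `ℝ⁰` is a single point, so all its permutations coincide
    have h1 : (a : Equiv.Perm Ω) = 1 := Subsingleton.elim _ _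
    exact Subgroup.mem_subgroupOf.mpr (h1 ▸ one_mem _)
  · exact HilbertIso.PGL_three hne hop hbd hcv hn a.2 b.2
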